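/- arXiv:math/0502270 — 5 statements merged into one kernel-verified Lean document; each statement's English description precedes it below -/
import Mathlib

section
/- Let (W,S) be a Coxeter system satisfying: (1) for all s ≠ t ∈ S with m(s,t) odd, {s,t} is a maximal spherical subset of S; (2) there is no three-element subset {s,t,u} ⊆ S such that m(s,t) and m(t,u) are both odd; (3) for all s ≠ t ∈ S with m(s,t) odd, the number of maximal spherical subsets of S intersecting {s,t} is at most two. Then (W,S) is reflection rigid: for every Coxeter generating set S' for W such that the set of reflections of (W,S') equals the set of reflections of (W,S), there exists a bijection ψ : S → S' with m(s,t) = m'(ψ(s),ψ(t)) for all s,t ∈ S. -/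
/-!
An odd entry of the Coxeter matrix makes two generators conjugate, and the conjugacy classes of
generators are the components of the graph of odd entries. Condition (2) bounds these classes by
two members; conditions (1) and (3) say that at most one member of a two-element class, its hub,
has finite edges leaving the class, and that the outside neighbours of the hub are pairwise joined
by finite edges.

Let `S'` be another Coxeter generating set with the same reflections. Restricting the geometric
representation to a set of classes and comparing dimensions shows that `S` and `S'` have equally
many elements in each class, and homomorphisms to the infinite dihedral group detect whether two
classes are joined by a finite edge. The essential point is that a class of `S'` also has at most
one hub. For a class `{s, t}` of `S` in which `t` is not a hub, `W` is the amalgam of `⟨s, t⟩` and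
`⟨S ∖ {t}⟩` over `⟨s⟩`. A substitute for the action of `W` on the Bass–Serre tree is an action on
`ℤ × ℤ/n`, where `n = m(s, t)`, in which every reflection outside the class flips each of the lines
`ℤ × {y}` and has exactly one fixed point. The reflections of `S'` at which two hubs have their
outside edges act identically, so both hubs fix the fixed point of this flip, and all of `W`
preserves its line; but `s` and `t` act on `ℤ/n` as `y ↦ -y` and `y ↦ 1 - y`, without a common
fixed point.

Hence hubs can be matched with hubs and the remaining generators with one another. Corresponding
entries agree: the number of homomorphisms to the dihedral group of order `2N` that map prescribed
classes to reflections and the others to `1` depends only on the classes; for at most two classes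
it is a product of `N` and the numbers of solutions of `n • a = 0` in `ℤ/N`, for the entries `n`
involved, and these numbers for all `N` determine `n`.
-/

/-- The standard parabolic subgroup `W_T` of a Coxeter system, generated by the
simple reflections indexed by `T`. -/
def CoxeterSystem.parabolic {B W : Type*} [Group W] {M : CoxeterMatrix B}
    (cs : CoxeterSystem M W) (T : Set B) : Subgroup W :=
  Subgroup.closure (cs.simple '' T)

/-- `T` is a spherical subset: the parabolic subgroup `W_T` is finite. -/
def CoxeterSystem.IsSpherical {B W : Type*} [Group W] {M : CoxeterMatrix B}
    (cs : CoxeterSystem M W) (T : Set B) : Prop :=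
  Finite (cs.parabolic T)

/-- `T` is a maximal spherical subset: spherical and maximal under inclusion
among spherical subsets. -/
def CoxeterSystem.IsMaxSpherical {B W : Type*} [Group W] {M : CoxeterMatrix B}
    (cs : CoxeterSystem M W) (T : Set B) : Prop :=
  cs.IsSpherical T ∧ ∀ U : Set B, cs.IsSpherical U → T ⊆ U → U = T

/-- The conjugate subgroup `g H g⁻¹`. -/
def conjSubgroup {G : Type*} [Group G] (g : G) (H : Subgroup G) : Subgroup G :=
  Subgroup.map (MulAut.conj g).toMonoidHom H

namespace ReflectionRigid

open Real

variable {B B' W G : Type*} [Group W] [Group G] {M : CoxeterMatrix B} {M' : CoxeterMatrix B'}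

/-! ### Conjugacy classes of simple reflections -/

lemma isConj_of_mul_pow_odd {a b : G} (ha : a * a = 1) (hb : b * b = 1) {k : ℕ} (hk : Odd k)
    (h : (a * b) ^ k = 1) : IsConj a b := by
  obtain ⟨l, rfl⟩ := hk
  have hinv : (a * b)⁻¹ = b * a := by
    rw [mul_inv_rev, inv_eq_of_mul_eq_one_left ha, inv_eq_of_mul_eq_one_left hb]
  have hflip : SemiconjBy a ((a * b)⁻¹ ^ l) ((a * b) ^ l) :=
    SemiconjBy.pow_right (by rw [hinv, SemiconjBy, mul_assoc]) l
  refine isConj_iff.mpr ⟨(a * b) ^ l, ?_⟩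
  calc (a * b) ^ l * a * ((a * b) ^ l)⁻¹ = (a * b) ^ l * ((a * b) ^ l * a) := by
        rw [mul_assoc, ← inv_pow, hflip.eq]
    _ = (a * b) ^ (2 * l + 1) * b := by
        rw [pow_succ, two_mul, pow_add]
        simp only [mul_assoc, hb, mul_one]
    _ = b := by rw [h, one_mul]

/-- The conjugacy class of a simple reflection, which is how simple reflections of two Coxeter
systems on the same group are compared. -/
def conjClass (cs : CoxeterSystem M W) (i : B) : ConjClasses W :=
  ConjClasses.mk (cs.simple i)

lemma conjClass_eq_iff {cs : CoxeterSystem M W} {cs' : CoxeterSystem M' W} {i : B} {i' : B'} :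
    conjClass cs i = conjClass cs' i' ↔ IsConj (cs.simple i) (cs'.simple i') :=
  ConjClasses.mk_eq_mk_iff_isConj

lemma mk_mem_range_conjClass_iff {cs : CoxeterSystem M W} {w : W} :
    ConjClasses.mk w ∈ Set.range (conjClass cs) ↔ cs.IsReflection w := by
  constructor
  · rintro ⟨i, hi⟩
    obtain ⟨c, hc⟩ := isConj_iff.mp (ConjClasses.mk_eq_mk_iff_isConj.mp hi)
    exact ⟨c, i, hc.symm⟩
  · rintro ⟨c, i, rfl⟩
    exact ⟨i, ConjClasses.mk_eq_mk_iff_isConj.mpr (isConj_iff.mpr ⟨c, rfl⟩)⟩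

lemma range_conjClass_eq {cs : CoxeterSystem M W} {cs' : CoxeterSystem M' W}
    (h : ∀ w, cs'.IsReflection w ↔ cs.IsReflection w) :
    Set.range (conjClass cs) = Set.range (conjClass cs') := by
  ext c
  obtain ⟨w, rfl⟩ := ConjClasses.mk_surjective c
  rw [mk_mem_range_conjClass_iff, mk_mem_range_conjClass_iff, h]

lemma conjClass_eq_of_odd (cs : CoxeterSystem M W) {i j : B} (h : Odd (M i j)) :
    conjClass cs i = conjClass cs j :=
  conjClass_eq_iff.mpr <| isConj_of_mul_pow_odd (cs.simple_mul_simple_self i)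
    (cs.simple_mul_simple_self j) h (cs.simple_mul_simple_pow i j)

/-- A set of vertices of the Coxeter diagram that is a union of components of the graph of odd
edges. -/
def IsOddClosed (M : CoxeterMatrix B) (X : Set B) : Prop :=
  ∀ ⦃i j⦄, i ∈ X → Odd (M i j) → j ∈ X

lemma isOddClosed_univ (M : CoxeterMatrix B) : IsOddClosed M Set.univ :=
  fun _ _ _ _ => Set.mem_univ _

lemma isOddClosed_conjClass_preimage (cs : CoxeterSystem M W) (C : Set (ConjClasses W)) :
    IsOddClosed M (conjClass cs ⁻¹' C) := fun i j hi hij => by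
  rwa [Set.mem_preimage, ← conjClass_eq_of_odd cs hij]

lemma IsOddClosed.exists_lift (cs : CoxeterSystem M W) {X : Set B} (hX : IsOddClosed M X)
    {f : B → G} (hf : ∀ i ∈ X, ∀ j ∈ X, (f i * f j) ^ M i j = 1) :
    ∃ F : W →* G, ∀ i, F (cs.simple i) = X.mulIndicator f i := by
  have hsq (i : B) (hi : i ∈ X) : f i ^ 2 = 1 := by simpa [sq] using hf i hi i hi
  have heven {i j : B} (hi : i ∈ X) (hj : j ∉ X) : f i ^ M i j = 1 := by
    obtain ⟨c, hc⟩ := even_iff_two_dvd.mp (Nat.not_odd_iff_even.mp fun ho => hj (hX hi ho))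
    rw [hc, pow_mul, hsq i hi, one_pow]
  have hlift : M.IsLiftable (X.mulIndicator f) := by
    intro i j
    by_cases hi : i ∈ X <;> by_cases hj : j ∈ X
    · simpa [hi, hj] using hf i hi j hj
    · simpa [hi, hj] using heven hi hj
    · simpa [hi, hj, M.symmetric i j] using heven hj hi
    · simp [hi, hj]
  exact ⟨cs.lift ⟨_, hlift⟩, cs.lift_apply_simple hlift⟩

lemma IsOddClosed.mem_of_conjClass_eq {cs : CoxeterSystem M W} {X : Set B}
    (hX : IsOddClosed M X) {i j : B} (hi : i ∈ X) (h : conjClass cs i = conjClass cs j) :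
    j ∈ X := by
  obtain ⟨ε, hε⟩ := hX.exists_lift cs (f := fun _ => (-1 : ℤˣ)) (by simp)
  have hij := isConj_iff_eq.mp (ε.map_isConj (conjClass_eq_iff.mp h))
  rw [hε, hε, Set.mulIndicator_of_mem hi] at hij
  by_contra hj
  rw [Set.mulIndicator_of_notMem hj] at hij
  exact absurd hij (by decide)

lemma exists_odd_of_conjClass_eq {cs : CoxeterSystem M W} {i j : B} (hij : i ≠ j)
    (h : conjClass cs i = conjClass cs j) : ∃ k, k ≠ i ∧ Odd (M i k) := by
  by_contra! hc
  have hX : IsOddClosed M {i} := by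
    rintro _ k rfl hk
    by_contra hki
    exact hc k hki hk
  exact hij (hX.mem_of_conjClass_eq rfl h).symm

/-! ### The geometric representation -/

section Reflections

variable {V : Type*} [AddCommGroup V] [Module ℝ V] {x y : V} {f g : Module.Dual ℝ V} {α : ℝ}

lemma reflection_mul_reflection_pow_sin (hf : f x = 2) (hg : g y = 2)
    (hfy : f y = -2 * cos α) (hgx : g x = -2 * cos α) (θ : ℝ) (k : ℕ) :
    ((Module.reflection hf * Module.reflection hg) ^ k) (sin θ • x + sin (θ - α) • y) =
      sin (θ + 2 * k * α) • x + sin (θ + 2 * k * α - α) • y := by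
  induction k generalizing θ with
  | zero => simp
  | succ k ih =>
    have hstep : (Module.reflection hf * Module.reflection hg) (sin θ • x + sin (θ - α) • y) =
        sin (θ + 2 * α) • x + sin (θ + 2 * α - α) • y := by
      have hy : sin (θ + 2 * α - α) = 2 * cos α * sin θ - sin (θ - α) := by
        rw [show θ + 2 * α - α = θ + α by ring, sin_add, sin_sub]; ring
      have hx : sin (θ + 2 * α) = 2 * cos α * sin (θ + 2 * α - α) - sin θ := by
        rw [show θ + 2 * α = θ + α + α by ring, add_sub_cancel_right, sin_add (θ + α),
          cos_add, sin_add]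
        linear_combination -sin θ * sin_sq_add_cos_sq α
      simp only [LinearEquiv.mul_apply, Module.reflection_apply, map_add, map_sub, map_smul, hf, hg,
        hfy, hgx, hx, hy]
      module
    rw [pow_succ, LinearEquiv.mul_apply, hstep, ih]
    push_cast
    ring_nf

lemma reflection_mul_reflection_pow_eq_one (hf : f x = 2) (hg : g y = 2)
    (hfy : f y = -2 * cos α) (hgx : g x = -2 * cos α) (hα : sin α ≠ 0) {m : ℕ}
    (hm : m * α = π) : (Module.reflection hf * Module.reflection hg) ^ m = 1 := by
  set T := Module.reflection hf * Module.reflection hg with hT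
  have hrot (θ : ℝ) : (T ^ m) (sin θ • x + sin (θ - α) • y) = sin θ • x + sin (θ - α) • y := by
    rw [hT, reflection_mul_reflection_pow_sin hf hg hfy hgx, mul_assoc, hm, sin_add_two_pi,
      add_sub_right_comm, sin_add_two_pi]
  have hx : (T ^ m) x = x := by
    have := hrot α
    rwa [sub_self, sin_zero, zero_smul, add_zero, map_smul, smul_right_inj hα] at this
  have hy : (T ^ m) y = y := by
    have := hrot 0
    rwa [sin_zero, zero_smul, zero_add, zero_sub, sin_neg, map_smul,
      smul_right_inj (neg_ne_zero.mpr hα)] at this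
  ext v
  obtain ⟨a, b, hfv, hgv⟩ : ∃ a b : ℝ, f (v - a • x - b • y) = 0 ∧ g (v - a • x - b • y) = 0 := by
    refine ⟨(f v + cos α * g v) / (2 * sin α ^ 2), (g v + cos α * f v) / (2 * sin α ^ 2),
      ?_, ?_⟩ <;>
    · simp only [map_sub, map_smul, hf, hg, hfy, hgx, smul_eq_mul]
      field_simp
      rw [sin_sq]
      ring
  have hfix : (T ^ m) (v - a • x - b • y) = v - a • x - b • y := by
    rw [LinearEquiv.coe_pow]
    refine Function.iterate_fixed ?_ m
    simp [hT, LinearEquiv.mul_apply, Module.reflection_apply, hfv, hgv]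
  calc (T ^ m) v = (T ^ m) (v - a • x - b • y) + a • (T ^ m) x + b • (T ^ m) y := by
        simp only [map_sub, map_smul]; abel
    _ = v := by rw [hfix, hx, hy]; abel

lemma dvd_of_reflection_mul_reflection_pow_eq_one (hf : f x = 2) (hg : g y = 2)
    (hfy : f y = -2 * cos α) (hgx : g x = -2 * cos α) (hα : sin α ≠ 0) {m : ℕ}
    (hm : m * α = π) (hxy : LinearIndependent ℝ ![x, y]) {k : ℕ}
    (hk : (Module.reflection hf * Module.reflection hg) ^ k = 1) : m ∣ k := by
  have h := reflection_mul_reflection_pow_sin hf hg hfy hgx α k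
  rw [hk, LinearEquiv.coe_one, id, add_sub_cancel_left, sub_self, sin_zero] at h
  obtain ⟨h₁, h₂⟩ := hxy.eq_of_pair h
  have hcos : cos (2 * k * α) = 1 := by
    rw [sin_add, ← h₂, mul_zero, add_zero] at h₁
    exact mul_left_cancel₀ hα (by rw [mul_one, ← h₁])
  obtain ⟨c, hc⟩ := (cos_eq_one_iff _).mp hcos
  rw [← hm] at hc
  have hα0 : α ≠ 0 := by rintro rfl; exact hα sin_zero
  have hcm : (c * m : ℝ) = k := mul_right_cancel₀ (mul_ne_zero two_ne_zero hα0) (by linarith)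
  exact Int.natCast_dvd_natCast.mp ⟨c, by rw [mul_comm]; exact_mod_cast hcm.symm⟩

lemma reflection_mul_reflection_pow_apply_of_neg_two (hf : f x = 2) (hg : g y = 2)
    (hfy : f y = -2) (hgx : g x = -2) (k : ℕ) :
    ((Module.reflection hf * Module.reflection hg) ^ k) x =
      (2 * k + 1 : ℝ) • x + (2 * k : ℝ) • y := by
  induction k with
  | zero => simp
  | succ k ih =>
    rw [pow_succ', LinearEquiv.mul_apply, ih]
    simp only [LinearEquiv.mul_apply, Module.reflection_apply, map_add, map_sub, map_smul, hf, hg,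
      hfy, hgx, Nat.cast_add_one]
    module

lemma eq_zero_of_reflection_mul_reflection_pow_eq_one (hf : f x = 2) (hg : g y = 2)
    (hfy : f y = -2) (hgx : g x = -2) (hxy : LinearIndependent ℝ ![x, y]) {k : ℕ}
    (hk : (Module.reflection hf * Module.reflection hg) ^ k = 1) : k = 0 := by
  have h := reflection_mul_reflection_pow_apply_of_neg_two hf hg hfy hgx k
  rw [hk, LinearEquiv.coe_one, id] at h
  have := (hxy.eq_of_pair (s := 1) (t := 0) (by simpa using h)).2
  simpa using this.symm

end Reflections

section GeometricRepresentation

/-- The linear form `v ↦ 2⟨αᵢ, v⟩` of the geometric representation, on the vector space with the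
simple roots as basis. An infinite entry of the Coxeter matrix is `0`, and `π / 0 = 0` then gives
the usual value `-2`. -/
noncomputable def coroot (M : CoxeterMatrix B) (i : B) : Module.Dual ℝ (B →₀ ℝ) :=
  Finsupp.linearCombination ℝ fun j => -2 * cos (π / M i j)

/-- The simple root `αᵢ` of the geometric representation. -/
noncomputable def simpleRoot (i : B) : B →₀ ℝ :=
  Finsupp.single i 1

lemma coroot_simpleRoot (M : CoxeterMatrix B) (i j : B) :
    coroot M i (simpleRoot j) = -2 * cos (π / M i j) := by
  simp [coroot, simpleRoot]

lemma coroot_simpleRoot_self (M : CoxeterMatrix B) (i : B) : coroot M i (simpleRoot i) = 2 := by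
  simp [coroot_simpleRoot]

lemma linearIndependent_simpleRoot : LinearIndependent ℝ (simpleRoot : B → B →₀ ℝ) :=
  Finsupp.linearIndependent_single_one ℝ B

/-- The reflection in the simple root `αᵢ`. -/
noncomputable def rootReflection (M : CoxeterMatrix B) (i : B) : (B →₀ ℝ) ≃ₗ[ℝ] (B →₀ ℝ) :=
  Module.reflection (coroot_simpleRoot_self M i)

lemma sin_pi_div_ne_zero {m : ℕ} (h0 : m ≠ 0) (h1 : m ≠ 1) : sin (π / m) ≠ 0 := by
  have hm : (1 : ℝ) < m := by exact_mod_cast Nat.one_lt_iff_ne_zero_and_ne_one.mpr ⟨h0, h1⟩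
  exact (sin_pos_of_pos_of_lt_pi (by positivity) (div_lt_self pi_pos hm)).ne'

lemma rootReflection_mul_pow_eq_one (M : CoxeterMatrix B) (i j : B) :
    (rootReflection M i * rootReflection M j) ^ M i j = 1 := by
  obtain rfl | hij := eq_or_ne i j
  · rw [M.diagonal, pow_one]
    exact LinearEquiv.ext (Module.involutive_reflection (coroot_simpleRoot_self M i))
  obtain h0 | h0 := eq_or_ne (M i j) 0
  · rw [h0, pow_zero]
  exact reflection_mul_reflection_pow_eq_one (coroot_simpleRoot_self M i)
    (coroot_simpleRoot_self M j) (coroot_simpleRoot M i j)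
    (by rw [coroot_simpleRoot, M.symmetric]) (sin_pi_div_ne_zero h0 (M.off_diagonal i j hij))
    (mul_div_cancel₀ π (Nat.cast_ne_zero.mpr h0))

lemma dvd_of_rootReflection_mul_pow_eq_one {i j : B} {k : ℕ}
    (hk : (rootReflection M i * rootReflection M j) ^ k = 1) : M i j ∣ k := by
  obtain rfl | hij := eq_or_ne i j
  · rw [M.diagonal]; exact one_dvd k
  have hli : LinearIndependent ℝ ![(simpleRoot i : B →₀ ℝ), simpleRoot j] := by
    have := linearIndependent_simpleRoot.comp ![i, j] (by
      intro a b; fin_cases a <;> fin_cases b <;> simp [hij, hij.symm])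
    convert this using 1
    ext a : 1; fin_cases a <;> rfl
  have hij' := coroot_simpleRoot M i j
  have hji := coroot_simpleRoot M j i
  rw [M.symmetric] at hji
  obtain h0 | h0 := eq_or_ne (M i j) 0
  · rw [h0, Nat.cast_zero, div_zero, cos_zero, mul_one] at hij' hji
    rw [eq_zero_of_reflection_mul_reflection_pow_eq_one (coroot_simpleRoot_self M i)
      (coroot_simpleRoot_self M j) hij' hji hli hk]
    exact dvd_zero _
  · exact dvd_of_reflection_mul_reflection_pow_eq_one (coroot_simpleRoot_self M i)
      (coroot_simpleRoot_self M j) hij' hji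
      (sin_pi_div_ne_zero h0 (M.off_diagonal i j hij)) (mul_div_cancel₀ π (Nat.cast_ne_zero.mpr h0))
      hli hk

lemma IsOddClosed.exists_geometricRep (cs : CoxeterSystem M W) {X : Set B}
    (hX : IsOddClosed M X) :
    ∃ ρ : W →* ((B →₀ ℝ) ≃ₗ[ℝ] (B →₀ ℝ)),
      ∀ i, ρ (cs.simple i) = X.mulIndicator (rootReflection M) i :=
  hX.exists_lift cs fun i _ j _ => rootReflection_mul_pow_eq_one M i j

theorem orderOf_simple_mul_simple (cs : CoxeterSystem M W) (i j : B) :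
    orderOf (cs.simple i * cs.simple j) = M i j := by
  obtain ⟨ρ, hρ⟩ := (isOddClosed_univ M).exists_geometricRep cs
  refine Nat.dvd_antisymm (orderOf_dvd_of_pow_eq_one (cs.simple_mul_simple_pow i j)) ?_
  apply dvd_of_rootReflection_mul_pow_eq_one
  have := congrArg ρ (pow_orderOf_eq_one (cs.simple i * cs.simple j))
  simpa only [map_pow, map_mul, hρ, Set.mulIndicator_univ, map_one] using this

lemma encard_le_of_image_subset_span {k V ι : Type*} [Ring k] [StrongRankCondition k]
    [AddCommGroup V] [Module k V] {v : ι → V} {s : Set ι} {t : Set V} (hs : LinearIndepOn k v s)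
    (h : v '' s ⊆ Submodule.span k t) : s.encard ≤ t.encard :=
  calc s.encard = (Module.rank k (Submodule.span k (v '' s))).toENat :=
        (toENat_rank_span_set hs).symm
    _ ≤ (Module.rank k (Submodule.span k t)).toENat :=
        Cardinal.toENat.monotone' (Submodule.rank_mono (Submodule.span_le.mpr h))
    _ ≤ (Cardinal.mk t).toENat := Cardinal.toENat.monotone' (rank_span_le t)

lemma map_sub_self_mem {k V : Type*} [Ring k] [AddCommGroup V] [Module k V]
    {cs : CoxeterSystem M W} {ρ : W →* (V ≃ₗ[k] V)} {U : Submodule k V}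
    (h : ∀ i v, ρ (cs.simple i) v - v ∈ U) (w : W) (v : V) : ρ w v - v ∈ U := by
  induction w using cs.simple_induction generalizing v with
  | simple i => exact h i v
  | one => simp
  | mul w w' hw hw' =>
    rw [map_mul, LinearEquiv.mul_apply, ← sub_add_sub_cancel _ (ρ w' v)]
    exact U.add_mem (hw _) (hw' v)

lemma exists_conj_simple_eq {cs : CoxeterSystem M W} {cs' : CoxeterSystem M' W} {i : B} {i' : B'}
    (h : conjClass cs i = conjClass cs' i') : ∃ w, w * cs.simple i * w⁻¹ = cs'.simple i' :=
  isConj_iff.mp (conjClass_eq_iff.mp h)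

lemma conj_rootReflection_sub_mem_span (g : (B →₀ ℝ) ≃ₗ[ℝ] (B →₀ ℝ)) (i : B) (v : B →₀ ℝ) :
    (g * rootReflection M i * g⁻¹) v - v ∈ Submodule.span ℝ {g (simpleRoot i)} :=
  Submodule.mem_span_singleton.mpr
    ⟨-coroot M i (g⁻¹ v), by simp [rootReflection, Module.reflection_apply]⟩

lemma encard_conjClass_preimage_le {cs : CoxeterSystem M W} {cs' : CoxeterSystem M' W}
    (hR : Set.range (conjClass cs) = Set.range (conjClass cs')) (C : Set (ConjClasses W)) :
    (conjClass cs' ⁻¹' C).encard ≤ (conjClass cs ⁻¹' C).encard := by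
  obtain ⟨ρ, hρ⟩ := (isOddClosed_conjClass_preimage cs' C).exists_geometricRep cs'
  choose σ hσ using fun i : B => hR ▸ Set.mem_range_self (f := conjClass cs) i
  choose g hg using fun i => exists_conj_simple_eq (hσ i)
  let root (i : B) := ρ (g i) (simpleRoot (σ i))
  have hroot (i : B) (v) :
      ρ (cs.simple i) v - v ∈ Submodule.span ℝ (root '' (conjClass cs ⁻¹' C)) := by
    rw [← hg, map_mul, map_mul, map_inv, hρ]
    by_cases hi : conjClass cs i ∈ C
    · rw [Set.mulIndicator_of_mem (by rwa [Set.mem_preimage, hσ])]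
      exact Submodule.span_mono (Set.singleton_subset_iff.mpr (Set.mem_image_of_mem root hi))
        (conj_rootReflection_sub_mem_span _ _ v)
    · rw [Set.mulIndicator_of_notMem (by rwa [Set.mem_preimage, hσ]), mul_one, mul_inv_cancel,
        LinearEquiv.coe_one, id, sub_self]
      exact Submodule.zero_mem _
  refine (encard_le_of_image_subset_span (linearIndependent_simpleRoot.linearIndepOn _) ?_).trans
    (Set.encard_image_le root _)
  rintro _ ⟨i', hi', rfl⟩
  have h := map_sub_self_mem hroot (cs'.simple i') (simpleRoot i')
  rw [hρ, Set.mulIndicator_of_mem hi', rootReflection, Module.reflection_apply_self,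
    ← neg_add', ← two_smul ℝ, ← neg_smul] at h
  exact (Submodule.smul_mem_iff _ (by norm_num)).mp h

lemma encard_conjClass_preimage_eq {cs : CoxeterSystem M W} {cs' : CoxeterSystem M' W}
    (hR : Set.range (conjClass cs) = Set.range (conjClass cs')) (C : Set (ConjClasses W)) :
    (conjClass cs ⁻¹' C).encard = (conjClass cs' ⁻¹' C).encard :=
  le_antisymm (encard_conjClass_preimage_le hR.symm C) (encard_conjClass_preimage_le hR C)

end GeometricRepresentation

/-! ### Dihedral quotients -/

section DihedralQuotients

open DihedralGroup

lemma exists_eq_sr_of_isConj_sr {N : ℕ} {a : ZMod N} {x : DihedralGroup N}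
    (h : IsConj (sr a) x) : ∃ b, x = sr (a + 2 * b) := by
  obtain ⟨c, rfl⟩ := isConj_iff.mp h
  rcases c with i | i
  · exact ⟨-i, by rw [r_mul_sr, inv_r, sr_mul_r]; ring_nf⟩
  · exact ⟨i - a, by rw [sr_mul_sr, inv_sr, r_mul_sr]; ring_nf⟩

lemma exists_ne_zero_of_ne_zero {cs : CoxeterSystem M W} {cs' : CoxeterSystem M' W}
    (hR : Set.range (conjClass cs) = Set.range (conjClass cs')) {i' j' : B'}
    (hne : conjClass cs' i' ≠ conjClass cs' j') (h : M' i' j' ≠ 0) :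
    ∃ i j, conjClass cs i = conjClass cs' i' ∧ conjClass cs j = conjClass cs' j' ∧ M i j ≠ 0 := by
  classical
  by_contra! hc
  obtain ⟨i, hi⟩ := hR ▸ Set.mem_range_self (f := conjClass cs') i'
  obtain ⟨j, hj⟩ := hR ▸ Set.mem_range_self (f := conjClass cs') j'
  let f (k : B) : DihedralGroup 0 := sr (if conjClass cs k = conjClass cs' i' then 0 else 1)
  let C : Set (ConjClasses W) := {conjClass cs' i', conjClass cs' j'}
  obtain ⟨F, hF⟩ := (isOddClosed_conjClass_preimage cs C).exists_lift cs (f := f) (by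
    rintro k (hk | hk) l (hl | hl)
    · simp [f, hk, hl]
    · simp [hc k l hk hl]
    · simp [M.symmetric k l, hc l k hl hk]
    · simp [f, show conjClass cs k = _ from hk, show conjClass cs l = _ from hl])
  have hconj {k : B} {k' : B'} (hk : conjClass cs k = conjClass cs' k')
      (hkC : conjClass cs' k' ∈ C) : IsConj (f k) (F (cs'.simple k')) := by
    have := F.map_isConj (conjClass_eq_iff.mp hk)
    rwa [hF, Set.mulIndicator_of_mem (Set.mem_preimage.mpr (hk ▸ hkC))] at this
  obtain ⟨(a : ℤ), ha⟩ := exists_eq_sr_of_isConj_sr (hconj hi (Or.inl rfl))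
  obtain ⟨(b : ℤ), hb⟩ := exists_eq_sr_of_isConj_sr (hconj hj (Or.inr rfl))
  have hpow : (F (cs'.simple i') * F (cs'.simple j')) ^ M' i' j' = 1 := by
    rw [← map_mul, ← map_pow, cs'.simple_mul_simple_pow, map_one]
  rw [ha, hb, if_pos hi, hj, if_neg hne.symm, sr_mul_sr, r_pow, one_def, r.injEq] at hpow
  have hzero : (1 + 2 * b - (0 + 2 * a) : ℤ) * M' i' j' = 0 := hpow
  have := (mul_eq_zero.mp hzero).resolve_right (by exact_mod_cast h)
  lia

/-- Homomorphisms to a dihedral group that map the reflection classes of `C` to reflections and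
the remaining classes of the set `R` to `1`. -/
def dihedralHoms (R C : Set (ConjClasses W)) (N : ℕ) : Set (W →* DihedralGroup N) :=
  {F | ∀ w, ConjClasses.mk w ∈ R →
    (ConjClasses.mk w ∈ C → F w ∈ Set.range sr) ∧ (ConjClasses.mk w ∉ C → F w = 1)}

/-- The possible axes `θ i ∈ ℤ/N` of the images of the simple reflections under a homomorphism to
the dihedral group of order `2N` that kills the simple reflections outside `X`, with axis `0`
assigned to the latter. -/
def axisLabellings (M : CoxeterMatrix B) (X : Set B) (N : ℕ) : Set (B → ZMod N) :=
  {θ | (∀ i ∉ X, θ i = 0) ∧ ∀ i ∈ X, ∀ j ∈ X, M i j • (θ j - θ i) = 0}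

/-- The axis of a reflection in a dihedral group, and `0` for rotations. -/
def axis {N : ℕ} : DihedralGroup N → ZMod N
  | r _ => 0
  | sr a => a

lemma sr_mul_sr_pow_eq_one_iff {N : ℕ} {a b : ZMod N} {m : ℕ} :
    (sr a * sr b) ^ m = 1 ↔ m • (b - a) = 0 := by
  rw [sr_mul_sr, r_pow, one_def, r.injEq, nsmul_eq_mul, mul_comm]

lemma mem_dihedralHoms_range_iff {cs : CoxeterSystem M W} {C : Set (ConjClasses W)} {N : ℕ}
    {F : W →* DihedralGroup N} : F ∈ dihedralHoms (Set.range (conjClass cs)) C N ↔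
      ∀ i, F (cs.simple i) =
        (conjClass cs ⁻¹' C).mulIndicator (fun i => sr (axis (F (cs.simple i)))) i := by
  constructor
  · intro h i
    obtain ⟨hC, hC'⟩ := h _ ⟨i, rfl⟩
    by_cases hi : conjClass cs i ∈ C
    · obtain ⟨a, ha⟩ := hC hi
      rw [Set.mulIndicator_of_mem (Set.mem_preimage.mpr hi), ← ha, axis]
    · rw [Set.mulIndicator_of_notMem (by rwa [Set.mem_preimage]), hC' hi]
  · rintro h w ⟨i, hi⟩
    have hconj := F.map_isConj (ConjClasses.mk_eq_mk_iff_isConj.mp hi)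
    rw [h, ← hi] at *
    constructor
    · intro hw
      rw [Set.mulIndicator_of_mem (by exact hw)] at hconj
      obtain ⟨b, hb⟩ := exists_eq_sr_of_isConj_sr hconj
      exact ⟨_, hb.symm⟩
    · intro hw
      rw [Set.mulIndicator_of_notMem (by exact hw)] at hconj
      exact isConj_one_right.mp hconj

lemma card_dihedralHoms (cs : CoxeterSystem M W) (C : Set (ConjClasses W)) (N : ℕ) :
    Nat.card (dihedralHoms (Set.range (conjClass cs)) C N) =
      Nat.card (axisLabellings M (conjClass cs ⁻¹' C) N) := by
  let label (F : dihedralHoms (Set.range (conjClass cs)) C N) (i : B) := axis (F.1 (cs.simple i))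
  have hF (F : dihedralHoms (Set.range (conjClass cs)) C N) (i : B) :
      F.1 (cs.simple i) = (conjClass cs ⁻¹' C).mulIndicator (fun i => sr (label F i)) i :=
    mem_dihedralHoms_range_iff.mp F.2 i
  have hlabel (F) : label F ∈ axisLabellings M (conjClass cs ⁻¹' C) N := by
    refine ⟨fun i hi => ?_, fun i hi j hj => sr_mul_sr_pow_eq_one_iff.mp ?_⟩
    · rw [show label F i = axis (F.1 (cs.simple i)) from rfl, hF, Set.mulIndicator_of_notMem hi]
      rfl
    · have h := congrArg F.1 (cs.simple_mul_simple_pow i j)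
      rwa [map_pow, map_mul, hF, hF, Set.mulIndicator_of_mem hi, Set.mulIndicator_of_mem hj,
        map_one] at h
  refine Nat.card_eq_of_bijective (fun F => ⟨label F, hlabel F⟩) ⟨fun F F' h => ?_, ?_⟩
  · refine Subtype.ext (cs.ext_simple fun i => ?_)
    rw [hF, hF, show label F = label F' from congrArg Subtype.val h]
  · rintro ⟨θ, hθ, hθ'⟩
    obtain ⟨F, hF⟩ := (isOddClosed_conjClass_preimage cs C).exists_lift cs
      (f := fun i => sr (θ i)) fun i hi j hj => sr_mul_sr_pow_eq_one_iff.mpr (hθ' i hi j hj)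
    have haxis (i : B) : axis (F (cs.simple i)) = θ i := by
      by_cases hi : i ∈ conjClass cs ⁻¹' C
      · rw [hF, Set.mulIndicator_of_mem hi, axis]
      · rw [hF, Set.mulIndicator_of_notMem hi, hθ i hi]
        rfl
    exact ⟨⟨F, mem_dihedralHoms_range_iff.mpr fun i => by
      simp_rw [haxis, hF]⟩,
      Subtype.ext (funext haxis)⟩

lemma card_axisLabellings_eq {cs : CoxeterSystem M W} {cs' : CoxeterSystem M' W}
    (hR : Set.range (conjClass cs) = Set.range (conjClass cs')) (C : Set (ConjClasses W)) (N : ℕ) :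
    Nat.card (axisLabellings M (conjClass cs ⁻¹' C) N) =
      Nat.card (axisLabellings M' (conjClass cs' ⁻¹' C) N) := by
  rw [← card_dihedralHoms, hR, card_dihedralHoms]

/-- The number of solutions `a ∈ ℤ/N` of `n • a = 0`. -/
noncomputable def torsionCard (n N : ℕ) : ℕ :=
  Nat.card {a : ZMod N // n • a = 0}

lemma torsionCard_one (N : ℕ) : torsionCard 1 N = 1 := by
  simp [torsionCard]

lemma torsionCard_pos (n N : ℕ) [NeZero N] : 0 < torsionCard n N :=
  Nat.card_pos_iff.mpr ⟨⟨0, smul_zero n⟩, inferInstance⟩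

lemma torsionCard_eq_iff_dvd {n N : ℕ} [NeZero N] : torsionCard n N = N ↔ N ∣ n := by
  have hcard : torsionCard n N = N ↔ ∀ a : ZMod N, n • a = 0 := by
    conv_lhs =>
      rw [torsionCard, Nat.card_eq_fintype_card, Fintype.card_subtype]
      rhs
      rw [← ZMod.card N]
    simp [← Finset.card_univ, Finset.card_filter_eq_iff]
  rw [hcard, ← ZMod.natCast_eq_zero_iff]
  exact ⟨fun h => by simpa using h 1, fun h a => by rw [nsmul_eq_mul, h, zero_mul]⟩

lemma eq_of_torsionCard_eq {n n' : ℕ} (h : ∀ N ≠ 0, torsionCard n N = torsionCard n' N) :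
    n = n' := by
  have hdvd (N : ℕ) (hN : N ≠ 0) : N ∣ n ↔ N ∣ n' := by
    have : NeZero N := ⟨hN⟩
    rw [← torsionCard_eq_iff_dvd, h N hN, torsionCard_eq_iff_dvd]
  by_cases hn : n = 0
  · have := (hdvd (n' + 1) n'.succ_ne_zero).mp (hn ▸ dvd_zero _)
    rw [hn, Nat.eq_zero_of_dvd_of_lt this n'.lt_succ_self]
  by_cases hn' : n' = 0
  · have := (hdvd (n + 1) n.succ_ne_zero).mpr (hn' ▸ dvd_zero _)
    exact absurd (Nat.eq_zero_of_dvd_of_lt this n.lt_succ_self) hn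
  exact Nat.dvd_antisymm ((hdvd n hn).mp dvd_rfl) ((hdvd n' hn').mpr dvd_rfl)

lemma card_axisLabellings_singleton (M : CoxeterMatrix B) (i : B) (N : ℕ) :
    Nat.card (axisLabellings M {i} N) = N := by
  classical
  refine (Nat.card_eq_of_bijective (fun θ => θ.1 i) ⟨fun θ η h => ?_, fun a => ?_⟩).trans
    (Nat.card_zmod N)
  · refine Subtype.ext (funext fun j => ?_)
    by_cases hj : j = i
    · rw [hj]
      exact h
    · rw [θ.2.1 j hj, η.2.1 j hj]
  · exact ⟨⟨Pi.single i a, by simp +contextual, by simp⟩, by simp⟩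

lemma mem_axisLabellings_insert_iff [DecidableEq B] {Y : Set B} {i t : B} {N : ℕ}
    {θ : B → ZMod N} (hi : i ∈ Y) (htY : t ∉ Y) (ht : ∀ k ∈ Y, k ≠ i → M t k = 0) :
    θ ∈ axisLabellings M (insert t Y) N ↔
      Function.update θ t 0 ∈ axisLabellings M Y N ∧ M i t • (θ t - θ i) = 0 := by
  have hne {k : B} (hk : k ∈ Y) : k ≠ t := ne_of_mem_of_not_mem hk htY
  have hsymm {j k : B} (h : M j k • (θ k - θ j) = 0) : M k j • (θ j - θ k) = 0 := by
    rw [M.symmetric, ← neg_sub, smul_neg, h, neg_zero]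
  constructor
  · rintro ⟨h, h'⟩
    refine ⟨⟨fun k hk => ?_, fun j hj k hk => ?_⟩, h' i (Or.inr hi) t (Or.inl rfl)⟩
    · by_cases hkt : k = t
      · rw [hkt, Function.update_self]
      · rw [Function.update_of_ne hkt, h k (not_or.mpr ⟨hkt, hk⟩)]
    · rw [Function.update_of_ne (hne hj), Function.update_of_ne (hne hk)]
      exact h' j (Or.inr hj) k (Or.inr hk)
  · rintro ⟨⟨h, h'⟩, hit⟩
    have htk {k : B} (hk : k ∈ Y) : M t k • (θ k - θ t) = 0 := by
      by_cases hki : k = i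
      · exact hki ▸ hsymm hit
      · rw [ht k hk hki, zero_smul]
    refine ⟨fun k hk => ?_, ?_⟩
    · rw [← h k (fun hkY => hk (Or.inr hkY)), Function.update_of_ne fun hkt => hk (Or.inl hkt)]
    · rintro j (rfl | hj) k (rfl | hk)
      · rw [sub_self, smul_zero]
      · exact htk hk
      · exact hsymm (htk hj)
      · have := h' j hj k hk
        rwa [Function.update_of_ne (hne hj), Function.update_of_ne (hne hk)] at this

lemma card_axisLabellings_insert {Y : Set B} {i t : B} (hi : i ∈ Y) (htY : t ∉ Y)
    (ht : ∀ k ∈ Y, k ≠ i → M t k = 0) (N : ℕ) :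
    Nat.card (axisLabellings M (insert t Y) N) =
      Nat.card (axisLabellings M Y N) * torsionCard (M i t) N := by
  classical
  rw [torsionCard, ← Nat.card_prod]
  have hit : i ≠ t := ne_of_mem_of_not_mem hi htY
  have hmem {θ : B → ZMod N} := mem_axisLabellings_insert_iff (θ := θ) hi htY ht
  refine Nat.card_eq_of_bijective (fun θ =>
    (⟨Function.update θ.1 t 0, (hmem.mp θ.2).1⟩, ⟨θ.1 t - θ.1 i, (hmem.mp θ.2).2⟩))
    ⟨fun θ η h => Subtype.ext (funext fun k => ?_), ?_⟩
  · have hne {k : B} (hk : k ≠ t) : θ.1 k = η.1 k := by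
      have := congrFun (congrArg (Subtype.val ∘ Prod.fst) h) k
      simpa [hk] using this
    by_cases hk : k = t
    · have := congrArg (Subtype.val ∘ Prod.snd) h
      simpa [hk, hne hit] using this
    · exact hne hk
  · rintro ⟨⟨η, hη⟩, ⟨a, ha⟩⟩
    have hηt : Function.update η t 0 = η := Function.update_eq_self_iff.mpr (hη.1 t htY).symm
    refine ⟨⟨Function.update η t (η i + a), hmem.mpr ⟨?_, ?_⟩⟩, ?_⟩
    · rwa [Function.update_idem, hηt]
    · simpa [hit] using ha
    · simp [hit, hηt]

lemma card_axisLabellings_insert_of_mem {Y : Set B} {i t : B} (hi : i ∈ Y) (htY : t ∈ Y → t = i)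
    (ht : t ≠ i → ∀ k ∈ Y, k ≠ i → M t k = 0) (N : ℕ) :
    Nat.card (axisLabellings M (insert t Y) N) =
      Nat.card (axisLabellings M Y N) * torsionCard (M i t) N := by
  by_cases hti : t = i
  · rw [hti, Set.insert_eq_of_mem hi, M.diagonal, torsionCard_one, mul_one]
  · exact card_axisLabellings_insert hi (fun h => hti (htY h)) (ht hti) N

lemma card_axisLabellings_pair (M : CoxeterMatrix B) (i t : B) (N : ℕ) :
    Nat.card (axisLabellings M {t, i} N) = N * torsionCard (M i t) N := by
  rw [card_axisLabellings_insert_of_mem (Set.mem_singleton i) id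
    (fun _ k hk hki => absurd hk hki), card_axisLabellings_singleton]

lemma card_axisLabellings_two_pairs {i j t v : B} (hd : Disjoint ({t, i} : Set B) {v, j})
    (htj : t ≠ i → M t j = 0) (hvi : v ≠ j → M v i = 0) (hvt : v ≠ j → M v t = 0) (N : ℕ) :
    Nat.card (axisLabellings M ({t, i} ∪ {v, j}) N) =
      N * torsionCard (M i j) N * torsionCard (M i t) N * torsionCard (M j v) N := by
  have hset : ({t, i} ∪ {v, j} : Set B) = insert v (insert t {i, j}) := by
    ext
    simp only [Set.mem_union, Set.mem_insert_iff, Set.mem_singleton_iff]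
    tauto
  obtain ⟨⟨hvt', htj'⟩, hvi'⟩ : (v ≠ t ∧ t ≠ j) ∧ v ≠ i := by
    simp only [Set.disjoint_left, Set.mem_insert_iff, Set.mem_singleton_iff] at hd
    exact ⟨⟨fun h => hd (Or.inl h) (Or.inl rfl), fun h => hd (Or.inl rfl) (Or.inr h)⟩,
      fun h => hd (Or.inr h) (Or.inl rfl)⟩
  rw [hset, card_axisLabellings_insert_of_mem (i := j) (t := v) (by simp) (by simp [hvt', hvi'])
      (by simp +contextual [hvi, hvt]),
    card_axisLabellings_insert_of_mem (i := i) (t := t) (by simp) (by simp [htj'])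
      (by simp +contextual [htj]), card_axisLabellings_pair, M.symmetric j i]

end DihedralQuotients

/-! ### Spherical subsets -/

section Spherical

variable {cs : CoxeterSystem M W}

lemma finite_closure_pair {a b : G} (ha : a * a = 1) (hb : b * b = 1)
    (h : IsOfFinOrder (a * b)) : Finite (Subgroup.closure {a, b}) := by
  let R := Subgroup.zpowers (a * b)
  let A := Subgroup.zpowers a
  have ha' : a⁻¹ = a := inv_eq_of_mul_eq_one_left ha
  have hnorm : A ≤ Subgroup.normalizer R := by
    rw [Subgroup.zpowers_le, Subgroup.mem_normalizer_iff_map_conj_eq, MonoidHom.map_zpowers]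
    have hconj : a * (a * b) * a⁻¹ = (a * b)⁻¹ := by
      rw [mul_inv_rev, ha', inv_eq_of_mul_eq_one_left hb, ← mul_assoc, ha, one_mul]
    change Subgroup.zpowers (a * (a * b) * a⁻¹) = R
    rw [hconj, Subgroup.zpowers_inv]
  have hle : Subgroup.closure {a, b} ≤ A ⊔ R := by
    have haA : a ∈ A ⊔ R := (le_sup_left : A ≤ A ⊔ R) (Subgroup.mem_zpowers a)
    have habR : a * b ∈ A ⊔ R := (le_sup_right : R ≤ A ⊔ R) (Subgroup.mem_zpowers _)
    rw [Subgroup.closure_le]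
    rintro x (rfl | rfl)
    · exact haA
    · exact (Subgroup.mul_mem_cancel_left _ haA).mp habR
  have hA : (A : Set G).Finite :=
    finite_zpowers.mpr (isOfFinOrder_iff_pow_eq_one.mpr ⟨2, two_pos, by rw [sq, ha]⟩)
  have hAR : ((A ⊔ R : Subgroup G) : Set G).Finite := by
    rw [Subgroup.coe_mul_of_left_le_normalizer_right _ _ hnorm]
    exact hA.mul (finite_zpowers.mpr h)
  exact (hAR.subset hle).to_subtype

lemma isSpherical_pair {i j : B} (h : M i j ≠ 0) : cs.IsSpherical {i, j} := by
  rw [CoxeterSystem.IsSpherical, CoxeterSystem.parabolic, Set.image_pair]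
  exact finite_closure_pair (cs.simple_mul_simple_self i) (cs.simple_mul_simple_self j)
    (isOfFinOrder_iff_pow_eq_one.mpr ⟨_, Nat.pos_of_ne_zero h, cs.simple_mul_simple_pow i j⟩)

lemma ne_zero_of_isSpherical {T : Set B} (hT : cs.IsSpherical T) {i j : B} (hi : i ∈ T)
    (hj : j ∈ T) : M i j ≠ 0 := by
  have : Finite (cs.parabolic T) := hT
  have hmem : cs.simple i * cs.simple j ∈ cs.parabolic T :=
    mul_mem (Subgroup.subset_closure ⟨i, hi, rfl⟩) (Subgroup.subset_closure ⟨j, hj, rfl⟩)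
  rw [← orderOf_simple_mul_simple cs, ← Subgroup.orderOf_mk _ hmem]
  exact (orderOf_pos _).ne'

lemma exists_isMaxSpherical [Finite B] {i j : B} (h : M i j ≠ 0) :
    ∃ T, cs.IsMaxSpherical T ∧ i ∈ T ∧ j ∈ T := by
  obtain ⟨T, hT, hmax⟩ := (Set.toFinite {T | cs.IsSpherical T}).exists_le_maximal
    (show {i, j} ∈ {T | cs.IsSpherical T} from isSpherical_pair h)
  exact ⟨T, ⟨hmax.prop, fun U hU hTU => (hmax.le_of_ge hU hTU).antisymm hTU⟩,
    hT (Or.inl rfl), hT (Or.inr rfl)⟩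

lemma isMaxSpherical_eq_of_ncard_le_two [Finite B] {i j : B} (h : cs.IsMaxSpherical {i, j})
    (hcard : {T | cs.IsMaxSpherical T ∧ (T ∩ {i, j}).Nonempty}.ncard ≤ 2) {T U : Set B}
    (hT : cs.IsMaxSpherical T) (hTij : (T ∩ {i, j}).Nonempty) (hTne : T ≠ {i, j})
    (hU : cs.IsMaxSpherical U) (hUij : (U ∩ {i, j}).Nonempty) (hUne : U ≠ {i, j}) : T = U := by
  by_contra hTU
  have hsub : {T, U, {i, j}} ⊆ {T | cs.IsMaxSpherical T ∧ (T ∩ {i, j}).Nonempty} := by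
    rintro X (rfl | rfl | rfl)
    exacts [⟨hT, hTij⟩, ⟨hU, hUij⟩, ⟨h, i, by simp⟩]
  have hle := Set.ncard_le_ncard hsub (Set.toFinite _)
  rw [Set.ncard_eq_three.mpr ⟨T, U, {i, j}, hTU, hTne, hUne, rfl⟩] at hle
  lia

lemma exists_isMaxSpherical_of_two_edges [Finite B] {i j : B} (h : cs.IsMaxSpherical {i, j})
    (hcard : {T | cs.IsMaxSpherical T ∧ (T ∩ {i, j}).Nonempty}.ncard ≤ 2) {a b k l : B}
    (ha : a ∈ ({i, j} : Set B)) (hb : b ∈ ({i, j} : Set B)) (hk : k ∉ ({i, j} : Set B))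
    (hl : l ∉ ({i, j} : Set B)) (hak : M a k ≠ 0) (hbl : M b l ≠ 0) :
    ∃ T, cs.IsMaxSpherical T ∧ T ≠ {i, j} ∧ a ∈ T ∧ b ∈ T ∧ k ∈ T ∧ l ∈ T := by
  obtain ⟨T, hT, haT, hkT⟩ := exists_isMaxSpherical (cs := cs) hak
  obtain ⟨U, hU, hbU, hlU⟩ := exists_isMaxSpherical (cs := cs) hbl
  have hTne : T ≠ {i, j} := fun hT => hk (hT ▸ hkT)
  have hUne : U ≠ {i, j} := fun hU => hl (hU ▸ hlU)
  obtain rfl := isMaxSpherical_eq_of_ncard_le_two h hcard hT ⟨a, haT, ha⟩ hTne hU ⟨b, hbU, hb⟩ hUne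
  exact ⟨T, hT, hTne, haT, hbU, hkT, hlU⟩

lemma eq_zero_or_eq_zero_of_edge_ends [Finite B] {i j : B} (h : cs.IsMaxSpherical {i, j})
    (hcard : {T | cs.IsMaxSpherical T ∧ (T ∩ {i, j}).Nonempty}.ncard ≤ 2) {k l : B}
    (hk : k ∉ ({i, j} : Set B)) (hl : l ∉ ({i, j} : Set B)) : M i k = 0 ∨ M j l = 0 := by
  by_contra! hc
  obtain ⟨T, hT, hTne, hi, hj, -⟩ := exists_isMaxSpherical_of_two_edges h hcard (Or.inl rfl)
    (Or.inr rfl) hk hl hc.1 hc.2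
  exact hTne (h.2 T hT.1 (Set.pair_subset hi hj))

lemma ne_zero_of_common_edge_end [Finite B] {i j : B} (h : cs.IsMaxSpherical {i, j})
    (hcard : {T | cs.IsMaxSpherical T ∧ (T ∩ {i, j}).Nonempty}.ncard ≤ 2) {k l : B}
    (hk : k ∉ ({i, j} : Set B)) (hl : l ∉ ({i, j} : Set B)) (hik : M i k ≠ 0) (hil : M i l ≠ 0) :
    M k l ≠ 0 := by
  obtain ⟨T, hT, -, -, -, hkT, hlT⟩ := exists_isMaxSpherical_of_two_edges h hcard (Or.inl rfl)
    (Or.inl rfl) hk hl hik hil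
  exact ne_zero_of_isSpherical hT.1 hkT hlT

end Spherical

/-! ### Hubs -/

section Hubs

variable {cs : CoxeterSystem M W} {cs' : CoxeterSystem M' W}

/-- A hub of a class of simple reflections is a member of the class with an edge of finite label to
a simple reflection of another class. -/
def IsHub (cs : CoxeterSystem M W) (i : B) : Prop :=
  ∃ k, conjClass cs k ≠ conjClass cs i ∧ M i k ≠ 0

lemma IsHub.exists_isHub (hR : Set.range (conjClass cs) = Set.range (conjClass cs')) {i' : B'}
    (h : IsHub cs' i') : ∃ i, conjClass cs i = conjClass cs' i' ∧ IsHub cs i := by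
  obtain ⟨k', hne, hk'⟩ := h
  obtain ⟨i, k, hi, hk, hik⟩ := exists_ne_zero_of_ne_zero hR hne.symm hk'
  exact ⟨i, hi, k, by rwa [hi, hk], hik⟩

/-- The shape of the Coxeter diagram: a class of simple reflections consists of at most two of
them, at most one of which is a hub. -/
structure HasPairs (cs : CoxeterSystem M W) : Prop where
  pair : ∀ c, (conjClass cs ⁻¹' {c}).encard ≤ 2
  hub : ∀ ⦃i j⦄, conjClass cs i = conjClass cs j → IsHub cs i → IsHub cs j → i = j

/-- The neighbours outside its class, along edges of finite label, of a simple reflection in a class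
with at least two members are pairwise joined by edges of finite label. -/
def HasLinkedNeighbours (cs : CoxeterSystem M W) : Prop :=
  ∀ ⦃i j k l⦄, i ≠ j → conjClass cs i = conjClass cs j → conjClass cs k ≠ conjClass cs i →
    conjClass cs l ≠ conjClass cs i → M i k ≠ 0 → M i l ≠ 0 → M k l ≠ 0

lemma preimage_singleton_eq_pair {α β : Type*} {f : α → β} {a b : α} {c : β} (ha : f a = c)
    (hb : f b = c) (hab : a ≠ b) (h : (f ⁻¹' {c}).encard ≤ 2) : f ⁻¹' {c} = {a, b} :=
  ((Set.toFinite {a, b}).eq_of_subset_of_encard_le (Set.pair_subset ha hb)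
    (h.trans_eq (Set.encard_pair hab).symm)).symm

lemma exists_preimage_singleton_eq_pair {α β : Type*} {f : α → β} {c : β} {a : α} (ha : f a = c)
    (h : (f ⁻¹' {c}).encard ≤ 2) : ∃ b, f ⁻¹' {c} = {b, a} := by
  by_cases hb : ∃ b, f b = c ∧ b ≠ a
  · obtain ⟨b, hb, hba⟩ := hb
    exact ⟨b, preimage_singleton_eq_pair hb ha hba h⟩
  · push Not at hb
    refine ⟨a, ?_⟩
    rw [Set.pair_eq_singleton]
    exact Set.eq_singleton_iff_unique_mem.mpr ⟨ha, hb⟩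

lemma odd_of_conjClass_eq {i j : B} (hcard : (conjClass cs ⁻¹' {conjClass cs i}).encard ≤ 2)
    (hij : i ≠ j) (h : conjClass cs i = conjClass cs j) : Odd (M i j) := by
  obtain ⟨k, hki, hk⟩ := exists_odd_of_conjClass_eq hij h
  have hC := preimage_singleton_eq_pair rfl h.symm hij hcard
  have hkC : k ∈ ({i, j} : Set B) := hC ▸ (conjClass_eq_of_odd cs hk).symm
  rwa [hkC.resolve_left hki] at hk

lemma encard_conjClass_preimage_le_two
    (h2 : ¬ ∃ i j k : B, i ≠ j ∧ j ≠ k ∧ i ≠ k ∧ Odd (M i j) ∧ Odd (M j k)) (c : ConjClasses W) :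
    (conjClass cs ⁻¹' {c}).encard ≤ 2 := by
  by_contra! hc
  obtain ⟨i, j, hi, hj, hij⟩ := Set.one_lt_encard_iff.mp (lt_trans (by decide) hc)
  obtain ⟨k, hki, hk⟩ := exists_odd_of_conjClass_eq hij (hi.trans hj.symm)
  have hX : IsOddClosed M {i, k} := by
    rintro _ a (rfl | rfl) ha <;> by_contra! hne <;>
      simp only [Set.mem_insert_iff, Set.mem_singleton_iff, not_or] at hne
    · exact h2 ⟨k, _, a, hki, Ne.symm hne.1, Ne.symm hne.2, M.symmetric k _ ▸ hk, ha⟩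
    · exact h2 ⟨i, _, a, hki.symm, Ne.symm hne.2, Ne.symm hne.1, hk, ha⟩
  have hsub : conjClass cs ⁻¹' {c} ⊆ {i, k} := fun a ha =>
    hX.mem_of_conjClass_eq (Or.inl rfl) (hi.trans ha.symm)
  exact absurd ((Set.encard_le_encard hsub).trans (Set.encard_insert_le _ _)) (by
    rw [Set.encard_singleton, one_add_one_eq_two]
    exact not_le.mpr hc)

section Conditions

variable [Finite B] (h1 : ∀ i j : B, i ≠ j → Odd (M i j) → cs.IsMaxSpherical {i, j})
  (h2 : ¬ ∃ i j k : B, i ≠ j ∧ j ≠ k ∧ i ≠ k ∧ Odd (M i j) ∧ Odd (M j k))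
  (h3 : ∀ i j : B, i ≠ j → Odd (M i j) →
    {T : Set B | cs.IsMaxSpherical T ∧ (T ∩ {i, j}).Nonempty}.ncard ≤ 2)
include h1 h2 h3

lemma hasPairs_of_conditions : HasPairs cs where
  pair := encard_conjClass_preimage_le_two h2
  hub i j hij := by
    rintro ⟨k, hk, hik⟩ ⟨l, hl, hjl⟩
    by_contra hne
    have ho := odd_of_conjClass_eq (encard_conjClass_preimage_le_two h2 _) hne hij
    have hk' : k ∉ ({i, j} : Set B) := by rintro (rfl | rfl) <;> simp_all
    have hl' : l ∉ ({i, j} : Set B) := by rintro (rfl | rfl) <;> simp_all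
    exact (eq_zero_or_eq_zero_of_edge_ends (h1 i j hne ho) (h3 i j hne ho) hk' hl').elim hik hjl

lemma hasLinkedNeighbours_of_conditions : HasLinkedNeighbours cs := by
  intro i j k l hne hij hk hl
  have ho := odd_of_conjClass_eq (encard_conjClass_preimage_le_two h2 _) hne hij
  have hk' : k ∉ ({i, j} : Set B) := by rintro (rfl | rfl) <;> simp_all
  have hl' : l ∉ ({i, j} : Set B) := by rintro (rfl | rfl) <;> simp_all
  exact ne_zero_of_common_edge_end (h1 i j hne ho) (h3 i j hne ho) hk' hl'

end Conditions

end Hubs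

/-! ### The action on a family of integer lines -/

section FibreAction

variable {Y : Type*}

/-- The permutation of `ℤ × Y` acting on the line over `y : Y` as the reflection `z ↦ κ y - z`. -/
def fibreFlip (κ : Y → ℤ) : Equiv.Perm (ℤ × Y) where
  toFun x := (κ x.2 - x.1, x.2)
  invFun x := (κ x.2 - x.1, x.2)
  left_inv x := by simp
  right_inv x := by simp

lemma fibreFlip_apply (κ : Y → ℤ) (x : ℤ × Y) : fibreFlip κ x = (κ x.2 - x.1, x.2) := rfl

lemma fibreFlip_mul_self (κ : Y → ℤ) : fibreFlip κ * fibreFlip κ = 1 :=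
  Equiv.ext (fibreFlip κ).left_inv

lemma fibreFlip_mul_fibreFlip_pow_apply (κ μ : Y → ℤ) (m : ℕ) (x : ℤ × Y) :
    ((fibreFlip κ * fibreFlip μ) ^ m) x = (x.1 + m * (κ x.2 - μ x.2), x.2) := by
  induction m generalizing x with
  | zero => simp
  | succ m ih =>
    rw [pow_succ, Equiv.Perm.mul_apply, ih, Equiv.Perm.mul_apply, fibreFlip_apply, fibreFlip_apply]
    ext
    · push_cast
      ring
    · rfl

lemma fibreFlip_eq_of_pow_eq_one {κ μ : Y → ℤ} {m : ℕ} (hm : m ≠ 0)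
    (h : (fibreFlip κ * fibreFlip μ) ^ m = 1) : fibreFlip κ = fibreFlip μ := by
  congr 1
  funext y
  have := congrArg Prod.fst (fibreFlip_mul_fibreFlip_pow_apply κ μ m (0, y))
  rw [h, Equiv.Perm.one_apply, zero_add, eq_comm, mul_eq_zero] at this
  exact sub_eq_zero.mp (this.resolve_left (by exact_mod_cast hm))

/-- A permutation of `ℤ × Y` that permutes the lines over the points of `Y` and is an isometry from
each line to its image, of the same orientation `ε` on all of them. -/
def IsFibrewiseIsometry (p : Equiv.Perm (ℤ × Y)) : Prop :=
  ∃ (σ : Equiv.Perm Y) (ε : ℤˣ) (κ : Y → ℤ), ∀ x, p x = (ε * x.1 + κ x.2, σ x.2)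

lemma isFibrewiseIsometry_fibreFlip (κ : Y → ℤ) : IsFibrewiseIsometry (fibreFlip κ) :=
  ⟨1, -1, κ, fun x => Prod.ext (by simp [fibreFlip_apply]; ring) rfl⟩

/-- The permutation of the lines of `ℤ × Y` induced by a permutation of `Y`. -/
def permuteLines : Equiv.Perm Y →* Equiv.Perm (ℤ × Y) where
  toFun σ := (Equiv.refl ℤ).prodCongr σ
  map_one' := rfl
  map_mul' _ _ := rfl

lemma permuteLines_apply (σ : Equiv.Perm Y) (x : ℤ × Y) : permuteLines σ x = (x.1, σ x.2) := rfl

lemma isFibrewiseIsometry_permuteLines (σ : Equiv.Perm Y) :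
    IsFibrewiseIsometry (permuteLines σ) :=
  ⟨σ, 1, 0, fun x => by simp [permuteLines_apply]⟩

lemma IsFibrewiseIsometry.mul {p q : Equiv.Perm (ℤ × Y)} (hp : IsFibrewiseIsometry p)
    (hq : IsFibrewiseIsometry q) : IsFibrewiseIsometry (p * q) := by
  obtain ⟨σ, ε, κ, hp⟩ := hp
  obtain ⟨τ, δ, μ, hq⟩ := hq
  refine ⟨σ * τ, ε * δ, fun y => ε * μ y + κ (τ y), fun x => ?_⟩
  rw [Equiv.Perm.mul_apply, hq, hp]
  ext
  · push_cast
    ring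
  · rfl

lemma IsFibrewiseIsometry.snd_apply_eq {p : Equiv.Perm (ℤ × Y)} (hp : IsFibrewiseIsometry p)
    {x y : ℤ × Y} (h : x.2 = y.2) : (p x).2 = (p y).2 := by
  obtain ⟨σ, ε, κ, hp⟩ := hp
  rw [hp, hp, h]

lemma IsFibrewiseIsometry.conj_fibreFlip {p : Equiv.Perm (ℤ × Y)} (hp : IsFibrewiseIsometry p)
    (κ : Y → ℤ) : ∃ μ, p * fibreFlip κ * p⁻¹ = fibreFlip μ := by
  obtain ⟨σ, ε, ν, hp⟩ := hp
  refine ⟨fun y => ε * κ (σ.symm y) + 2 * ν (σ.symm y), mul_inv_eq_iff_eq_mul.mpr ?_⟩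
  ext1 x
  rw [Equiv.Perm.mul_apply, Equiv.Perm.mul_apply, hp, hp, fibreFlip_apply, fibreFlip_apply]
  ext
  · simp only [Equiv.symm_apply_apply]
    ring
  · rfl

lemma exists_lift_of_pair (cs : CoxeterSystem M W) {s t : B} (hst : s ≠ t) {a b c : G}
    (ha : a * a = 1) (hb : b * b = 1) (hc : c * c = 1) (hab : (a * b) ^ M s t = 1)
    (hac : ∀ k, k ≠ s → k ≠ t → (a * c) ^ M s k = 1)
    (hbc : ∀ k, k ≠ s → k ≠ t → (b * c) ^ M t k = 1) :
    ∃ F : W →* G, F (cs.simple s) = a ∧ F (cs.simple t) = b ∧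
      ∀ k, k ≠ s → k ≠ t → F (cs.simple k) = c := by
  classical
  let f (k : B) := if k = s then a else if k = t then b else c
  have hfs : f s = a := if_pos rfl
  have hft : f t = b := by simp [f, hst.symm]
  have hfk {k : B} (hks : k ≠ s) (hkt : k ≠ t) : f k = c := by simp [f, hks, hkt]
  have hsymm {i j : B} (h : (f i * f j) ^ M i j = 1) : (f j * f i) ^ M j i = 1 := by
    rw [show f j * f i = f j * (f i * f j) * (f j)⁻¹ by group, conj_pow, M.symmetric, h, mul_one,
      mul_inv_cancel]
  have hsk (k : B) : (f s * f k) ^ M s k = 1 := by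
    by_cases hks : k = s
    · rw [hks, hfs, ha, one_pow]
    by_cases hkt : k = t
    · rw [hkt, hfs, hft, hab]
    · rw [hfs, hfk hks hkt, hac k hks hkt]
  have htk (k : B) : (f t * f k) ^ M t k = 1 := by
    by_cases hks : k = s
    · exact hks ▸ hsymm (hsk t)
    by_cases hkt : k = t
    · rw [hkt, hft, hb, one_pow]
    · rw [hft, hfk hks hkt, hbc k hks hkt]
  have hlift : M.IsLiftable f := by
    intro i j
    by_cases his : i = s
    · exact his ▸ hsk j
    by_cases hit : i = t
    · exact hit ▸ htk j
    by_cases hjs : j = s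
    · exact hjs ▸ hsymm (hsk i)
    by_cases hjt : j = t
    · exact hjt ▸ hsymm (htk i)
    · rw [hfk his hit, hfk hjs hjt, hc, one_pow]
  have hF := cs.lift_apply_simple hlift
  exact ⟨cs.lift ⟨f, hlift⟩, (hF s).trans hfs, (hF t).trans hft,
    fun k hks hkt => (hF k).trans (hfk hks hkt)⟩

/-- A homomorphism through which `W` acts on a family of integer lines indexed by `ℤ/n`: `s` and `t`
permute the lines by `y ↦ -y` and `y ↦ 1 - y`, and every other simple reflection reflects the line
over `0` in `0`, its only fixed point, and the remaining lines in `1/2`. -/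
structure IsFibreAction (cs : CoxeterSystem M W) (s t : B) {n : ℕ}
    (F : W →* Equiv.Perm (ℤ × ZMod n)) : Prop where
  map_left : F (cs.simple s) = permuteLines (Equiv.neg _)
  map_right : F (cs.simple t) = permuteLines (Equiv.subLeft 1)
  map_of_ne : ∀ k, k ≠ s → k ≠ t → F (cs.simple k) = fibreFlip fun y => if y = 0 then 0 else 1

lemma exists_isFibreAction (cs : CoxeterSystem M W) {s t : B} (hst : s ≠ t)
    (hs : ∀ k, k ≠ s → k ≠ t → Even (M s k)) (ht : ∀ k, k ≠ s → k ≠ t → M t k = 0) :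
    ∃ F : W →* Equiv.Perm (ℤ × ZMod (M s t)), IsFibreAction cs s t F := by
  let a : Equiv.Perm (ℤ × ZMod (M s t)) := permuteLines (Equiv.neg _)
  let b : Equiv.Perm (ℤ × ZMod (M s t)) := permuteLines (Equiv.subLeft 1)
  let c : Equiv.Perm (ℤ × ZMod (M s t)) := fibreFlip fun y => if y = 0 then 0 else 1
  have ha : a * a = 1 := by ext x <;> simp [a, permuteLines_apply]
  have hb : b * b = 1 := by ext x <;> simp [b, permuteLines_apply]
  have hab : (a * b) ^ M s t = 1 := by
    have hneg : Equiv.neg (ZMod (M s t)) * Equiv.subLeft 1 = Equiv.addRight (-1) := by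
      ext1 y
      simp [sub_eq_add_neg]
    rw [← map_mul, hneg, ← map_pow, Equiv.nsmul_addRight]
    simp
  have hac (k : B) (hks : k ≠ s) (hkt : k ≠ t) : (a * c) ^ M s k = 1 := by
    have hsq : (a * c) ^ 2 = 1 := by
      ext x <;> simp [a, c, sq, permuteLines_apply, fibreFlip_apply]
    obtain ⟨l, hl⟩ := (hs k hks hkt).two_dvd
    rw [hl, pow_mul, hsq, one_pow]
  obtain ⟨F, hFs, hFt, hFk⟩ := exists_lift_of_pair cs hst ha hb (fibreFlip_mul_self _) hab hac
    fun k hks hkt => by rw [ht k hks hkt, pow_zero]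
  exact ⟨F, hFs, hFt, hFk⟩

namespace IsFibreAction

variable {cs : CoxeterSystem M W} {s t : B} {n : ℕ}
  {F : W →* Equiv.Perm (ℤ × ZMod n)}

lemma isFibrewiseIsometry (hF : IsFibreAction cs s t F) (w : W) : IsFibrewiseIsometry (F w) := by
  induction w using cs.simple_induction with
  | simple k =>
    by_cases hks : k = s
    · rw [hks, hF.map_left]
      exact isFibrewiseIsometry_permuteLines _
    by_cases hkt : k = t
    · rw [hkt, hF.map_right]
      exact isFibrewiseIsometry_permuteLines _
    · rw [hF.map_of_ne k hks hkt]
      exact isFibrewiseIsometry_fibreFlip _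
  | one =>
    rw [map_one, ← map_one permuteLines]
    exact isFibrewiseIsometry_permuteLines 1
  | mul w w' hw hw' =>
    rw [map_mul]
    exact hw.mul hw'

lemma exists_snd_apply_ne (hF : IsFibreAction cs s t F) (hn : n ≠ 1) (x : ℤ × ZMod n) :
    ∃ w, (F w x).2 ≠ x.2 := by
  by_contra! h
  have hs := h (cs.simple s)
  have ht := h (cs.simple t)
  rw [hF.map_left, permuteLines_apply, Equiv.neg_apply] at hs
  rw [hF.map_right, permuteLines_apply, Equiv.subLeft_apply] at ht
  have h1 : ((1 : ℕ) : ZMod n) = 0 := by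
    rw [Nat.cast_one]
    linear_combination ht - hs
  exact hn (Nat.dvd_one.mp ((ZMod.natCast_eq_zero_iff _ _).mp h1))

section Reflections

variable (hF : IsFibreAction cs s t F) (hC : conjClass cs ⁻¹' {conjClass cs s} = {t, s})
  {u v r : W} (hu : ConjClasses.mk u ∈ Set.range (conjClass cs) \ {conjClass cs s})
include hF hC hu

lemma exists_conj_fibreFlip :
    ∃ w, F u = F w * (fibreFlip fun y => if y = 0 then 0 else 1) * (F w)⁻¹ := by
  obtain ⟨⟨k, hk⟩, hne⟩ := hu
  have hk' : k ∉ ({t, s} : Set B) := hC ▸ fun h => hne (hk ▸ h)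
  simp only [Set.mem_insert_iff, Set.mem_singleton_iff, not_or] at hk'
  obtain ⟨w, hw⟩ := isConj_iff.mp (ConjClasses.mk_eq_mk_iff_isConj.mp hk)
  exact ⟨w, by rw [← hF.map_of_ne k hk'.2 hk'.1, ← map_inv, ← map_mul, ← map_mul, hw]⟩

lemma exists_eq_fibreFlip : ∃ κ, F u = fibreFlip κ := by
  obtain ⟨w, hw⟩ := hF.exists_conj_fibreFlip hC hu
  exact hw ▸ (hF.isFibrewiseIsometry w).conj_fibreFlip _

lemma existsUnique_fixedPoint : ∃! x, F u x = x := by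
  obtain ⟨w, hw⟩ := hF.exists_conj_fibreFlip hC hu
  have hfix (y : ℤ × ZMod n) : F u (F w y) = F w y ↔ y = 0 := by
    rw [hw, Equiv.Perm.mul_apply, Equiv.Perm.mul_apply, Equiv.Perm.coe_inv, Equiv.symm_apply_apply,
      (F w).injective.eq_iff, fibreFlip_apply, Prod.ext_iff, Prod.ext_iff]
    by_cases hy : y.2 = 0
    · simp only [hy, if_true, Prod.fst_zero, Prod.snd_zero, and_true]
      lia
    · simp only [hy, if_false, Prod.snd_zero, and_true, and_false, iff_false]
      lia
  refine ⟨F w 0, (hfix 0).mpr rfl, fun x hx => ?_⟩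
  obtain ⟨y, rfl⟩ := (F w).surjective x
  rw [(hfix y).mp hx]

lemma map_eq_map_of_pow_eq_one
    (hv : ConjClasses.mk v ∈ Set.range (conjClass cs) \ {conjClass cs s}) {m : ℕ} (hm : m ≠ 0)
    (huv : (u * v) ^ m = 1) : F u = F v := by
  obtain ⟨κ, hκ⟩ := hF.exists_eq_fibreFlip hC hu
  obtain ⟨μ, hμ⟩ := hF.exists_eq_fibreFlip hC hv
  rw [hκ, hμ]
  exact fibreFlip_eq_of_pow_eq_one hm (by rw [← hκ, ← hμ, ← map_mul, ← map_pow, huv, map_one])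

-- The conjugate `r u r⁻¹` acts as `u` does, because `(r u r⁻¹) u = (r u) ^ 2` has finite order.
lemma apply_fixedPoint_eq (hr : r * r = 1) {m : ℕ} (hm : m ≠ 0) (hru : (r * u) ^ m = 1)
    {x : ℤ × ZMod n} (hx : F u x = x) : F r x = x := by
  have hconj : ConjClasses.mk (r * u * r⁻¹) = ConjClasses.mk u :=
    (ConjClasses.mk_eq_mk_iff_isConj.mpr (isConj_iff.mpr ⟨r, rfl⟩)).symm
  have hpow : (r * u * r⁻¹ * u) ^ m = 1 := by
    rw [inv_eq_of_mul_eq_one_left hr, mul_assoc (r * u), ← sq, ← pow_mul, mul_comm, pow_mul, hru,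
      one_pow]
  have hcomm := hF.map_eq_map_of_pow_eq_one hC (by rwa [hconj]) hu hm hpow
  rw [map_mul, map_mul, map_inv, mul_inv_eq_iff_eq_mul] at hcomm
  refine (hF.existsUnique_fixedPoint hC hu).unique ?_ hx
  rw [← Equiv.Perm.mul_apply, ← hcomm, Equiv.Perm.mul_apply, hx]

end Reflections

end IsFibreAction

end FibreAction

/-! ### Uniqueness of hubs -/

section HubTransfer

variable {cs : CoxeterSystem M W} {cs' : CoxeterSystem M' W}

lemma HasPairs.encard_preimage_le_two (hP : HasPairs cs)
    (hR : Set.range (conjClass cs) = Set.range (conjClass cs')) (c : ConjClasses W) :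
    (conjClass cs' ⁻¹' {c}).encard ≤ 2 :=
  (encard_conjClass_preimage_eq hR {c}).symm.trans_le (hP.pair c)

lemma HasPairs.exists_isFibreAction (hP : HasPairs cs) {s t : B} (hst : s ≠ t)
    (hclass : conjClass cs s = conjClass cs t) (hs : IsHub cs s) :
    conjClass cs ⁻¹' {conjClass cs s} = {t, s} ∧
      ∃ F : W →* Equiv.Perm (ℤ × ZMod (M s t)), IsFibreAction cs s t F := by
  have hC := preimage_singleton_eq_pair hclass.symm rfl hst.symm (hP.pair (conjClass cs s))
  have hne {k : B} (hks : k ≠ s) (hkt : k ≠ t) : conjClass cs k ≠ conjClass cs s := fun h =>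
    (hC ▸ Set.mem_preimage.mpr h : k ∈ ({t, s} : Set B)).elim hkt hks
  refine ⟨hC, ReflectionRigid.exists_isFibreAction cs hst (fun k hks hkt => ?_)
    fun k hks hkt => ?_⟩
  · exact Nat.not_odd_iff_even.mp fun ho => hne hks hkt (conjClass_eq_of_odd cs ho).symm
  · by_contra h
    exact hst (hP.hub hclass hs ⟨k, hclass ▸ hne hks hkt, h⟩)

section

variable (hR : Set.range (conjClass cs) = Set.range (conjClass cs')) (hP : HasPairs cs) {s t : B}
  (hC : conjClass cs ⁻¹' {conjClass cs s} = {t, s}) {n : ℕ} {F : W →* Equiv.Perm (ℤ × ZMod n)}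
  (hF : IsFibreAction cs s t F) {k' l' : B'} (hk' : conjClass cs' k' ≠ conjClass cs s)
include hR hC hF hk'

lemma IsFibreAction.map_simple_eq_of_ne_zero (hl' : conjClass cs' l' ≠ conjClass cs s)
    (h : M' k' l' ≠ 0) : F (cs'.simple k') = F (cs'.simple l') :=
  hF.map_eq_map_of_pow_eq_one hC ⟨hR ▸ ⟨k', rfl⟩, hk'⟩ ⟨hR ▸ ⟨l', rfl⟩, hl'⟩ h
    (cs'.simple_mul_simple_pow k' l')

include hP

lemma IsFibreAction.map_simple_eq_of_conjClass_eq (h : conjClass cs' k' = conjClass cs' l') :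
    F (cs'.simple k') = F (cs'.simple l') := by
  by_cases hkl : k' = l'
  · rw [hkl]
  · exact hF.map_simple_eq_of_ne_zero hR hC hk' (h ▸ hk')
      (odd_of_conjClass_eq (hP.encard_preimage_le_two hR _) hkl h).pos.ne'

lemma IsFibreAction.map_simple_eq {k l : B} (hk : conjClass cs k = conjClass cs' k')
    (hl : conjClass cs l = conjClass cs' l') (hl' : conjClass cs' l' ≠ conjClass cs s)
    (hkl : M k l ≠ 0) : F (cs'.simple k') = F (cs'.simple l') := by
  by_cases hne : conjClass cs k = conjClass cs l
  · exact hF.map_simple_eq_of_conjClass_eq hR hP hC hk' (hk.symm.trans (hne.trans hl))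
  obtain ⟨a, b, ha, hb, hab⟩ := exists_ne_zero_of_ne_zero hR.symm hne hkl
  rw [hk] at ha
  rw [hl] at hb
  rw [hF.map_simple_eq_of_conjClass_eq hR hP hC hk' ha.symm,
    hF.map_simple_eq_of_conjClass_eq hR hP hC hl' hb.symm]
  exact hF.map_simple_eq_of_ne_zero hR hC (ha ▸ hk') (hb ▸ hl') hab

end

lemma IsFibreAction.snd_apply_eq_of_fixed
    (hR : Set.range (conjClass cs) = Set.range (conjClass cs')) {s t : B}
    (hC : conjClass cs ⁻¹' {conjClass cs s} = {t, s}) {n : ℕ} {F : W →* Equiv.Perm (ℤ × ZMod n)}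
    (hF : IsFibreAction cs s t F) {x : ℤ × ZMod n}
    (hx : ∀ a', conjClass cs' a' = conjClass cs s → F (cs'.simple a') x = x) (w : W) :
    (F w x).2 = x.2 := by
  induction w using cs'.simple_induction with
  | simple a' =>
    by_cases ha : conjClass cs' a' = conjClass cs s
    · rw [hx a' ha]
    · obtain ⟨κ, hκ⟩ := hF.exists_eq_fibreFlip hC ⟨hR ▸ ⟨a', rfl⟩, ha⟩
      rw [hκ, fibreFlip_apply]
  | one => rw [map_one, Equiv.Perm.one_apply]
  | mul w w' hw hw' =>
    rw [map_mul, Equiv.Perm.mul_apply, (hF.isFibrewiseIsometry w).snd_apply_eq hw', hw]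

lemma exists_ne_of_conjClass_eq (hR : Set.range (conjClass cs) = Set.range (conjClass cs'))
    {i' j' : B'} (hne : i' ≠ j') (hij : conjClass cs' i' = conjClass cs' j') {s : B}
    (hs : conjClass cs s = conjClass cs' i') : ∃ t, t ≠ s ∧ conjClass cs t = conjClass cs s := by
  have hcard : 1 < (conjClass cs ⁻¹' {conjClass cs s}).encard := by
    rw [encard_conjClass_preimage_eq hR, Set.one_lt_encard_iff]
    exact ⟨i', j', hs.symm, hij.symm.trans hs.symm, hne⟩
  obtain ⟨t, ht, hts⟩ := Set.exists_ne_of_one_lt_encard hcard s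
  exact ⟨t, hts, ht⟩

lemma HasPairs.isHub_unique (hP : HasPairs cs) (hlink : HasLinkedNeighbours cs)
    (hR : Set.range (conjClass cs) = Set.range (conjClass cs')) {i' j' : B'}
    (hij : conjClass cs' i' = conjClass cs' j') (hi : IsHub cs' i') (hj : IsHub cs' j') :
    i' = j' := by
  by_contra hne
  obtain ⟨k', hk', hik'⟩ := hi
  obtain ⟨l', hl', hjl'⟩ := hj
  obtain ⟨s, k, hs, hk, hsk⟩ := exists_ne_zero_of_ne_zero hR hk'.symm hik'
  obtain ⟨s₂, l, hs₂, hl, hsl⟩ := exists_ne_zero_of_ne_zero hR hl'.symm hjl'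
  have hss : conjClass cs s = conjClass cs s₂ := hs.trans (hij.trans hs₂.symm)
  rw [← hs] at hk'
  rw [← hs₂, ← hss] at hl'
  have hhub : IsHub cs s := ⟨k, hk ▸ hk', hsk⟩
  obtain rfl := hP.hub hss hhub ⟨l, by rwa [hl, ← hss], hsl⟩
  obtain ⟨t, hts, hst⟩ := exists_ne_of_conjClass_eq hR hne hij hs
  obtain ⟨hC, F, hF⟩ := hP.exists_isFibreAction hts.symm hst.symm hhub
  have hkl : F (cs'.simple k') = F (cs'.simple l') :=
    hF.map_simple_eq hR hP hC hk' hk hl hl'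
      (hlink hts.symm hst.symm (hk ▸ hk') (hl ▸ hl') hsk hsl)
  have hmem {a' : B'} (ha' : conjClass cs' a' ≠ conjClass cs s) :
      ConjClasses.mk (cs'.simple a') ∈ Set.range (conjClass cs) \ {conjClass cs s} :=
    ⟨hR ▸ ⟨a', rfl⟩, ha'⟩
  obtain ⟨x, hx, -⟩ := hF.existsUnique_fixedPoint hC (hmem hk')
  have hix : F (cs'.simple i') x = x := hF.apply_fixedPoint_eq hC (hmem hk')
    (cs'.simple_mul_simple_self i') hik' (cs'.simple_mul_simple_pow i' k') hx
  have hjx : F (cs'.simple j') x = x := hF.apply_fixedPoint_eq hC (hmem hl')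
    (cs'.simple_mul_simple_self j') hjl' (cs'.simple_mul_simple_pow j' l') (hkl ▸ hx)
  have hC' := preimage_singleton_eq_pair hs.symm (hij.symm.trans hs.symm) hne
    (hP.encard_preimage_le_two hR (conjClass cs s))
  obtain ⟨w, hw⟩ := hF.exists_snd_apply_ne (M.off_diagonal s t hts.symm) x
  refine hw (hF.snd_apply_eq_of_fixed hR hC (fun a' ha' => ?_) w)
  obtain rfl | rfl := (hC' ▸ Set.mem_preimage.mpr ha' : a' ∈ ({i', j'} : Set B'))
  exacts [hix, hjx]

lemma HasPairs.transfer (hP : HasPairs cs) (hlink : HasLinkedNeighbours cs)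
    (hR : Set.range (conjClass cs) = Set.range (conjClass cs')) : HasPairs cs' where
  pair := hP.encard_preimage_le_two hR
  hub _ _ hij hi hj := hP.isHub_unique hlink hR hij hi hj

end HubTransfer

/-! ### Matching the two systems -/

section Matching

variable {cs : CoxeterSystem M W} {cs' : CoxeterSystem M' W} {ψ : B ≃ B'}

/-- A bijection between the simple reflections of two Coxeter systems of the same group that
preserves their conjugacy classes and the property of being a hub. -/
def IsMatching (cs : CoxeterSystem M W) (cs' : CoxeterSystem M' W) (ψ : B ≃ B') : Prop :=
  ∀ i, conjClass cs i = conjClass cs' (ψ i) ∧ (IsHub cs i ↔ IsHub cs' (ψ i))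

lemma HasPairs.encard_hubs_le (hP : HasPairs cs)
    (hR : Set.range (conjClass cs) = Set.range (conjClass cs')) (c : ConjClasses W) :
    (conjClass cs ⁻¹' {c} ∩ {i | IsHub cs i}).encard ≤
      (conjClass cs' ⁻¹' {c} ∩ {i | IsHub cs' i}).encard := by
  rcases (conjClass cs ⁻¹' {c} ∩ {i | IsHub cs i}).eq_empty_or_nonempty with h | ⟨i, rfl, hi⟩
  · rw [h, Set.encard_empty]
    exact zero_le
  obtain ⟨i', hi', hhub⟩ := IsHub.exists_isHub hR.symm hi
  exact (Set.encard_le_one_iff.mpr fun a b ha hb => hP.hub (ha.1.trans hb.1.symm) ha.2 hb.2).trans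
    (Set.one_le_encard_iff_nonempty.mpr ⟨i', hi', hhub⟩)

section

variable (hP : HasPairs cs) (hP' : HasPairs cs')
  (hR : Set.range (conjClass cs) = Set.range (conjClass cs'))
include hP hP' hR

lemma HasPairs.encard_nonhubs_eq (c : ConjClasses W) :
    (conjClass cs ⁻¹' {c} \ {i | IsHub cs i}).encard =
      (conjClass cs' ⁻¹' {c} \ {i | IsHub cs' i}).encard := by
  have hhubs := (hP.encard_hubs_le hR c).antisymm (hP'.encard_hubs_le hR.symm c)
  have hfin : (conjClass cs ⁻¹' {c} ∩ {i | IsHub cs i}).encard ≠ ⊤ :=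
    ((Set.encard_le_encard Set.inter_subset_left).trans_lt ((hP.pair c).trans_lt (by decide))).ne
  refine ENat.add_left_injective_of_ne_top hfin ?_
  beta_reduce
  rw [Set.encard_sdiff_add_encard_inter, hhubs, Set.encard_sdiff_add_encard_inter,
    encard_conjClass_preimage_eq hR]

lemma exists_isMatching : ∃ ψ, IsMatching cs cs' ψ := by
  let f (i : B) : ConjClasses W × Prop := (conjClass cs i, IsHub cs i)
  let f' (i : B') : ConjClasses W × Prop := (conjClass cs' i, IsHub cs' i)
  have hfibre (x : ConjClasses W × Prop) : {i | f i = x}.encard = {i | f' i = x}.encard := by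
    obtain ⟨c, p⟩ := x
    simp only [f, f', Prod.mk.injEq, eq_iff_iff]
    by_cases hp : p
    · simp only [hp, iff_true]
      exact (hP.encard_hubs_le hR c).antisymm (hP'.encard_hubs_le hR.symm c)
    · simp only [hp, iff_false]
      exact hP.encard_nonhubs_eq hP' hR c
  have hfin (x : ConjClasses W × Prop) : {i | f i = x}.Finite :=
    (Set.finite_of_encard_le_coe (hP.pair x.1)).subset fun i hi => congrArg Prod.fst hi
  have e (x : ConjClasses W × Prop) : {i // f i = x} ≃ {i // f' i = x} := by
    have := (hfin x).to_subtype
    have := ((hfin x).finite_of_encard_le (hfibre x).ge).to_subtype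
    exact (Finite.card_eq.mp (congrArg ENat.toNat (hfibre x))).some
  refine ⟨Equiv.ofFiberEquiv e, fun i => ?_⟩
  have h := Equiv.ofFiberEquiv_map e i
  simp only [f, f', Prod.mk.injEq, eq_iff_iff] at h
  exact ⟨h.1.symm, h.2.symm⟩

end

lemma IsMatching.preimage_eq_image (hψ : IsMatching cs cs' ψ) (C : Set (ConjClasses W)) :
    conjClass cs' ⁻¹' C = ψ '' (conjClass cs ⁻¹' C) := by
  have hcomp : conjClass cs = conjClass cs' ∘ ψ := funext fun i => (hψ i).1
  rw [hcomp, Set.preimage_comp, Set.image_preimage_eq _ ψ.surjective]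

lemma IsMatching.preimage_eq_pair (hψ : IsMatching cs cs' ψ) {i t : B} {c : ConjClasses W}
    (h : conjClass cs ⁻¹' {c} = {t, i}) : conjClass cs' ⁻¹' {c} = {ψ t, ψ i} := by
  rw [hψ.preimage_eq_image, h, Set.image_pair]

lemma IsMatching.matrix_eq_of_preimage_eq_pair (hψ : IsMatching cs cs' ψ)
    (hR : Set.range (conjClass cs) = Set.range (conjClass cs')) {i t : B} {c : ConjClasses W}
    (h : conjClass cs ⁻¹' {c} = {t, i}) : M i t = M' (ψ i) (ψ t) := by
  refine eq_of_torsionCard_eq fun N hN => ?_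
  have hcard := card_axisLabellings_eq hR {c} N
  rw [h, hψ.preimage_eq_pair h, card_axisLabellings_pair, card_axisLabellings_pair] at hcard
  exact Nat.eq_of_mul_eq_mul_left (Nat.pos_of_ne_zero hN) hcard

lemma matrix_eq_zero_of_not_isHub {i j : B} (hi : ¬ IsHub cs i)
    (hij : conjClass cs i ≠ conjClass cs j) : M i j = 0 := by
  by_contra h
  exact hi ⟨j, hij.symm, h⟩

lemma HasPairs.matrix_eq_zero (hP : HasPairs cs) {i t k : B} (hi : IsHub cs i)
    (ht : conjClass cs t = conjClass cs i) (hti : t ≠ i) (hk : conjClass cs i ≠ conjClass cs k) :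
    M t k = 0 :=
  matrix_eq_zero_of_not_isHub (fun h => hti (hP.hub ht h hi)) (ht ▸ hk)

lemma HasPairs.card_axisLabellings_two_classes (hP : HasPairs cs) {i j t v : B}
    (hi : IsHub cs i) (hj : IsHub cs j) (hij : conjClass cs i ≠ conjClass cs j)
    (ht : conjClass cs ⁻¹' {conjClass cs i} = {t, i})
    (hv : conjClass cs ⁻¹' {conjClass cs j} = {v, j}) (N : ℕ) :
    Nat.card (axisLabellings M (conjClass cs ⁻¹' {conjClass cs i, conjClass cs j}) N) =
      N * torsionCard (M i j) N * torsionCard (M i t) N * torsionCard (M j v) N := by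
  have hti : t ∈ conjClass cs ⁻¹' {conjClass cs i} := ht ▸ Or.inl rfl
  have hvj : v ∈ conjClass cs ⁻¹' {conjClass cs j} := hv ▸ Or.inl rfl
  rw [Set.mem_preimage, Set.mem_singleton_iff] at hti hvj
  rw [Set.insert_eq, Set.preimage_union, ht, hv]
  refine card_axisLabellings_two_pairs ?_ (fun h => hP.matrix_eq_zero hi hti h hij)
    (fun h => hP.matrix_eq_zero hj hvj h hij.symm)
    (fun h => hP.matrix_eq_zero hj hvj h (hti ▸ hij.symm)) N
  rw [← ht, ← hv]
  exact (Set.disjoint_singleton.mpr hij).preimage _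

section

variable (hψ : IsMatching cs cs' ψ) (hP : HasPairs cs) (hP' : HasPairs cs')
  (hR : Set.range (conjClass cs) = Set.range (conjClass cs'))
include hψ hP hP' hR

lemma IsMatching.matrix_eq_of_isHub {i j : B} (hi : IsHub cs i) (hj : IsHub cs j)
    (hij : conjClass cs i ≠ conjClass cs j) : M i j = M' (ψ i) (ψ j) := by
  obtain ⟨t, ht⟩ := exists_preimage_singleton_eq_pair (rfl : conjClass cs i = _) (hP.pair _)
  obtain ⟨v, hv⟩ := exists_preimage_singleton_eq_pair (rfl : conjClass cs j = _) (hP.pair _)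
  have ht' := hψ.preimage_eq_pair ht
  have hv' := hψ.preimage_eq_pair hv
  refine eq_of_torsionCard_eq fun N hN => ?_
  have : NeZero N := ⟨hN⟩
  have hcard := card_axisLabellings_eq hR {conjClass cs i, conjClass cs j} N
  rw [hP.card_axisLabellings_two_classes hi hj hij ht hv] at hcard
  rw [(hψ i).1, (hψ j).1] at hij hcard
  rw [(hψ i).1] at ht'
  rw [(hψ j).1] at hv'
  rw [hP'.card_axisLabellings_two_classes ((hψ i).2.mp hi) ((hψ j).2.mp hj) hij ht' hv',
    hψ.matrix_eq_of_preimage_eq_pair hR ht, hψ.matrix_eq_of_preimage_eq_pair hR hv] at hcard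
  exact Nat.eq_of_mul_eq_mul_left (Nat.pos_of_ne_zero hN) (Nat.eq_of_mul_eq_mul_right
    (torsionCard_pos _ N) (Nat.eq_of_mul_eq_mul_right (torsionCard_pos _ N) hcard))

lemma IsMatching.matrix_eq (i j : B) : M i j = M' (ψ i) (ψ j) := by
  by_cases hij : conjClass cs i = conjClass cs j
  · by_cases h : i = j
    · rw [h, M.diagonal, M'.diagonal]
    · exact hψ.matrix_eq_of_preimage_eq_pair hR
        (preimage_singleton_eq_pair rfl hij (Ne.symm h) (hP.pair _))
  have hij' : conjClass cs' (ψ i) ≠ conjClass cs' (ψ j) := by rwa [← (hψ i).1, ← (hψ j).1]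
  by_cases hi : IsHub cs i
  · by_cases hj : IsHub cs j
    · exact hψ.matrix_eq_of_isHub hP hP' hR hi hj hij
    · rw [M.symmetric, M'.symmetric, matrix_eq_zero_of_not_isHub hj (Ne.symm hij),
        matrix_eq_zero_of_not_isHub (mt (hψ j).2.mpr hj) hij'.symm]
  · rw [matrix_eq_zero_of_not_isHub hi hij, matrix_eq_zero_of_not_isHub (mt (hψ i).2.mpr hi) hij']

end

end Matching

end ReflectionRigid

/-- **Theorem (Hosaka).** Every Coxeter system `(W,S)` satisfying conditions (1), (2), (3)
is reflection rigid: for every Coxeter generating set `S'` of `W` having the same set of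
reflections as `S`, there is a bijection `ψ : S → S'` with `m(s,t) = m'(ψ s, ψ t)`.
(Here `orderOf x = 0` encodes infinite order.) -/
theorem reflection_rigid_of_conditions {B : Type*} [Fintype B] {W : Type*} [Group W]
    {M : CoxeterMatrix B} (cs : CoxeterSystem M W)
    (h1 : ∀ i j : B, i ≠ j → Odd (orderOf (cs.simple i * cs.simple j)) →
      cs.IsMaxSpherical {i, j})
    (h2 : ¬ ∃ i j k : B, i ≠ j ∧ j ≠ k ∧ i ≠ k ∧
      Odd (orderOf (cs.simple i * cs.simple j)) ∧ Odd (orderOf (cs.simple j * cs.simple k)))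
    (h3 : ∀ i j : B, i ≠ j → Odd (orderOf (cs.simple i * cs.simple j)) →
      {T : Set B | cs.IsMaxSpherical T ∧ (T ∩ {i, j}).Nonempty}.ncard ≤ 2) :
    ∀ (B' : Type*) [Fintype B'] (M' : CoxeterMatrix B') (cs' : CoxeterSystem M' W),
      (∀ w : W, cs'.IsReflection w ↔ cs.IsReflection w) →
      ∃ ψ : B ≃ B', ∀ i j : B,
        orderOf (cs.simple i * cs.simple j)
          = orderOf (cs'.simple (ψ i) * cs'.simple (ψ j)) := by
  simp only [ReflectionRigid.orderOf_simple_mul_simple] at h1 h2 h3 ⊢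
  intro B' _ M' cs' hrefl
  have hR := ReflectionRigid.range_conjClass_eq hrefl
  have hP := ReflectionRigid.hasPairs_of_conditions h1 h2 h3
  have hP' := hP.transfer (ReflectionRigid.hasLinkedNeighbours_of_conditions h1 h2 h3) hR
  obtain ⟨ψ, hψ⟩ := ReflectionRigid.exists_isMatching hP hP' hR
  exact ⟨ψ, hψ.matrix_eq hP hP' hR⟩
end

section
/- Let (W,S) be a Coxeter system and let s,t ∈ S. Then s is conjugate to t in W if and only if there exists a finite sequence s_1, …, s_n of elements of S with s_1 = s, s_n = t, and m(s_i, s_{i+1}) odd for each i ∈ {1, …, n−1}. -/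
/-!
If `a` and `b` are involutions and `(a * b) ^ (2 * k + 1) = 1`, then `(a * b) ^ k` conjugates `a` to
`b`; this applies to each step of an odd chain of simple reflections. Conversely, let `C` be the set
of generators joined to `s` by an odd chain. Sending the generators in `C` to `-1` and the others to
`1` defines a character `W →* ℤˣ`: it satisfies the relations with `m(a, b)` even because `ℤˣ` is
commutative of exponent two, and those with `m(a, b)` odd because then `a` and `b` are either both
in `C` or both outside it. Characters are constant on conjugacy classes, so every generator
conjugate to `s` lies in `C`.
-/

open Relation
open scoped SetRel

section Chains

variable {α : Type*} {r : SetRel α α}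

theorem reflTransGen_iff_exists_relSeries {a b : α} :
    ReflTransGen (· ~[r] ·) a b ↔ ∃ p : RelSeries r, p.head = a ∧ p.last = b := by
  constructor
  · intro h
    induction h with
    | refl => exact ⟨.singleton r a, rfl, rfl⟩
    | tail _ hbc ih =>
      obtain ⟨p, rfl, rfl⟩ := ih
      exact ⟨p.snoc _ hbc, p.head_snoc _ hbc, p.last_snoc _ hbc⟩
  · rintro ⟨p, rfl, rfl⟩
    induction p using RelSeries.inductionOn with
    | singleton a => exact .refl
    | cons p a h ih => simpa using ih.head h

end Chains

theorem isConj_of_odd_orderOf_mul {G : Type*} [Group G] {a b : G} (ha : a * a = 1) (hb : b * b = 1)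
    (h : Odd (orderOf (a * b))) : IsConj a b := by
  obtain ⟨k, hk⟩ := h
  have hba : (b * a) ^ k = (a * b) ^ (k + 1) := by
    have hinv : b * a = (a * b)⁻¹ := by
      rw [mul_inv_rev, inv_eq_of_mul_eq_one_left ha, inv_eq_of_mul_eq_one_left hb]
    rw [hinv, inv_pow, inv_eq_iff_mul_eq_one, ← pow_add, ← pow_orderOf_eq_one (a * b), hk]
    congr 1
    ring
  have hconj : (a * b) ^ k * a = b * (a * b) ^ k :=
    calc (a * b) ^ k * a = a * (b * a) ^ k := mul_pow_mul a b k
      _ = a * a * b * (a * b) ^ k := by simp only [hba, pow_succ', mul_assoc]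
      _ = b * (a * b) ^ k := by rw [ha, one_mul]
  exact isConj_iff.2 ⟨(a * b) ^ k, mul_inv_eq_of_eq_mul hconj⟩

section Coxeter

variable {B W : Type*} [Group W] {M : CoxeterMatrix B}

theorem isLiftable_of_eq_of_odd {A : Type*} [CommMonoid A] {f : B → A} (hsq : ∀ a, f a ^ 2 = 1)
    (hodd : ∀ a b, Odd (M a b) → f a = f b) : M.IsLiftable f := by
  intro a b
  rcases Nat.even_or_odd' (M a b) with ⟨k, hk | hk⟩
  · rw [hk, pow_mul, mul_pow, hsq, hsq, one_mul, one_pow]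
  · rw [hodd a b ⟨k, hk⟩, ← sq, hsq, one_pow]

theorem eq_of_isConj_simple (cs : CoxeterSystem M W) {A : Type*} [CommMonoid A] {f : B → A}
    (hf : M.IsLiftable f) {i j : B} (h : IsConj (cs.simple i) (cs.simple j)) : f i = f j := by
  rw [← cs.lift_apply_simple hf i, ← cs.lift_apply_simple hf j]
  exact isConj_iff_eq.1 ((cs.lift ⟨f, hf⟩).map_isConj h)

theorem reflTransGen_odd_of_isConj_simple (cs : CoxeterSystem M W) {i j : B}
    (h : IsConj (cs.simple i) (cs.simple j)) : ReflTransGen (fun a b ↦ Odd (M a b)) i j := by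
  classical
  let linked (b : B) : Prop := ReflTransGen (fun a b ↦ Odd (M a b)) i b
  let f (b : B) : ℤˣ := if linked b then -1 else 1
  have linked_iff (a b : B) (hab : Odd (M a b)) : linked a ↔ linked b :=
    ⟨fun ha ↦ ha.tail hab, fun hb ↦ hb.tail (M.symmetric a b ▸ hab)⟩
  have hf : M.IsLiftable f :=
    isLiftable_of_eq_of_odd (fun a ↦ Int.units_sq (f a)) fun a b hab ↦ by
      simp only [f, linked_iff a b hab]
  have hij : f i = f j := eq_of_isConj_simple cs hf h
  have hfi : f i = -1 := if_pos .refl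
  by_contra hj
  have hfj : f j = 1 := if_neg hj
  exact absurd (hfi.symm.trans (hij.trans hfj)) (by decide)

/-- The odd graph of a Coxeter system, on the index set of the simple reflections: `a` and `b` are
adjacent when `s_a s_b` has odd order. Pairs with `s_a s_b` of infinite order are excluded, as
`orderOf` is then `0`. It is encoded as a set of pairs so that its finite chains are the terms of
`RelSeries (oddGraph cs)`. -/
def oddGraph (cs : CoxeterSystem M W) : SetRel B B :=
  {(a, b) | Odd (orderOf (cs.simple a * cs.simple b))}

theorem oddGraph_of_odd (cs : CoxeterSystem M W) {a b : B} (h : Odd (M a b)) :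
    a ~[oddGraph cs] b :=
  h.of_dvd_nat (orderOf_dvd_of_pow_eq_one (cs.simple_mul_simple_pow a b))

theorem isConj_simple_of_oddGraph (cs : CoxeterSystem M W) {a b : B} (h : a ~[oddGraph cs] b) :
    IsConj (cs.simple a) (cs.simple b) :=
  isConj_of_odd_orderOf_mul (cs.simple_mul_simple_self a) (cs.simple_mul_simple_self b) h

theorem isConj_simple_iff_reflTransGen_oddGraph (cs : CoxeterSystem M W) {i j : B} :
    IsConj (cs.simple i) (cs.simple j) ↔ ReflTransGen (· ~[oddGraph cs] ·) i j := by
  constructor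
  · intro h
    exact ReflTransGen.mono (fun _ _ ↦ oddGraph_of_odd cs) _ _
      (reflTransGen_odd_of_isConj_simple cs h)
  · intro h
    induction h with
    | refl => exact .refl _
    | tail _ hbc ih => exact ih.trans (isConj_simple_of_oddGraph cs hbc)

theorem simple_isConj_iff_general (cs : CoxeterSystem M W) (i j : B) :
    IsConj (cs.simple i) (cs.simple j) ↔
      ∃ n : ℕ, ∃ f : Fin (n + 1) → B, f 0 = i ∧ f (Fin.last n) = j ∧
        ∀ k : Fin n, Odd (orderOf (cs.simple (f k.castSucc) * cs.simple (f k.succ))) := by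
  rw [isConj_simple_iff_reflTransGen_oddGraph, reflTransGen_iff_exists_relSeries]
  constructor
  · rintro ⟨p, hi, hj⟩
    exact ⟨p.length, p, hi, hj, p.step⟩
  · rintro ⟨n, f, hi, hj, hf⟩
    exact ⟨⟨n, f, hf⟩, hi, hj⟩

end Coxeter

/-- Two simple reflections `s, t` of a Coxeter system are conjugate in `W` if and only if
there is a sequence `s = s_0, s_1, …, s_n = t` of simple reflections with
`m(s_k, s_{k+1})` odd for each `k`. -/
theorem simple_isConj_iff {B : Type*} [Fintype B] {W : Type*} [Group W]
    {M : CoxeterMatrix B} (cs : CoxeterSystem M W) (i j : B) :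
    IsConj (cs.simple i) (cs.simple j) ↔
      ∃ n : ℕ, ∃ f : Fin (n + 1) → B, f 0 = i ∧ f (Fin.last n) = j ∧
        ∀ k : Fin n, Odd (orderOf (cs.simple (f k.castSucc) * cs.simple (f k.succ))) :=
  simple_isConj_iff_general cs i j
end

section
/- Let (W,S) and (W',S') be Coxeter systems and suppose there is a group isomorphism φ : W → W'. Then for each maximal spherical subset T ⊆ S, there exists a unique maximal spherical subset T' ⊆ S' such that φ(W_T) = w' W'_{T'} (w')^{-1} for some w' ∈ W'. -/
open scoped Pointwise in
lemma conjSubgroup_eq_smul {G : Type*} [Group G] (g : G) (H : Subgroup G) :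
    conjSubgroup g H = MulAut.conj g • H :=
  rfl

lemma conjSubgroup_mul {G : Type*} [Group G] (g h : G) (H : Subgroup G) :
    conjSubgroup (g * h) H = conjSubgroup g (conjSubgroup h H) := by
  simp only [conjSubgroup_eq_smul, map_mul, mul_smul]

lemma conjSubgroup_one {G : Type*} [Group G] (H : Subgroup G) : conjSubgroup 1 H = H := by
  rw [conjSubgroup_eq_smul, map_one, one_smul]

/-- `K` is a maximal finite subgroup: maximal under inclusion among finite subgroups. -/
def IsMaxFinite {G : Type*} [Group G] (K : Subgroup G) : Prop :=
  Maximal (fun L : Subgroup G => Finite L) K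

lemma finite_map_mulEquiv_iff {G H : Type*} [Group G] [Group H] (φ : G ≃* H) {K : Subgroup G} :
    Finite (K.map φ.toMonoidHom) ↔ Finite K :=
  (φ.subgroupMap K).toEquiv.finite_iff.symm

lemma IsMaxFinite.map {G H : Type*} [Group G] [Group H] {K : Subgroup G} (hK : IsMaxFinite K)
    (φ : G ≃* H) : IsMaxFinite (K.map φ.toMonoidHom) := by
  refine ⟨(finite_map_mulEquiv_iff φ).2 hK.prop, fun L hL hKL => ?_⟩
  obtain ⟨L, rfl⟩ := φ.mapSubgroup.surjective L
  exact φ.mapSubgroup.monotone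
    (hK.le_of_ge ((finite_map_mulEquiv_iff φ).1 hL) (φ.mapSubgroup.le_iff_le.1 hKL))

lemma IsMaxFinite.conjSubgroup {G : Type*} [Group G] {K : Subgroup G} (hK : IsMaxFinite K)
    (g : G) : IsMaxFinite (conjSubgroup g K) :=
  hK.map (MulAut.conj g)

namespace GeometricRepresentation

open Module

/-! ### Products of two reflections -/

section RankTwo

open Real Polynomial.Chebyshev

lemma sin_pi_div_pos {m : ℕ} (hm : 2 ≤ m) : 0 < sin (π / m) := by
  have hm' : (1 : ℝ) < m := by exact_mod_cast hm
  exact sin_pos_of_pos_of_lt_pi (by positivity) (div_lt_self pi_pos hm')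

lemma eval_S_two_mul_cos_nonneg {m : ℕ} (hm : m ≠ 1) {k : ℤ} (hk : -1 ≤ k)
    (hkm : m = 0 ∨ k + 1 ≤ m) : 0 ≤ (S ℝ k).eval (2 * cos (π / m)) := by
  have hk' : (0 : ℝ) ≤ k + 1 := by exact_mod_cast neg_le_iff_add_nonneg.1 hk
  rcases eq_or_ne m 0 with rfl | hm0
  · simpa using hk'
  have hkm' : (k + 1 : ℝ) ≤ m := by exact_mod_cast hkm.resolve_left hm0
  refine nonneg_of_mul_nonneg_left ?_ (sin_pi_div_pos (m := m) (by lia))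
  rw [S_two_mul_real_cos]
  refine sin_nonneg_of_nonneg_of_le_pi (by positivity) ?_
  calc (k + 1) * (π / m) ≤ m * (π / m) := by gcongr
    _ = π := by field_simp

lemma eval_S_two_mul_cos_two_mul {m : ℕ} (hm : 2 ≤ m) :
    (S ℝ (2 * m)).eval (2 * cos (π / m)) = 1 := by
  have hm0 : (m : ℝ) ≠ 0 := by positivity
  refine mul_right_cancel₀ (sin_pi_div_pos hm).ne' ?_
  rw [S_two_mul_real_cos, one_mul, ← sin_add_two_pi (π / m)]
  congr 1
  push_cast
  field_simp
  ring

lemma eval_S_two_mul_cos_two_mul_sub_one {m : ℕ} (hm : 2 ≤ m) :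
    (S ℝ (2 * m - 1)).eval (2 * cos (π / m)) = 0 := by
  have hm0 : (m : ℝ) ≠ 0 := by positivity
  refine (mul_eq_zero.1 ?_).resolve_right (sin_pi_div_pos hm).ne'
  rw [S_two_mul_real_cos, ← sin_two_pi]
  congr 1
  push_cast
  field_simp
  ring

lemma reflection_mul_reflection_pow_apply_self_of_eq_neg {R V : Type*} [CommRing R]
    [AddCommGroup V] [Module R V] {x y : V} {f g : Dual R V} (hf : f x = 2) (hg : g y = 2) {r : R}
    (hfy : f y = -r) (hgx : g x = -r) (k : ℕ) :
    ((reflection hf * reflection hg) ^ k) x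
      = (S R (2 * k)).eval r • x + (S R (2 * k - 1)).eval r • y := by
  induction k with
  | zero => simp
  | succ k ih =>
    have h1 : (S R (2 * k + 1)).eval r
        = r * (S R (2 * k)).eval r - (S R (2 * k - 1)).eval r := by simp [S_add_one]
    have h2 : (S R (2 * k + 2)).eval r
        = r * (S R (2 * k + 1)).eval r - (S R (2 * k)).eval r := by simp [S_add_two]
    rw [show (2 * (k + 1 : ℕ) : ℤ) = 2 * k + 2 by push_cast; ring,
      show (2 * k + 2 - 1 : ℤ) = 2 * k + 1 by ring, h2, h1, pow_succ', LinearEquiv.mul_apply, ih,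
      LinearEquiv.mul_apply]
    simp only [reflection_apply, map_add, map_sub, map_smul, hf, hg, hfy, hgx]
    module

end RankTwo

/-! ### The geometric representation -/

section CosForm

variable {B : Type*}

/-- The simple root `α s`: the basis vector attached to `s` of the geometric representation, whose
underlying space is `B →₀ ℝ`. -/
noncomputable abbrev simpleRoot (s : B) : B →₀ ℝ := Finsupp.single s 1

local notation "α" => simpleRoot

/-- The canonical bilinear form, scaled so that `⟨α s, α s⟩ = 2` and hence
`⟨α s, α t⟩ = -2 cos (π / m(s,t))`. When `m(s,t) = ∞`, encoded as `M s t = 0`, division by zero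
yields the customary value `-2`. -/
noncomputable def cosForm (M : CoxeterMatrix B) : LinearMap.BilinForm ℝ (B →₀ ℝ) :=
  Finsupp.linearCombination ℝ fun s =>
    Finsupp.linearCombination ℝ fun t => -(2 * Real.cos (Real.pi / M s t))

variable (M : CoxeterMatrix B)

lemma cosForm_simpleRoot (s t : B) :
    cosForm M (α s) (α t) = -(2 * Real.cos (Real.pi / M s t)) := by
  simp [cosForm]

lemma cosForm_simpleRoot_self (s : B) : cosForm M (α s) (α s) = 2 := by
  simp [cosForm_simpleRoot]

lemma cosForm_comm (u v : B →₀ ℝ) : cosForm M u v = cosForm M v u := by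
  have h : cosForm M = (cosForm M).flip := by
    refine Finsupp.lhom_ext' fun s => ?_
    ext t
    simp [cosForm, M.symmetric s t]
  exact LinearMap.congr_fun₂ h u v

/-- The orthogonal reflection in the simple root `α s`. -/
noncomputable def simpleReflection (s : B) : (B →₀ ℝ) ≃ₗ[ℝ] (B →₀ ℝ) :=
  reflection (cosForm_simpleRoot_self M s)

lemma simpleReflection_apply (s : B) (v : B →₀ ℝ) :
    simpleReflection M s v = v - cosForm M (α s) v • α s :=
  reflection_apply _ _

lemma simpleReflection_simpleRoot (s : B) : simpleReflection M s (α s) = -α s :=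
  reflection_apply_self _

lemma involutive_simpleReflection (s : B) : Function.Involutive (simpleReflection M s) :=
  involutive_reflection _

lemma simpleReflection_inv (s : B) : (simpleReflection M s)⁻¹ = simpleReflection M s :=
  reflection_inv _

lemma simpleReflection_apply_of_ne {s t : B} (h : t ≠ s) (v : B →₀ ℝ) :
    simpleReflection M s v t = v t := by
  simp [simpleReflection_apply, h.symm]

lemma cosForm_simpleReflection (s : B) (u v : B →₀ ℝ) :
    cosForm M (simpleReflection M s u) (simpleReflection M s v) = cosForm M u v := by
  simp only [simpleReflection_apply, map_sub, map_smul, LinearMap.sub_apply, LinearMap.smul_apply,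
    smul_eq_mul, cosForm_simpleRoot_self, cosForm_comm M u (α s)]
  ring

lemma simpleReflection_mul_pow_apply_simpleRoot (s t : B) (k : ℕ) :
    ((simpleReflection M s * simpleReflection M t) ^ k) (α s)
      = (Polynomial.Chebyshev.S ℝ (2 * k)).eval (2 * Real.cos (Real.pi / M s t)) • α s
        + (Polynomial.Chebyshev.S ℝ (2 * k - 1)).eval (2 * Real.cos (Real.pi / M s t)) • α t :=
  reflection_mul_reflection_pow_apply_self_of_eq_neg _ _ (cosForm_simpleRoot M s t)
    (by rw [cosForm_simpleRoot, M.symmetric t s]) k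

lemma cosForm_simpleReflection_mul_pow (s t : B) (k : ℕ) (u v : B →₀ ℝ) :
    cosForm M (((simpleReflection M s * simpleReflection M t) ^ k) u)
      (((simpleReflection M s * simpleReflection M t) ^ k) v) = cosForm M u v := by
  induction k with
  | zero => simp
  | succ k ih => simp only [pow_succ', LinearEquiv.mul_apply, cosForm_simpleReflection, ih]

lemma exists_simpleReflection_mul_pow_apply_eq (s t : B) (k : ℕ) (v : B →₀ ℝ) :
    ∃ p q : ℝ, ((simpleReflection M s * simpleReflection M t) ^ k) v
      = v + (p • α s + q • α t) := by
  induction k with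
  | zero => exact ⟨0, 0, by simp⟩
  | succ k ih =>
    obtain ⟨p, q, h⟩ := ih
    rw [pow_succ', LinearEquiv.mul_apply, h, LinearEquiv.mul_apply, simpleReflection_apply M t,
      simpleReflection_apply M s]
    set u := v + (p • α s + q • α t)
    exact ⟨p - cosForm M (α s) (u - cosForm M (α t) u • α t), q - cosForm M (α t) u, by module⟩

variable {M}

lemma simpleReflection_mul_pow_apply_simpleRoot_left {s t : B} (hst : 2 ≤ M s t) :
    ((simpleReflection M s * simpleReflection M t) ^ M s t) (α s) = α s := by
  rw [simpleReflection_mul_pow_apply_simpleRoot, eval_S_two_mul_cos_two_mul hst,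
    eval_S_two_mul_cos_two_mul_sub_one hst, one_smul, zero_smul, add_zero]

lemma simpleReflection_mul_pow_apply_simpleRoot_right {s t : B} (hst : 2 ≤ M s t) :
    ((simpleReflection M s * simpleReflection M t) ^ M s t) (α t) = α t := by
  have h := simpleReflection_mul_pow_apply_simpleRoot_left (M := M) (s := t) (t := s)
    (by rwa [M.symmetric t s])
  have hinv : (simpleReflection M s * simpleReflection M t) ^ M s t
      = ((simpleReflection M t * simpleReflection M s) ^ M t s)⁻¹ := by
    rw [← inv_pow, mul_inv_rev, simpleReflection_inv, simpleReflection_inv, M.symmetric t s]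
  rw [hinv]
  exact (LinearEquiv.symm_apply_eq _).2 h.symm

lemma eq_zero_of_cosForm_eq_zero {s t : B} (hst : 2 ≤ M s t) {p q : ℝ}
    (hs : cosForm M (α s) (p • α s + q • α t) = 0)
    (ht : cosForm M (α t) (p • α s + q • α t) = 0) : p • α s + q • α t = 0 := by
  simp only [map_add, map_smul, cosForm_simpleRoot_self, cosForm_simpleRoot M s t,
    cosForm_simpleRoot M t s, M.symmetric t s, smul_eq_mul] at hs ht
  have hdet : q * Real.sin (Real.pi / M s t) ^ 2 = 0 := by
    rw [Real.sin_sq]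
    linear_combination ht / 2 + Real.cos (Real.pi / M s t) * hs / 2
  have hq : q = 0 := (mul_eq_zero.1 hdet).resolve_right (pow_pos (sin_pi_div_pos hst) 2).ne'
  have hp : p = 0 := by simpa [hq] using hs
  simp [hp, hq]

/- The displacement of a vector under `(simpleReflection M s * simpleReflection M t) ^ M s t` lies in
the plane of `α s` and `α t`, and is orthogonal to this plane because the rotation preserves the
form and fixes the plane. -/
lemma isLiftable_simpleReflection : M.IsLiftable (simpleReflection M) := by
  intro s t
  rcases eq_or_ne s t with rfl | hst
  · rw [M.diagonal, pow_one]
    exact LinearEquiv.ext (involutive_simpleReflection M s)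
  rcases eq_or_ne (M s t) 0 with h0 | h0
  · rw [h0, pow_zero]
  have h2 : 2 ≤ M s t := by have := M.off_diagonal s t hst; lia
  ext1 v
  obtain ⟨p, q, hpq⟩ := exists_simpleReflection_mul_pow_apply_eq M s t (M s t) v
  have hs := cosForm_simpleReflection_mul_pow M s t (M s t) (α s) v
  have ht := cosForm_simpleReflection_mul_pow M s t (M s t) (α t) v
  rw [simpleReflection_mul_pow_apply_simpleRoot_left h2, hpq, map_add, add_eq_left] at hs
  rw [simpleReflection_mul_pow_apply_simpleRoot_right h2, hpq, map_add, add_eq_left] at ht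
  rw [hpq, eq_zero_of_cosForm_eq_zero h2 hs ht, add_zero, LinearEquiv.coe_one, id]

end CosForm

section GeomRep

variable {B W : Type*} [Group W] {M : CoxeterMatrix B} (cs : CoxeterSystem M W)

local notation "α" => simpleRoot
local notation "ℓ" => cs.length

/-- The geometric representation of a Coxeter group, in which the generators act by the reflections
in the simple roots. -/
noncomputable def geomRep : Representation ℝ W (B →₀ ℝ) :=
  LinearEquiv.automorphismGroup.toLinearMapMonoidHom.comp
    (cs.lift ⟨simpleReflection M, isLiftable_simpleReflection⟩)

local notation "ρ" => geomRep cs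

lemma geomRep_simple (s : B) : ρ (cs.simple s) = simpleReflection M s := by
  simp [geomRep]

lemma geomRep_mul_apply (g h : W) (v : B →₀ ℝ) : ρ (g * h) v = ρ g (ρ h v) := by
  rw [map_mul, Module.End.mul_apply]

lemma geomRep_simple_apply (s : B) (v : B →₀ ℝ) :
    ρ (cs.simple s) v = v - cosForm M (α s) v • α s := by
  rw [geomRep_simple, LinearEquiv.coe_coe, simpleReflection_apply]

lemma geomRep_simple_simpleRoot (s : B) : ρ (cs.simple s) (α s) = -α s := by
  rw [geomRep_simple, LinearEquiv.coe_coe, simpleReflection_simpleRoot]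

lemma cosForm_geomRep (g : W) (u v : B →₀ ℝ) : cosForm M (ρ g u) (ρ g v) = cosForm M u v := by
  induction g using cs.simple_induction_left with
  | one => simp
  | mul_simple_left g s ih =>
    simp only [geomRep_mul_apply, geomRep_simple, LinearEquiv.coe_coe, cosForm_simpleReflection, ih]

open CoxeterSystem

lemma exists_geomRep_alternatingWord_eq {s t : B} (hst : s ≠ t) {k : ℕ}
    (hk : M s t = 0 ∨ k + 1 ≤ M s t) :
    ∃ p q : ℝ, 0 ≤ p ∧ 0 ≤ q ∧
      ρ (cs.wordProd (alternatingWord s t k)) (α s) = p • α s + q • α t := by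
  have hm := M.off_diagonal s t hst
  set r := 2 * Real.cos (Real.pi / M s t) 
  have hS {i : ℤ} (hi : -1 ≤ i) (hik : i ≤ k) : 0 ≤ (Polynomial.Chebyshev.S ℝ i).eval r :=
    eval_S_two_mul_cos_nonneg hm hi (by lia)
  have hpow (j : ℕ) : ρ ((cs.simple s * cs.simple t) ^ j) (α s)
      = (Polynomial.Chebyshev.S ℝ (2 * j)).eval r • α s
        + (Polynomial.Chebyshev.S ℝ (2 * j - 1)).eval r • α t := by
    rw [← simpleReflection_mul_pow_apply_simpleRoot]
    simp [geomRep]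
  rw [prod_alternatingWord_eq_mul_pow]
  obtain ⟨j, rfl | rfl⟩ := Nat.even_or_odd' k
  · refine ⟨_, _, hS (i := 2 * j) (by lia) (by lia), hS (i := 2 * j - 1) (by lia) (by lia), ?_⟩
    rw [if_pos (by simp), one_mul, Nat.mul_div_cancel_left j two_pos, hpow]
  · refine ⟨_, _, hS (i := 2 * j) (by lia) (by lia), hS (i := 2 * j + 1) (by lia) (by lia), ?_⟩
    have hrec : (Polynomial.Chebyshev.S ℝ (2 * j + 1)).eval r
        = r * (Polynomial.Chebyshev.S ℝ (2 * j)).eval r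
          - (Polynomial.Chebyshev.S ℝ (2 * j - 1)).eval r := by
      simp [Polynomial.Chebyshev.S_add_one]
    have hts : cosForm M (α t) (α s) = -r := by rw [cosForm_simpleRoot, M.symmetric t s]
    rw [if_neg (by simp), show (2 * j + 1) / 2 = j by lia, geomRep_mul_apply, hpow, hrec,
      geomRep_simple_apply]
    simp only [map_add, map_smul, hts, cosForm_simpleRoot_self, smul_eq_mul]
    module

lemma exists_eq_mul_alternatingWord {w : W} {s t : B} (hs : ¬ cs.IsRightDescent w s) :
    ∃ (v : W) (k : ℕ), w = v * cs.wordProd (alternatingWord s t k) ∧ ℓ v + k = ℓ w ∧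
      ¬ cs.IsRightDescent v s ∧ ¬ cs.IsRightDescent v t := by
  induction hn : ℓ w using Nat.strong_induction_on generalizing w s t with
  | _ n ih =>
  subst hn
  by_cases ht : cs.IsRightDescent w t
  · obtain ⟨v, k, hv, hvk, hvt, hvs⟩ := ih _ ht (s := t) (t := s)
      (cs.isRightDescent_iff_not_isRightDescent_mul.1 ht) rfl
    refine ⟨v, k + 1, ?_, ?_, hvs, hvt⟩
    · rw [alternatingWord_succ, wordProd_concat, ← mul_assoc, ← hv,
        cs.simple_mul_simple_cancel_right]
    · rw [← cs.isRightDescent_iff.1 ht, ← hvk, add_assoc]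
  · exact ⟨w, 0, by simp [alternatingWord], rfl, hs, ht⟩

lemma eq_zero_or_succ_le_of_mul_alternatingWord {v : W} {s t : B} {k : ℕ}
    (hs : ¬ cs.IsRightDescent (v * cs.wordProd (alternatingWord s t k)) s)
    (hk : ℓ v + k = ℓ (v * cs.wordProd (alternatingWord s t k))) :
    M s t = 0 ∨ k + 1 ≤ M s t := by
  by_contra! hM
  have hlt : ℓ (cs.wordProd (alternatingWord t s (k + 1))) < k + 1 := by
    have hred := cs.not_isReduced_alternatingWord t s (m := k + 1) (M.symmetric s t ▸ hM.1)
      (M.symmetric s t ▸ hM.2)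
    have hle := cs.length_wordProd_le (alternatingWord t s (k + 1))
    rw [CoxeterSystem.IsReduced, length_alternatingWord] at hred
    rw [length_alternatingWord] at hle
    exact lt_of_le_of_ne hle hred
  have hle := cs.length_mul_le v (cs.wordProd (alternatingWord t s (k + 1)))
  rw [alternatingWord_succ, wordProd_concat, ← mul_assoc, cs.not_isRightDescent_iff.1 hs,
    ← hk] at hle
  rw [alternatingWord_succ, wordProd_concat] at hlt
  lia

/- Stripping from the right of `w` the longest alternating word in `s` and a right descent `t`
leaves an element having neither `s` nor `t` as a descent, and the stripped word is too short for
the rank two coefficients to become negative. -/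
theorem geomRep_simpleRoot_nonneg {w : W} {s : B} (hs : ¬ cs.IsRightDescent w s) :
    0 ≤ ρ w (α s) := by
  induction hn : ℓ w using Nat.strong_induction_on generalizing w s with
  | _ n ih =>
  subst hn
  rcases eq_or_ne w 1 with rfl | hw
  · simp
  obtain ⟨t, ht⟩ := cs.exists_rightDescent_of_ne_one hw
  have hst : s ≠ t := fun h => hs (h ▸ ht)
  obtain ⟨v, k, rfl, hk, hvs, hvt⟩ := exists_eq_mul_alternatingWord cs (t := t) hs
  have hk0 : k ≠ 0 := by
    rintro rfl
    exact hvt (by simpa [alternatingWord] using ht)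
  obtain ⟨p, q, hp, hq, hpq⟩ := exists_geomRep_alternatingWord_eq cs hst
    (eq_zero_or_succ_le_of_mul_alternatingWord cs hs hk)
  have hlt : ℓ v < ℓ (v * cs.wordProd (alternatingWord s t k)) := by lia
  rw [geomRep_mul_apply, hpq, map_add, map_smul, map_smul]
  exact add_nonneg (smul_nonneg hp (ih _ hlt hvs rfl)) (smul_nonneg hq (ih _ hlt hvt rfl))

lemma geomRep_simpleRoot_nonpos {w : W} {s : B} (hs : cs.IsRightDescent w s) :
    ρ w (α s) ≤ 0 := by
  have h := geomRep_simpleRoot_nonneg cs (cs.isRightDescent_iff_not_isRightDescent_mul.1 hs)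
  rwa [geomRep_mul_apply, geomRep_simple_simpleRoot, map_neg, neg_nonneg] at h

/-! ### Roots and inversions -/

/-- The root system: the orbit of the simple roots. -/
def roots : Set (B →₀ ℝ) := {v | ∃ (w : W) (s : B), ρ w (α s) = v}

/-- The roots that are nonnegative combinations of simple roots; the order on `B →₀ ℝ` is the
coordinatewise one. -/
def posRoots : Set (B →₀ ℝ) := {v ∈ roots cs | 0 ≤ v}

/-- The inversion set of `w`: the positive roots sent by `w` to negative roots. -/
def inversions (w : W) : Set (B →₀ ℝ) := {v ∈ posRoots cs | ρ w v ≤ 0}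

variable {cs}

lemma simpleRoot_nonneg (s : B) : 0 ≤ α s := Finsupp.single_nonneg.2 zero_le_one

lemma simpleRoot_mem_posRoots (s : B) : α s ∈ posRoots cs :=
  ⟨⟨1, s, by simp⟩, simpleRoot_nonneg s⟩

lemma geomRep_mem_roots (g : W) {v : B →₀ ℝ} (hv : v ∈ roots cs) : ρ g v ∈ roots cs := by
  obtain ⟨w, s, rfl⟩ := hv
  exact ⟨g * w, s, geomRep_mul_apply cs g w _⟩

lemma cosForm_self_of_mem_roots {v : B →₀ ℝ} (hv : v ∈ roots cs) : cosForm M v v = 2 := by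
  obtain ⟨w, s, rfl⟩ := hv
  rw [cosForm_geomRep, cosForm_simpleRoot_self]

lemma ne_zero_of_mem_roots {v : B →₀ ℝ} (hv : v ∈ roots cs) : v ≠ 0 := by
  rintro rfl
  simpa using cosForm_self_of_mem_roots hv

lemma neg_mem_roots {v : B →₀ ℝ} (hv : v ∈ roots cs) : -v ∈ roots cs := by
  obtain ⟨w, s, rfl⟩ := hv
  exact ⟨w * cs.simple s, s, by rw [geomRep_mul_apply, geomRep_simple_simpleRoot, map_neg]⟩

lemma nonneg_or_nonpos_of_mem_roots {v : B →₀ ℝ} (hv : v ∈ roots cs) : 0 ≤ v ∨ v ≤ 0 := by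
  obtain ⟨w, s, rfl⟩ := hv
  by_cases h : cs.IsRightDescent w s
  · exact .inr (geomRep_simpleRoot_nonpos cs h)
  · exact .inl (geomRep_simpleRoot_nonneg cs h)

lemma eq_simpleRoot_of_forall_ne {v : B →₀ ℝ} (hv : v ∈ posRoots cs) {s : B}
    (h : ∀ t ≠ s, v t = 0) : v = α s := by
  have hvs : v = v s • α s := by
    ext t
    rcases eq_or_ne t s with rfl | ht
    · simp
    · simp [h t ht, ht.symm]
  have hsq : v s * (v s * 2) = 2 := by
    have hnorm := cosForm_self_of_mem_roots hv.1
    rwa [hvs, map_smul, map_smul, LinearMap.smul_apply, cosForm_simpleRoot_self] at hnorm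
  have hpos : 0 ≤ v s := hv.2 s
  have hone : v s = 1 := by nlinarith
  rw [hvs, hone, one_smul]

lemma geomRep_simple_mem_posRoots {v : B →₀ ℝ} (hv : v ∈ posRoots cs) {s : B} (hne : v ≠ α s) :
    ρ (cs.simple s) v ∈ posRoots cs := by
  have hroot := geomRep_mem_roots (cs.simple s) hv.1
  refine ⟨hroot, (nonneg_or_nonpos_of_mem_roots hroot).resolve_right fun hneg => hne ?_⟩
  refine eq_simpleRoot_of_forall_ne hv fun t ht => le_antisymm ?_ (hv.2 t)
  have hcoord := hneg t
  rwa [geomRep_simple, LinearEquiv.coe_coe, simpleReflection_apply_of_ne M ht] at hcoord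

lemma exists_reflection {v : B →₀ ℝ} (hv : v ∈ roots cs) :
    ∃ r : W, ∀ u, ρ r u = u - cosForm M v u • v := by
  obtain ⟨w, s, rfl⟩ := hv
  refine ⟨w * cs.simple s * w⁻¹, fun u => ?_⟩
  have h : cosForm M (ρ w (α s)) u = cosForm M (α s) (ρ w⁻¹ u) := by
    rw [← cosForm_geomRep cs w (α s), Representation.self_inv_apply]
  rw [geomRep_mul_apply, geomRep_mul_apply, geomRep_simple_apply, map_sub, map_smul,
    Representation.self_inv_apply, h]

variable (cs) in
lemma inversions_finite (w : W) : (inversions cs w).Finite := by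
  induction w using cs.simple_induction_right with
  | one =>
    refine Set.finite_empty.subset fun v ⟨⟨hroot, hpos⟩, hneg⟩ => ne_zero_of_mem_roots hroot ?_
    exact le_antisymm (by simpa using hneg) hpos
  | mul_simple_right w s ih =>
    refine ((ih.image (ρ (cs.simple s))).insert (α s)).subset fun v ⟨hpos, hneg⟩ => ?_
    refine or_iff_not_imp_left.2 fun hne => ?_
    rw [geomRep_mul_apply] at hneg
    exact ⟨_, ⟨geomRep_simple_mem_posRoots hpos hne, hneg⟩,
      by rw [← geomRep_mul_apply, cs.simple_mul_simple_self, map_one, Module.End.one_apply]⟩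

lemma inversions_injective : Function.Injective (inversions cs) := by
  intro g h hgh
  by_contra hne
  obtain ⟨s, hs⟩ := cs.exists_rightDescent_of_ne_one (mt mul_inv_eq_one.1 hne)
  have hα : α s ∈ posRoots cs := simpleRoot_mem_posRoots s
  have hα_neg : ¬ α s ≤ 0 := fun h => ne_zero_of_mem_roots hα.1 (le_antisymm h hα.2)
  set u := ρ h⁻¹ (α s) with hu
  have hroot : u ∈ roots cs := geomRep_mem_roots _ hα.1
  have hhu : ρ h u = α s := Representation.self_inv_apply _ _ _
  have hgu : ρ g u ≤ 0 := by
    rw [hu, ← geomRep_mul_apply]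
    exact geomRep_simpleRoot_nonpos cs hs
  rcases nonneg_or_nonpos_of_mem_roots hroot with hpos | hneg
  · have hmem : u ∈ inversions cs h := hgh ▸ ⟨⟨hroot, hpos⟩, hgu⟩
    exact hα_neg (hhu ▸ hmem.2)
  · have hmem : -u ∈ inversions cs g :=
      hgh ▸ ⟨⟨neg_mem_roots hroot, neg_nonneg.2 hneg⟩, by
        rw [map_neg, hhu]
        exact neg_nonpos.2 hα.2⟩
    refine ne_zero_of_mem_roots (geomRep_mem_roots g hroot) (le_antisymm hgu ?_)
    simpa using hmem.2

/-! ### Dominant functionals and their stabilizers -/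

/-- A functional is dominant if it lies in the closed fundamental chamber. -/
def Dominant (y : Dual ℝ (B →₀ ℝ)) : Prop := ∀ s, 0 ≤ y (α s)

/-- The type of the face of a functional: the indices of the simple roots on which it vanishes. -/
def zeros (y : Dual ℝ (B →₀ ℝ)) : Set B := {s | y (α s) = 0}

lemma Dominant.nonneg {y : Dual ℝ (B →₀ ℝ)} (hy : Dominant y) {v : B →₀ ℝ} (hv : 0 ≤ v) :
    0 ≤ y v := by
  rw [← Finsupp.sum_single v, map_finsuppSum]
  refine Finset.sum_nonneg fun s _ => ?_
  have hsmul : y (Finsupp.single s (v s)) = v s * y (α s) := by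
    rw [← Finsupp.smul_single_one, map_smul, smul_eq_mul]
  exact (mul_nonneg (hv s) (hy s)).trans_eq hsmul.symm

lemma Dominant.nonpos {y : Dual ℝ (B →₀ ℝ)} (hy : Dominant y) {v : B →₀ ℝ} (hv : v ≤ 0) :
    y v ≤ 0 := by
  simpa using hy.nonneg (neg_nonneg.2 hv)

lemma Dominant.smul {y : Dual ℝ (B →₀ ℝ)} (hy : Dominant y) {a : ℝ} (ha : 0 ≤ a) :
    Dominant (a • y) :=
  fun s => mul_nonneg ha (hy s)

lemma comp_geomRep_mul (y : Dual ℝ (B →₀ ℝ)) (g h : W) : y ∘ₗ ρ (g * h) = (y ∘ₗ ρ g) ∘ₗ ρ h := by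
  rw [map_mul, Module.End.mul_eq_comp, LinearMap.comp_assoc]

lemma comp_geomRep_one (y : Dual ℝ (B →₀ ℝ)) : y ∘ₗ ρ 1 = y := by
  rw [map_one, Module.End.one_eq_id, LinearMap.comp_id]

variable (cs) in
/-- The stabilizer of `y` for the right action of `W` on functionals by precomposition. -/
def stabilizer (y : Dual ℝ (B →₀ ℝ)) : Subgroup W where
  carrier := {g | y ∘ₗ ρ g = y}
  one_mem' := comp_geomRep_one y
  mul_mem' {g h} (hg : y ∘ₗ ρ g = y) (hh : y ∘ₗ ρ h = y) := by
    simp only [Set.mem_ofPred_eq, comp_geomRep_mul, hg, hh]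
  inv_mem' {g} (hg : y ∘ₗ ρ g = y) := by
    change y ∘ₗ ρ g⁻¹ = y
    nth_rw 1 [← hg]
    rw [← comp_geomRep_mul, mul_inv_cancel, comp_geomRep_one]

lemma mem_stabilizer {y : Dual ℝ (B →₀ ℝ)} {g : W} : g ∈ stabilizer cs y ↔ y ∘ₗ ρ g = y :=
  Iff.rfl

lemma simple_mem_stabilizer {y : Dual ℝ (B →₀ ℝ)} {s : B} :
    cs.simple s ∈ stabilizer cs y ↔ s ∈ zeros y := by
  refine ⟨fun h => ?_, fun h => LinearMap.ext fun v => ?_⟩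
  · have hα := LinearMap.congr_fun (mem_stabilizer.1 h) (α s)
    rwa [LinearMap.comp_apply, geomRep_simple_simpleRoot, map_neg, neg_eq_self] at hα
  · rw [LinearMap.comp_apply, geomRep_simple_apply, map_sub, map_smul, show y (α s) = 0 from h,
      smul_zero, sub_zero]

lemma parabolic_le_stabilizer {y : Dual ℝ (B →₀ ℝ)} {T : Set B} :
    cs.parabolic T ≤ stabilizer cs y ↔ T ⊆ zeros y := by
  rw [CoxeterSystem.parabolic, Subgroup.closure_le, Set.image_subset_iff]
  exact forall₂_congr fun s _ => simple_mem_stabilizer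

theorem Dominant.mem_parabolic_of_comp {y : Dual ℝ (B →₀ ℝ)} (hy : Dominant y) {g : W}
    (hg : Dominant (y ∘ₗ ρ g)) : g ∈ cs.parabolic (zeros y) := by
  induction hn : ℓ g using Nat.strong_induction_on generalizing g with
  | _ n ih =>
  subst hn
  rcases eq_or_ne g 1 with rfl | hne
  · exact one_mem _
  obtain ⟨s, hs⟩ := cs.exists_rightDescent_of_ne_one hne
  have hzero : s ∈ zeros (y ∘ₗ ρ g) :=
    le_antisymm (hy.nonpos (geomRep_simpleRoot_nonpos cs hs)) (hg s)
  have hcomp : y ∘ₗ ρ (g * cs.simple s) = y ∘ₗ ρ g := by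
    rw [comp_geomRep_mul, mem_stabilizer.1 (simple_mem_stabilizer.2 hzero)]
  have hmem : g * cs.simple s ∈ cs.parabolic (zeros y) := ih _ hs (hcomp ▸ hg) rfl
  rw [← hcomp, mem_stabilizer.1 (parabolic_le_stabilizer.2 subset_rfl hmem)] at hzero
  exact (Subgroup.mul_mem_cancel_right _
    (Subgroup.subset_closure (Set.mem_image_of_mem _ hzero))).1 hmem

theorem Dominant.stabilizer_eq {y : Dual ℝ (B →₀ ℝ)} (hy : Dominant y) :
    stabilizer cs y = cs.parabolic (zeros y) :=
  le_antisymm (fun _ hg => hy.mem_parabolic_of_comp ((mem_stabilizer.1 hg).symm ▸ hy))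
    (parabolic_le_stabilizer.2 subset_rfl)

lemma Dominant.comp_eq {y : Dual ℝ (B →₀ ℝ)} (hy : Dominant y) {g : W}
    (hg : Dominant (y ∘ₗ ρ g)) : y ∘ₗ ρ g = y :=
  mem_stabilizer.1 (hy.stabilizer_eq.ge (hy.mem_parabolic_of_comp hg))

lemma comp_geomRep_inv_eq_iff {y z : Dual ℝ (B →₀ ℝ)} {g : W} :
    y ∘ₗ ρ g⁻¹ = z ↔ y = z ∘ₗ ρ g := by
  constructor
  · rintro rfl
    rw [← comp_geomRep_mul, inv_mul_cancel, comp_geomRep_one]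
  · rintro rfl
    rw [← comp_geomRep_mul, mul_inv_cancel, comp_geomRep_one]

lemma stabilizer_comp (y : Dual ℝ (B →₀ ℝ)) (g : W) :
    stabilizer cs (y ∘ₗ ρ g) = conjSubgroup g⁻¹ (stabilizer cs y) := by
  ext h
  rw [conjSubgroup_eq_smul, Subgroup.mem_pointwise_smul_iff_inv_smul_mem, map_inv, inv_inv,
    MulAut.smul_def, MulAut.conj_apply, mem_stabilizer, mem_stabilizer, comp_geomRep_mul _ _ g⁻¹,
    comp_geomRep_inv_eq_iff, comp_geomRep_mul]

/-! ### The interior of the Tits cone -/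

variable (cs) in
/-- A functional lies in the interior of the Tits cone if only finitely many positive roots take
nonpositive values at it. -/
def InteriorTits (y : Dual ℝ (B →₀ ℝ)) : Prop := {v ∈ posRoots cs | y v ≤ 0}.Finite

namespace InteriorTits

variable {y z : Dual ℝ (B →₀ ℝ)}

lemma comp (hy : InteriorTits cs y) (g : W) : InteriorTits cs (y ∘ₗ ρ g) := by
  refine ((inversions_finite cs g).union (hy.image (ρ g⁻¹))).subset fun v ⟨hv, hyv⟩ => ?_
  have hroot := geomRep_mem_roots g hv.1
  rcases nonneg_or_nonpos_of_mem_roots hroot with hpos | hneg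
  · exact .inr ⟨ρ g v, ⟨⟨hroot, hpos⟩, hyv⟩, Representation.inv_self_apply _ _ _⟩
  · exact .inl ⟨hv, hneg⟩

lemma add (hy : InteriorTits cs y) (hz : InteriorTits cs z) : InteriorTits cs (y + z) := by
  refine (hy.union hz).subset fun v ⟨hv, hyz⟩ => ?_
  rcases le_or_gt (y v) 0 with h | h
  · exact .inl ⟨hv, h⟩
  · exact .inr ⟨hv, by rw [LinearMap.add_apply] at hyz; linarith⟩

lemma add_dominant (hy : InteriorTits cs y) (hz : Dominant z) : InteriorTits cs (y + z) :=
  hy.subset fun _ ⟨hv, hyz⟩ => ⟨hv, (le_add_of_nonneg_right (hz.nonneg hv.2)).trans hyz⟩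

lemma ncard_neg_comp_simple_lt (hy : InteriorTits cs y) {s : B} (hs : y (α s) < 0) :
    {v ∈ posRoots cs | (y ∘ₗ ρ (cs.simple s)) v < 0}.ncard
      < {v ∈ posRoots cs | y v < 0}.ncard := by
  have hfin : {v ∈ posRoots cs | y v < 0}.Finite := hy.subset fun v ⟨hv, hyv⟩ => ⟨hv, hyv.le⟩
  have hne {v} (hv : y (ρ (cs.simple s) v) < 0) : v ≠ α s := by
    rintro rfl
    rw [geomRep_simple_simpleRoot, map_neg] at hv
    linarith
  have hinj : Function.Injective (ρ (cs.simple s)) := by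
    rw [geomRep_simple]
    exact (simpleReflection M s).injective
  rw [← Set.ncard_image_of_injective _ hinj]
  refine Set.ncard_lt_ncard ((Set.ssubset_iff_of_subset ?_).2 ?_) hfin
  · rintro _ ⟨v, ⟨hv, hyv⟩, rfl⟩
    exact ⟨geomRep_simple_mem_posRoots hv (hne hyv), hyv⟩
  · refine ⟨α s, ⟨simpleRoot_mem_posRoots s, hs⟩, ?_⟩
    rintro ⟨v, ⟨hv, -⟩, hvs⟩
    have hv_neg : v = -α s := hinj (by rw [hvs, map_neg, geomRep_simple_simpleRoot, neg_neg])
    have hle : v ≤ 0 := hv_neg ▸ neg_nonpos.2 (simpleRoot_nonneg s)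
    exact ne_zero_of_mem_roots hv.1 (le_antisymm hle hv.2)

theorem exists_dominant (hy : InteriorTits cs y) : ∃ g : W, Dominant (y ∘ₗ ρ g) := by
  let N (g : W) : ℕ := {v ∈ posRoots cs | (y ∘ₗ ρ g) v < 0}.ncard
  refine ⟨Function.argmin N, fun s => ?_⟩
  by_contra! hs
  refine ((hy.comp _).ncard_neg_comp_simple_lt hs).not_ge ?_
  rw [← comp_geomRep_mul]
  exact Function.argmin_le N _

lemma finite_stabilizer_of_dominant (hy : InteriorTits cs y) (hd : Dominant y) :
    Finite (stabilizer cs y) := by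
  refine (Set.Finite.of_injOn (f := inversions cs) ?_ inversions_injective.injOn
    hy.finite_subsets).to_subtype
  intro g (hg : y ∘ₗ ρ g = y) v ⟨hv, hneg⟩
  refine ⟨hv, ?_⟩
  rw [← hg]
  exact hd.nonpos hneg

lemma isSpherical_zeros (hy : InteriorTits cs y) (hd : Dominant y) : cs.IsSpherical (zeros y) := by
  rw [CoxeterSystem.IsSpherical, ← hd.stabilizer_eq]
  exact hy.finite_stabilizer_of_dominant hd

end InteriorTits

/-- The functional vanishing on the simple roots indexed by `T` and equal to `1` on the others: a
point in the relative interior of the face of type `T` of the fundamental chamber. -/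
noncomputable def faceFunctional (T : Set B) : Dual ℝ (B →₀ ℝ) :=
  Finsupp.linearCombination ℝ (Tᶜ.indicator 1)

lemma faceFunctional_of_mem {T : Set B} {s : B} (h : s ∈ T) : faceFunctional T (α s) = 0 := by
  simp [faceFunctional, h]

lemma faceFunctional_of_notMem {T : Set B} {s : B} (h : s ∉ T) : faceFunctional T (α s) = 1 := by
  simp [faceFunctional, h]

lemma dominant_faceFunctional (T : Set B) : Dominant (faceFunctional T) := by
  intro s
  by_cases h : s ∈ T
  · exact (faceFunctional_of_mem h).ge
  · exact (faceFunctional_of_notMem h).symm ▸ zero_le_one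

lemma zeros_faceFunctional (T : Set B) : zeros (faceFunctional T) = T := by
  ext s
  by_cases h : s ∈ T <;> simp [zeros, faceFunctional_of_mem, faceFunctional_of_notMem, h]

lemma stabilizer_faceFunctional (T : Set B) :
    stabilizer cs (faceFunctional T) = cs.parabolic T := by
  rw [(dominant_faceFunctional T).stabilizer_eq, zeros_faceFunctional]

lemma interiorTits_faceFunctional {T : Set B} (hT : cs.IsSpherical T) :
    InteriorTits cs (faceFunctional T) := by
  have hfin : (cs.parabolic T : Set W).Finite := Set.finite_coe_iff.1 hT
  refine (hfin.biUnion fun g _ => inversions_finite cs g).subset fun v ⟨hv, hnonpos⟩ => ?_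
  have hzero : faceFunctional T v = 0 :=
    le_antisymm hnonpos ((dominant_faceFunctional T).nonneg hv.2)
  obtain ⟨r, hr⟩ := exists_reflection hv.1
  have hmem : r ∈ cs.parabolic T := by
    rw [← stabilizer_faceFunctional, mem_stabilizer]
    exact LinearMap.ext fun u => by simp [hr, hzero]
  refine Set.mem_biUnion hmem ⟨hv, ?_⟩
  rw [hr, cosForm_self_of_mem_roots hv.1, two_smul, sub_add_cancel_left]
  exact neg_nonpos.2 hv.2

lemma parabolic_le_parabolic_iff {T U : Set B} : cs.parabolic T ≤ cs.parabolic U ↔ T ⊆ U := by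
  rw [← stabilizer_faceFunctional U, parabolic_le_stabilizer, zeros_faceFunctional]

lemma isSpherical_empty : cs.IsSpherical ∅ := by
  rw [CoxeterSystem.IsSpherical, CoxeterSystem.parabolic, Set.image_empty, Subgroup.closure_empty]
  infer_instance

theorem exists_interiorTits_le_stabilizer (G : Subgroup W) [Finite G] :
    ∃ y : Dual ℝ (B →₀ ℝ), InteriorTits cs y ∧ G ≤ stabilizer cs y := by
  have := Fintype.ofFinite G
  have hbase (g : W) : InteriorTits cs (faceFunctional ∅ ∘ₗ ρ g) :=
    (interiorTits_faceFunctional isSpherical_empty).comp g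
  refine ⟨∑ g : G, faceFunctional ∅ ∘ₗ ρ g, ?_, fun h hh => LinearMap.ext fun v => ?_⟩
  · exact Finset.sum_induction_nonempty _ (InteriorTits cs) (fun _ _ => InteriorTits.add)
      Finset.univ_nonempty fun g _ => hbase g
  · simp only [LinearMap.comp_apply, LinearMap.sum_apply]
    refine Fintype.sum_equiv (Equiv.mulRight (⟨h, hh⟩ : G)) _ _ fun g => ?_
    simp

/- The functional `x + a • faceFunctional T`, with `-a` the least value of `x` on the simple roots
outside `T`, spans the ray through the last point of the segment from `faceFunctional T` to `x` that
lies in the fundamental chamber. -/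
lemma InteriorTits.exists_dominant_ssubset_zeros {x : Dual ℝ (B →₀ ℝ)} (hx : InteriorTits cs x)
    {T : Set B} (hT : T ⊆ zeros x) {s₀ : B} (hs₀ : s₀ ∉ T) (hxs₀ : x (α s₀) ≤ 0) :
    ∃ z : Dual ℝ (B →₀ ℝ), InteriorTits cs z ∧ Dominant z ∧ T ⊂ zeros z := by
  have hfin : {s | s ∉ T ∧ x (α s) ≤ 0}.Finite :=
    (hx.preimage (Finsupp.single_left_injective one_ne_zero).injOn).subset
      fun s hs => ⟨simpleRoot_mem_posRoots s, hs.2⟩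
  obtain ⟨s, ⟨hsT, hs⟩, hmin⟩ := Set.exists_min_image _ (fun s => x (α s)) hfin ⟨s₀, hs₀, hxs₀⟩
  have hle {t} (ht : t ∉ T) : x (α s) ≤ x (α t) :=
    (le_total (x (α t)) 0).elim (fun h => hmin t ⟨ht, h⟩) hs.trans
  set z : Dual ℝ (B →₀ ℝ) := x + (-x (α s)) • faceFunctional T with hz
  have hz_mem {t} (ht : t ∈ T) : z (α t) = 0 := by
    simp [hz, faceFunctional_of_mem ht, show x (α t) = 0 from hT ht]
  have hz_notMem {t} (ht : t ∉ T) : z (α t) = x (α t) - x (α s) := by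
    simp [hz, faceFunctional_of_notMem ht, sub_eq_add_neg]
  refine ⟨z, hx.add_dominant ((dominant_faceFunctional T).smul (neg_nonneg.2 hs)), fun t => ?_,
    (Set.ssubset_iff_of_subset fun t => hz_mem).2 ⟨s, ?_, hsT⟩⟩
  · by_cases ht : t ∈ T
    · exact (hz_mem ht).ge
    · exact (hz_notMem ht).symm ▸ sub_nonneg.2 (hle ht)
  · exact (hz_notMem hsT).trans (sub_self _)

lemma dominant_and_zeros_eq_of_isMaxSpherical {T : Set B} (hT : cs.IsMaxSpherical T)
    {x : Dual ℝ (B →₀ ℝ)} (hx : InteriorTits cs x) (hTx : cs.parabolic T ≤ stabilizer cs x) :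
    Dominant x ∧ zeros x = T := by
  have hzeros : T ⊆ zeros x := parabolic_le_stabilizer.1 hTx
  have hpos : ∀ s ∉ T, 0 < x (α s) := by
    by_contra! h
    obtain ⟨s, hsT, hs⟩ := h
    obtain ⟨z, hz, hzd, hTz⟩ := hx.exists_dominant_ssubset_zeros hzeros hsT hs
    exact hTz.ne (hT.2 _ (hz.isSpherical_zeros hzd) hTz.subset).symm
  refine ⟨fun s => ?_, subset_antisymm (fun s hs => ?_) hzeros⟩
  · by_cases hs : s ∈ T
    · exact (hzeros hs).ge
    · exact (hpos s hs).le
  · by_contra hsT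
    exact (hpos s hsT).ne' hs

/-! ### Maximal finite subgroups of Coxeter groups -/

theorem isMaxFinite_parabolic_iff {T : Set B} :
    IsMaxFinite (cs.parabolic T) ↔ cs.IsMaxSpherical T := by
  refine ⟨fun h => ⟨h.prop, fun U hU hTU => ?_⟩, fun hT => ⟨hT.1, fun G hG hTG => ?_⟩⟩
  · exact (parabolic_le_parabolic_iff.1 (h.le_of_ge hU (parabolic_le_parabolic_iff.2 hTU))).antisymm
      hTU
  · have : Finite G := hG
    obtain ⟨x, hx, hGx⟩ := exists_interiorTits_le_stabilizer (cs := cs) G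
    obtain ⟨hxd, hxT⟩ := dominant_and_zeros_eq_of_isMaxSpherical hT hx (hTG.trans hGx)
    rwa [hxd.stabilizer_eq, hxT] at hGx

lemma eq_of_parabolic_le_conjSubgroup {T U : Set B} (hT : cs.IsMaxSpherical T)
    (hU : cs.IsSpherical U) {w : W} (h : cs.parabolic T ≤ conjSubgroup w (cs.parabolic U)) :
    T = U := by
  rw [← stabilizer_faceFunctional U, ← inv_inv w, ← stabilizer_comp] at h
  obtain ⟨hdom, hzeros⟩ := dominant_and_zeros_eq_of_isMaxSpherical hT
    ((interiorTits_faceFunctional hU).comp w⁻¹) h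
  rw [← hzeros, (dominant_faceFunctional U).comp_eq hdom, zeros_faceFunctional]

variable (cs) in
theorem exists_eq_conjSubgroup_parabolic_of_isMaxFinite {G : Subgroup W} (hG : IsMaxFinite G) :
    ∃ (w : W) (T : Set B), cs.IsMaxSpherical T ∧ G = conjSubgroup w (cs.parabolic T) := by
  have : Finite G := hG.prop
  obtain ⟨x, hx, hGx⟩ := exists_interiorTits_le_stabilizer (cs := cs) G
  obtain ⟨w, hw⟩ := hx.exists_dominant
  have hconj : cs.parabolic (zeros (x ∘ₗ ρ w)) = conjSubgroup w⁻¹ (stabilizer cs x) := by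
    rw [← hw.stabilizer_eq, stabilizer_comp]
  have hfin : Finite (stabilizer cs x) := by
    have hsph := (hx.comp w).isSpherical_zeros hw
    rw [CoxeterSystem.IsSpherical, hconj] at hsph
    exact (finite_map_mulEquiv_iff (MulAut.conj w⁻¹)).1 hsph
  obtain rfl : G = stabilizer cs x := hG.eq_of_le hfin hGx
  refine ⟨w, _, isMaxFinite_parabolic_iff.1 (hconj ▸ hG.conjSubgroup w⁻¹), ?_⟩
  rw [hconj, ← conjSubgroup_mul, mul_inv_cancel, conjSubgroup_one]

theorem existsUnique_conjSubgroup_parabolic {G : Subgroup W} (hG : IsMaxFinite G) :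
    ∃! T : Set B, cs.IsMaxSpherical T ∧ ∃ w : W, G = conjSubgroup w (cs.parabolic T) := by
  obtain ⟨w, T, hT, rfl⟩ := exists_eq_conjSubgroup_parabolic_of_isMaxFinite cs hG
  refine ⟨T, ⟨hT, w, rfl⟩, fun U ⟨hU, v, hv⟩ => ?_⟩
  refine eq_of_parabolic_le_conjSubgroup hU hT.1 (w := v⁻¹ * w) ?_
  rw [conjSubgroup_mul, hv, ← conjSubgroup_mul, inv_mul_cancel, conjSubgroup_one]

end GeomRep

end GeometricRepresentation

theorem exists_unique_maxSpherical_conj_general {B B' W W' : Type*} [Group W] [Group W']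
    {M : CoxeterMatrix B} (cs : CoxeterSystem M W)
    {M' : CoxeterMatrix B'} (cs' : CoxeterSystem M' W')
    (φ : W ≃* W') (T : Set B) (hT : cs.IsMaxSpherical T) :
    ∃! T' : Set B', cs'.IsMaxSpherical T' ∧
      ∃ w' : W', Subgroup.map φ.toMonoidHom (cs.parabolic T)
        = conjSubgroup w' (cs'.parabolic T') :=
  GeometricRepresentation.existsUnique_conjSubgroup_parabolic
    ((GeometricRepresentation.isMaxFinite_parabolic_iff.2 hT).map φ)

/-- If `φ : W → W'` is an isomorphism of Coxeter groups, then for each maximal spherical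
subset `T ⊆ S` there is a unique maximal spherical subset `T' ⊆ S'` such that
`φ(W_T) = w' W'_{T'} w'⁻¹` for some `w' ∈ W'`. -/
theorem exists_unique_maxSpherical_conj {B B' : Type*} [Fintype B] [Fintype B']
    {W W' : Type*} [Group W] [Group W']
    {M : CoxeterMatrix B} (cs : CoxeterSystem M W)
    {M' : CoxeterMatrix B'} (cs' : CoxeterSystem M' W')
    (φ : W ≃* W') (T : Set B) (hT : cs.IsMaxSpherical T) :
    ∃! T' : Set B', cs'.IsMaxSpherical T' ∧
      ∃ w' : W', Subgroup.map φ.toMonoidHom (cs.parabolic T)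
        = conjSubgroup w' (cs'.parabolic T') :=
  exists_unique_maxSpherical_conj_general cs cs' φ T hT
end

section
/- Let (W,S) be a Coxeter system satisfying: (0) for all s,t ∈ S with m(s,t) even, m(s,t) = 2; (1) for all s ≠ t ∈ S with m(s,t) odd, {s,t} is a maximal spherical subset of S. Let w, v, x ∈ W, and let w = s_1⋯s_l and v = t_1⋯t_m (s_i, t_j ∈ S) be reduced representations (i.e., ℓ(w) = l and ℓ(v) = m). Suppose that the parabolic subgroup W_{{s_1,…,s_l}} is isomorphic to (ℤ/2ℤ)^l, that W_{{t_1,…,t_m}} is isomorphic to (ℤ/2ℤ)^m, and that l ≥ 2. If w = x v x^{-1}, then w = v. -/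
/-!
Write `I` and `J` for the sets of letters of `w` and `v`, and argue by induction on `ℓ(x)`. A left
descent of `x` in `I` commutes with `w`, and a right descent of `x` in `J` commutes with `v`, so
either can be cancelled from `x`. If neither exists, then `ℓ(wx) = ℓ(w) + ℓ(x)` and
`ℓ(xv) = ℓ(x) + ℓ(v)`; hence every `i ∈ I`, and also every left descent `s` of `x`, is a left
descent of `wx = xv`. A set of left descents of a single element is spherical, so `I ∪ {s}` is
spherical. As it has at least three elements, condition (1) rules out that `m(s, i)` is odd for
some `i ∈ I`, and condition (0) then says that `s` commutes with `I`. So `s` can be cancelled too.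

The facts about lengths rest on the exchange condition, which holds because the parity of the
multiplicity of a reflection in the inversion sequence of a word depends only on the product of the
word: `W` acts on `W → ZMod 2` by affine maps whose constant part records this parity.
-/

namespace Coxeter

variable {B W : Type*} [Group W] {M : CoxeterMatrix B} (cs : CoxeterSystem M W)

/-! ### The exchange condition -/

open Classical in
/-- The affine map by which the simple reflection `s i` acts on `ZMod 2`-valued functions on `W`;
its linear part is translation along conjugation by `s i`, and its constant part is the indicator
of `s i`. It is the tool for counting inversions modulo two. The functions live on all of `W`, not
only on the reflections, so that no proof of being a reflection has to be carried. -/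
noncomputable def reflectionFlip (i : B) : Function.End (W → ZMod 2) :=
  fun f t ↦ (if t = cs.simple i then 1 else 0) + f (cs.simple i * t * cs.simple i)

open Classical in
theorem prod_map_reflectionFlip_apply (ω : List B) (f : W → ZMod 2) (t : W) :
    (ω.map (reflectionFlip cs)).prod f t =
      (cs.leftInvSeq ω).count t + f ((cs.wordProd ω)⁻¹ * t * cs.wordProd ω) := by
  induction ω generalizing t with
  | nil => simp [Function.End.one_def]
  | cons i ω ih =>
    have count_map_conj : ((cs.leftInvSeq ω).map (MulAut.conj (cs.simple i))).count t =
        (cs.leftInvSeq ω).count (cs.simple i * t * cs.simple i) := by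
      have ht : t = MulAut.conj (cs.simple i) (cs.simple i * t * cs.simple i) := by
        simp [mul_assoc]
      conv_lhs => rw [ht]
      exact List.count_map_of_injective _ _ (MulAut.conj (cs.simple i)).injective _
    calc ((i :: ω).map (reflectionFlip cs)).prod f t
        = (if t = cs.simple i then 1 else 0) +
            (ω.map (reflectionFlip cs)).prod f (cs.simple i * t * cs.simple i) := by
          rw [List.map_cons, List.prod_cons]; rfl
      _ = _ := by
          rw [ih, CoxeterSystem.leftInvSeq, List.count_cons, count_map_conj]
          simp only [beq_iff_eq, eq_comm (a := t), cs.wordProd_cons, mul_inv_rev, cs.inv_simple,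
            mul_assoc, Nat.cast_add, Nat.cast_ite, Nat.cast_one, Nat.cast_zero]
          ring

theorem prod_map_alternatingWord_two_mul {G : Type*} [Monoid G] (f : B → G) (i j : B) (p : ℕ) :
    ((CoxeterSystem.alternatingWord i j (2 * p)).map f).prod = (f i * f j) ^ p := by
  induction p with
  | zero => simp [CoxeterSystem.alternatingWord]
  | succ p ih =>
    rw [mul_add_one, CoxeterSystem.alternatingWord, CoxeterSystem.alternatingWord]
    simp [ih, pow_succ]

theorem leftInvSeq_alternatingWord_two_mul (i j : B) (p : ℕ) :
    cs.leftInvSeq (CoxeterSystem.alternatingWord i j (2 * p)) =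
      (List.range (2 * p)).map fun k ↦ cs.simple i * (cs.simple j * cs.simple i) ^ k := by
  refine List.ext_getElem (by simp) fun k hk _ ↦ ?_
  rw [cs.getElem_leftInvSeq_alternatingWord i j p k (by simpa using hk),
    cs.prod_alternatingWord_eq_mul_pow]
  simp [show (2 * k + 1) / 2 = k by omega]

open Classical in
theorem even_count_leftInvSeq_alternatingWord (i j : B) (t : W) :
    Even ((cs.leftInvSeq (CoxeterSystem.alternatingWord i j (2 * M i j))).count t) := by
  -- The inversions of `(s i * s j) ^ M i j` run twice through the same period.
  rw [leftInvSeq_alternatingWord_two_mul, two_mul, List.range_add, List.map_append, List.map_map,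
    List.count_append]
  simp [Function.comp_def, pow_add]

theorem isLiftable_reflectionFlip : M.IsLiftable (reflectionFlip cs) := by
  classical
  intro i j
  funext f t
  have hprod : cs.wordProd (CoxeterSystem.alternatingWord i j (2 * M i j)) = 1 := by
    simp [cs.prod_alternatingWord_eq_mul_pow]
  rw [← prod_map_alternatingWord_two_mul, prod_map_reflectionFlip_apply, hprod,
    (even_count_leftInvSeq_alternatingWord cs i j t).natCast_zmod_two]
  simp [Function.End.one_def]

open Classical in
theorem natCast_count_leftInvSeq_congr {ω ω' : List B} (h : cs.wordProd ω = cs.wordProd ω')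
    (t : W) :
    ((cs.leftInvSeq ω).count t : ZMod 2) = (cs.leftInvSeq ω').count t := by
  let φ : W →* Function.End (W → ZMod 2) :=
    cs.lift ⟨reflectionFlip cs, isLiftable_reflectionFlip cs⟩
  have hφ (α : List B) : φ (cs.wordProd α) 0 t = (cs.leftInvSeq α).count t := by
    have hsimple : φ ∘ cs.simple = reflectionFlip cs := funext fun i ↦ cs.lift_apply_simple _ i
    rw [CoxeterSystem.wordProd, map_list_prod, List.map_map, hsimple,
      prod_map_reflectionFlip_apply]
    simp
  rw [← hφ, ← hφ, h]

theorem isReduced_cons {i : B} {ω : List B} :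
    cs.IsReduced (i :: ω) ↔ cs.IsReduced ω ∧ ¬cs.IsLeftDescent (cs.wordProd ω) i := by
  have hle := cs.length_wordProd_le ω
  have hstep := cs.length_simple_mul (cs.wordProd ω) i
  rw [cs.not_isLeftDescent_iff, CoxeterSystem.IsReduced, CoxeterSystem.IsReduced, cs.wordProd_cons,
    List.length_cons]
  omega

theorem simple_mem_leftInvSeq {ω : List B} {i : B} (h : cs.IsLeftDescent (cs.wordProd ω) i) :
    cs.simple i ∈ cs.leftInvSeq ω := by
  classical
  obtain ⟨α, hα, hαω⟩ := cs.exists_isReduced (cs.simple i * cs.wordProd ω)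
  have hprod : cs.wordProd (i :: α) = cs.wordProd ω := by
    rw [cs.wordProd_cons, ← hαω, cs.simple_mul_simple_cancel_left]
  have hred : cs.IsReduced (i :: α) :=
    (isReduced_cons cs).2 ⟨hα, hαω ▸ cs.isLeftDescent_iff_not_isLeftDescent_mul.1 h⟩
  have hcount : (cs.leftInvSeq (i :: α)).count (cs.simple i) = 1 :=
    List.count_eq_one_of_mem hred.nodup_leftInvSeq List.mem_cons_self
  by_contra hmem
  have hparity := natCast_count_leftInvSeq_congr cs hprod (cs.simple i)
  rw [hcount, List.count_eq_zero_of_not_mem hmem] at hparity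
  simp at hparity

theorem exists_simple_mul_wordProd_eq_wordProd_eraseIdx {ω : List B} {i : B}
    (h : cs.IsLeftDescent (cs.wordProd ω) i) :
    ∃ k < ω.length, cs.simple i * cs.wordProd ω = cs.wordProd (ω.eraseIdx k) := by
  obtain ⟨k, hk, hki⟩ := List.mem_iff_getElem.mp (simple_mem_leftInvSeq cs h)
  refine ⟨k, by simpa using hk, ?_⟩
  rw [← cs.getD_leftInvSeq_mul_wordProd, List.getD_eq_getElem _ 1 hk, hki]

theorem length_wordProd_eraseIdx_lt {ω : List B} (hω : cs.IsReduced ω) {k : ℕ}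
    (hk : k < ω.length) : cs.length (cs.wordProd (ω.eraseIdx k)) < cs.length (cs.wordProd ω) := by
  have hle := cs.length_wordProd_le (ω.eraseIdx k)
  have hlen := List.length_eraseIdx_add_one hk
  rw [hω.eq]
  omega

theorem length_conj_simple_mul_lt_of_isLeftDescent_mul {u q : W} {i : B}
    (h : cs.IsLeftDescent (u * q) i) (hu : ¬cs.IsLeftDescent u i) :
    cs.length (u⁻¹ * cs.simple i * u * q) < cs.length q := by
  obtain ⟨α, hα, rfl⟩ := cs.exists_isReduced u
  obtain ⟨β, hβ, rfl⟩ := cs.exists_isReduced q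
  rw [← cs.wordProd_append] at h
  obtain ⟨k, hk, hexch⟩ := exists_simple_mul_wordProd_eq_wordProd_eraseIdx cs h
  rw [cs.wordProd_append] at hexch
  by_cases hkα : k < α.length
  · rw [List.eraseIdx_append_of_lt_length hkα, cs.wordProd_append, ← mul_assoc,
      mul_left_inj] at hexch
    refine absurd ?_ hu
    rw [CoxeterSystem.IsLeftDescent, hexch]
    exact length_wordProd_eraseIdx_lt cs hα hkα
  · rw [List.eraseIdx_append_of_length_le (not_lt.1 hkα), cs.wordProd_append] at hexch
    rw [mul_assoc, mul_assoc, hexch, inv_mul_cancel_left]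
    rw [List.length_append] at hk
    exact length_wordProd_eraseIdx_lt cs hβ (by omega)

/-! ### Standard parabolic subgroups -/

theorem simple_mem_parabolic {T : Set B} {i : B} (hi : i ∈ T) : cs.simple i ∈ cs.parabolic T :=
  Subgroup.subset_closure ⟨i, hi, rfl⟩

theorem wordProd_mem_parabolic {T : Set B} {ω : List B} (hω : ∀ i ∈ ω, i ∈ T) :
    cs.wordProd ω ∈ cs.parabolic T :=
  list_prod_mem <| by simpa using fun i hi ↦ simple_mem_parabolic cs (hω i hi)

theorem exists_isReduced_simple_mul {ω : List B} (hω : cs.IsReduced ω) (i : B) :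
    ∃ α ⊆ i :: ω, cs.IsReduced α ∧ cs.simple i * cs.wordProd ω = cs.wordProd α := by
  by_cases hi : cs.IsLeftDescent (cs.wordProd ω) i
  · obtain ⟨k, hk, hexch⟩ := exists_simple_mul_wordProd_eq_wordProd_eraseIdx cs hi
    refine ⟨ω.eraseIdx k, fun j hj ↦ List.mem_cons_of_mem _ (List.mem_of_mem_eraseIdx hj), ?_,
      hexch⟩
    have hlen := List.length_eraseIdx_add_one hk
    rw [cs.isLeftDescent_iff, hexch, hω.eq] at hi
    rw [CoxeterSystem.IsReduced]
    omega
  · exact ⟨i :: ω, List.Subset.refl _, (isReduced_cons cs).2 ⟨hω, hi⟩, (cs.wordProd_cons i ω).symm⟩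

theorem exists_isReduced_of_mem_parabolic {T : Set B} {u : W} (hu : u ∈ cs.parabolic T) :
    ∃ α : List B, (∀ i ∈ α, i ∈ T) ∧ cs.IsReduced α ∧ u = cs.wordProd α := by
  have simple_mul {i : B} (hi : i ∈ T) {z : W}
      (hz : ∃ α : List B, (∀ i ∈ α, i ∈ T) ∧ cs.IsReduced α ∧ z = cs.wordProd α) :
      ∃ α : List B, (∀ i ∈ α, i ∈ T) ∧ cs.IsReduced α ∧ cs.simple i * z = cs.wordProd α := by
    obtain ⟨α, hαT, hα, rfl⟩ := hz
    obtain ⟨β, hβα, hβ, hprod⟩ := exists_isReduced_simple_mul cs hα i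
    exact ⟨β, fun j hj ↦ List.forall_mem_cons.2 ⟨hi, hαT⟩ j (hβα hj), hβ, hprod⟩
  induction hu using Subgroup.closure_induction_left with
  | one => exact ⟨[], by simp, by simp [CoxeterSystem.IsReduced], by simp⟩
  | mul_left s hs z _ ih =>
    obtain ⟨i, hi, rfl⟩ := hs
    exact simple_mul hi ih
  | inv_mul_cancel s hs z _ ih =>
    obtain ⟨i, hi, rfl⟩ := hs
    rw [cs.inv_simple]
    exact simple_mul hi ih

theorem finite_setOf_wordProd_of_finite_image {T : Set B} (hT : (cs.simple '' T).Finite) (n : ℕ) :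
    {u | ∃ α : List B, (∀ i ∈ α, i ∈ T) ∧ α.length ≤ n ∧ u = cs.wordProd α}.Finite := by
  have : Finite (cs.simple '' T) := hT
  refine ((List.finite_length_le (cs.simple '' T) n).image
    fun l ↦ (l.map Subtype.val).prod).subset ?_
  rintro _ ⟨α, hαT, hαn, rfl⟩
  let letters : List (cs.simple '' T) :=
    α.attach.map fun i ↦ ⟨cs.simple i.1, i.1, hαT i.1 i.2, rfl⟩
  refine ⟨letters, by simpa [letters] using hαn, ?_⟩
  simp [letters, CoxeterSystem.wordProd, Function.comp_def]

theorem finite_image_simple_of_forall_isLeftDescent {T : Set B} {y : W}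
    (hT : ∀ i ∈ T, cs.IsLeftDescent y i) : (cs.simple '' T).Finite := by
  obtain ⟨ω, -, rfl⟩ := cs.exists_isReduced y
  refine (cs.leftInvSeq ω).finite_toSet.subset ?_
  rintro _ ⟨i, hi, rfl⟩
  exact simple_mem_leftInvSeq cs (hT i hi)

theorem length_add_length_inv_mul_of_forall_isLeftDescent {T : Set B} {y u : W}
    (hT : ∀ i ∈ T, cs.IsLeftDescent y i) (hu : u ∈ cs.parabolic T) :
    cs.length u + cs.length (u⁻¹ * y) = cs.length y := by
  obtain ⟨α, hαT, hα, rfl⟩ := exists_isReduced_of_mem_parabolic cs hu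
  refine le_antisymm ?_ (by simpa using cs.length_mul_le (cs.wordProd α) ((cs.wordProd α)⁻¹ * y))
  clear hu
  induction α with
  | nil => simp
  | cons i α ih =>
    obtain ⟨hi, hαT⟩ := List.forall_mem_cons.1 hαT
    obtain ⟨hα', hdesc⟩ := (isReduced_cons cs).1 hα
    have hlt := length_conj_simple_mul_lt_of_isLeftDescent_mul cs (u := cs.wordProd α)
      (q := (cs.wordProd α)⁻¹ * y) (by simpa using hT i hi) hdesc
    have heq : (cs.wordProd (i :: α))⁻¹ * y =
        (cs.wordProd α)⁻¹ * cs.simple i * cs.wordProd α * ((cs.wordProd α)⁻¹ * y) := by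
      simp [cs.wordProd_cons, mul_assoc]
    have ih := ih hαT hα'
    rw [hα'.eq] at ih
    rw [hα.eq, heq, List.length_cons]
    omega

theorem isSpherical_of_forall_isLeftDescent {T : Set B} {y : W}
    (hT : ∀ i ∈ T, cs.IsLeftDescent y i) : cs.IsSpherical T := by
  refine Set.Finite.subset (finite_setOf_wordProd_of_finite_image cs
    (finite_image_simple_of_forall_isLeftDescent cs hT) (cs.length y)) fun u hu ↦ ?_
  obtain ⟨α, hαT, hα, rfl⟩ := exists_isReduced_of_mem_parabolic cs hu
  have hlen := length_add_length_inv_mul_of_forall_isLeftDescent cs hT hu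
  exact ⟨α, hαT, by rw [← hα.eq]; omega, rfl⟩

theorem length_mul_of_forall_length_le {T : Set B} {x u : W}
    (hx : ∀ z ∈ cs.parabolic T, cs.length x ≤ cs.length (z * x)) (hu : u ∈ cs.parabolic T) :
    cs.length (u * x) = cs.length u + cs.length x := by
  obtain ⟨α, hαT, hα, rfl⟩ := exists_isReduced_of_mem_parabolic cs hu
  clear hu
  induction α with
  | nil => simp
  | cons i α ih =>
    obtain ⟨hi, hαT⟩ := List.forall_mem_cons.1 hαT
    obtain ⟨hα', hdesc⟩ := (isReduced_cons cs).1 hα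
    have hαmem := wordProd_mem_parabolic cs hαT
    have hnot : ¬cs.IsLeftDescent (cs.wordProd α * x) i := fun h ↦
      (length_conj_simple_mul_lt_of_isLeftDescent_mul cs h hdesc).not_ge <| hx _ <|
        mul_mem (mul_mem (inv_mem hαmem) (simple_mem_parabolic cs hi)) hαmem
    rw [cs.wordProd_cons, mul_assoc, cs.not_isLeftDescent_iff.1 hnot, ih hαT hα',
      cs.not_isLeftDescent_iff.1 hdesc]
    omega

theorem isLeftDescent_mul_right {u q : W} {i : B} (hu : cs.IsLeftDescent u i)
    (hlen : cs.length (u * q) = cs.length u + cs.length q) : cs.IsLeftDescent (u * q) i := by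
  have hle := cs.length_mul_le (cs.simple i * u) q
  rw [CoxeterSystem.IsLeftDescent] at hu ⊢
  rw [← mul_assoc]
  omega

theorem length_le_length_mul_of_forall_not_isLeftDescent {T : Set B} {x : W}
    (hx : ∀ i ∈ T, ¬cs.IsLeftDescent x i) {u : W} (hu : u ∈ cs.parabolic T) :
    cs.length x ≤ cs.length (u * x) := by
  let P : Set W := cs.parabolic T
  have hP : P.Nonempty := ⟨u, hu⟩
  let z := Function.argminOn (fun z ↦ cs.length (z * x)) P hP
  have hz : z ∈ cs.parabolic T := Function.argminOn_mem _ P hP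
  have hmin (z' : W) (hz' : z' ∈ cs.parabolic T) : cs.length (z * x) ≤ cs.length (z' * x) :=
    Function.argminOn_le (fun z ↦ cs.length (z * x)) P hz'
  obtain ⟨α, hαT, hα, hzα⟩ := exists_isReduced_of_mem_parabolic cs (inv_mem hz)
  cases α with
  | nil =>
    have hz1 : z = 1 := by simpa using hzα
    simpa [hz1] using hmin u hu
  | cons i α =>
    -- `z⁻¹` is a nontrivial prefix of `x = z⁻¹ * (z * x)`, so its first letter is a descent of `x`.
    have hdesc : cs.IsLeftDescent z⁻¹ i := by
      rw [cs.isLeftDescent_iff_not_isLeftDescent_mul, hzα, cs.wordProd_cons,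
        cs.simple_mul_simple_cancel_left]
      exact ((isReduced_cons cs).1 hα).2
    have hlen : cs.length (z⁻¹ * (z * x)) = cs.length z⁻¹ + cs.length (z * x) :=
      length_mul_of_forall_length_le cs
        (fun z' hz' ↦ by simpa [mul_assoc] using hmin (z' * z) (mul_mem hz' hz)) (inv_mem hz)
    refine absurd ?_ (hx i (hαT i List.mem_cons_self))
    simpa using isLeftDescent_mul_right cs hdesc hlen

theorem length_mul_of_forall_not_isLeftDescent {T : Set B} {x u : W}
    (hx : ∀ i ∈ T, ¬cs.IsLeftDescent x i) (hu : u ∈ cs.parabolic T) :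
    cs.length (u * x) = cs.length u + cs.length x :=
  length_mul_of_forall_length_le cs
    (fun _ hz ↦ length_le_length_mul_of_forall_not_isLeftDescent cs hx hz) hu

theorem length_mul_of_forall_not_isRightDescent {T : Set B} {x u : W}
    (hx : ∀ i ∈ T, ¬cs.IsRightDescent x i) (hu : u ∈ cs.parabolic T) :
    cs.length (x * u) = cs.length x + cs.length u := by
  have hlen := length_mul_of_forall_not_isLeftDescent cs (x := x⁻¹)
    (fun i hi ↦ (cs.isLeftDescent_inv_iff).not.2 (hx i hi)) (inv_mem hu)
  rw [← mul_inv_rev, cs.length_inv, cs.length_inv, cs.length_inv] at hlen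
  rw [hlen, add_comm]

/-! ### Words in commuting letters -/

theorem leftInvSeq_eq_map_simple_of_commute {ω : List B}
    (hcomm : ∀ i ∈ ω, ∀ j ∈ ω, Commute (cs.simple i) (cs.simple j)) :
    cs.leftInvSeq ω = ω.map cs.simple := by
  induction ω with
  | nil => rfl
  | cons i ω ih =>
    have ih := ih fun j hj k hk ↦ hcomm j (List.mem_cons_of_mem i hj) k (List.mem_cons_of_mem i hk)
    rw [CoxeterSystem.leftInvSeq, ih, List.map_map, List.map_cons]
    refine congrArg _ (List.map_congr_left fun j hj ↦ ?_)
    have hij := hcomm i List.mem_cons_self j (List.mem_cons_of_mem i hj)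
    rw [Function.comp_apply, MulAut.conj_apply, hij.eq, mul_inv_cancel_right]

theorem nodup_of_isReduced_of_commute {ω : List B} (hω : cs.IsReduced ω)
    (hcomm : ∀ i ∈ ω, ∀ j ∈ ω, Commute (cs.simple i) (cs.simple j)) : ω.Nodup :=
  .of_map cs.simple <| leftInvSeq_eq_map_simple_of_commute cs hcomm ▸ hω.nodup_leftInvSeq

theorem isLeftDescent_wordProd_of_commute {ω : List B} (hω : cs.IsReduced ω)
    (hcomm : ∀ i ∈ ω, ∀ j ∈ ω, Commute (cs.simple i) (cs.simple j)) {i : B} (hi : i ∈ ω) :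
    cs.IsLeftDescent (cs.wordProd ω) i := by
  rw [← cs.isLeftInversion_simple_iff_isLeftDescent]
  refine cs.isLeftInversion_of_mem_leftInvSeq hω ?_
  rw [leftInvSeq_eq_map_simple_of_commute cs hcomm]
  exact List.mem_map_of_mem hi

theorem commute_of_mem_parabolic {T : Set B} {a w : W} (ha : ∀ i ∈ T, Commute a (cs.simple i))
    (hw : w ∈ cs.parabolic T) : Commute a w := by
  have hle : cs.parabolic T ≤ Subgroup.centralizer {a} := by
    rw [CoxeterSystem.parabolic, Subgroup.closure_le]
    rintro _ ⟨i, hi, rfl⟩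
    exact Subgroup.mem_centralizer_singleton_iff.2 (ha i hi).symm.eq
  exact (Subgroup.mem_centralizer_singleton_iff.1 (hle hw)).symm

theorem commute_simple_of_mem_parabolic {T : Set B} [IsMulCommutative (cs.parabolic T)] {a : W}
    (ha : a ∈ cs.parabolic T) {i : B} (hi : i ∈ T) : Commute (cs.simple i) a :=
  setLike_mul_comm (simple_mem_parabolic cs hi) ha

/-! ### Conjugate elements of parabolic subgroups -/

theorem isSpherical_insert_of_isLeftDescent {I J : Set B} {w v x : W} {s : B}
    (hw : w ∈ cs.parabolic I) (hwdesc : ∀ i ∈ I, cs.IsLeftDescent w i)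
    (hv : v ∈ cs.parabolic J) (hx : SemiconjBy x v w)
    (hxI : ∀ i ∈ I, ¬cs.IsLeftDescent x i) (hxJ : ∀ j ∈ J, ¬cs.IsRightDescent x j)
    (hs : cs.IsLeftDescent x s) : cs.IsSpherical (insert s I) := by
  refine isSpherical_of_forall_isLeftDescent cs (y := x * v) <| Set.forall_mem_insert.2 ⟨?_, ?_⟩
  · exact isLeftDescent_mul_right cs hs (length_mul_of_forall_not_isRightDescent cs hxJ hv)
  · rw [hx.eq]
    exact fun i hi ↦
      isLeftDescent_mul_right cs (hwdesc i hi) (length_mul_of_forall_not_isLeftDescent cs hxI hw)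

section MaximalDihedral

variable
  (h0 : ∀ i j : B, orderOf (cs.simple i * cs.simple j) ≠ 0 →
    Even (orderOf (cs.simple i * cs.simple j)) → orderOf (cs.simple i * cs.simple j) = 2)
  (h1 : ∀ i j : B, i ≠ j → Odd (orderOf (cs.simple i * cs.simple j)) →
    cs.IsMaxSpherical {i, j})

include h0 h1

theorem commute_of_isSpherical {T : Set B} (hT : cs.IsSpherical T) {i j k : B}
    (hi : i ∈ T) (hj : j ∈ T) (hk : k ∈ T) (hki : k ≠ i) (hkj : k ≠ j) :
    Commute (cs.simple i) (cs.simple j) := by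
  have : Finite (cs.parabolic T) := hT
  obtain rfl | hij := eq_or_ne i j
  · exact Commute.refl _
  have horder : orderOf (cs.simple i * cs.simple j) ≠ 0 :=
    let z : cs.parabolic T :=
      ⟨_, mul_mem (simple_mem_parabolic cs hi) (simple_mem_parabolic cs hj)⟩
    Subgroup.orderOf_coe z ▸ (orderOf_pos z).ne'
  obtain heven | hodd := Nat.even_or_odd (orderOf (cs.simple i * cs.simple j))
  · have hsq := pow_orderOf_eq_one (cs.simple i * cs.simple j)
    rw [h0 i j horder heven, sq, mul_eq_one_iff_eq_inv, mul_inv_rev, cs.inv_simple,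
      cs.inv_simple] at hsq
    exact hsq
  · have hTij : T = {i, j} := (h1 i j hij hodd).2 T hT (Set.pair_subset hi hj)
    rw [hTij] at hk
    exact absurd hk (by simp [hki, hkj])

variable {I J : Set B} {w v : W}
  (hI : I.Nontrivial) (hw : w ∈ cs.parabolic I) (hwdesc : ∀ i ∈ I, cs.IsLeftDescent w i)
  (hwcomm : ∀ i ∈ I, Commute (cs.simple i) w)
  (hv : v ∈ cs.parabolic J) (hvcomm : ∀ j ∈ J, Commute (cs.simple j) v)

include hI hw hwdesc hwcomm hv hvcomm

theorem exists_length_lt_semiconjBy {x : W} (hx : SemiconjBy x v w) (hx1 : x ≠ 1) :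
    ∃ x', cs.length x' < cs.length x ∧ SemiconjBy x' v w := by
  suffices h : (∃ s, cs.IsLeftDescent x s ∧ Commute (cs.simple s) w) ∨
      ∃ s, cs.IsRightDescent x s ∧ Commute (cs.simple s) v by
    obtain ⟨s, hs, hcomm⟩ | ⟨s, hs, hcomm⟩ := h
    · exact ⟨cs.simple s * x, hs, hcomm.semiconjBy.mul_left hx⟩
    · exact ⟨x * cs.simple s, hs, hx.mul_left hcomm.semiconjBy⟩
  by_cases hxI : ∃ i ∈ I, cs.IsLeftDescent x i
  · obtain ⟨i, hi, hdesc⟩ := hxI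
    exact .inl ⟨i, hdesc, hwcomm i hi⟩
  by_cases hxJ : ∃ j ∈ J, cs.IsRightDescent x j
  · obtain ⟨j, hj, hdesc⟩ := hxJ
    exact .inr ⟨j, hdesc, hvcomm j hj⟩
  push Not at hxI hxJ
  obtain ⟨s, hs⟩ := cs.exists_leftDescent_of_ne_one hx1
  have hsph : cs.IsSpherical (insert s I) :=
    isSpherical_insert_of_isLeftDescent cs hw hwdesc hv hx hxI hxJ hs
  refine .inl ⟨s, hs, commute_of_mem_parabolic cs (fun i hi ↦ ?_) hw⟩
  obtain ⟨k, hk, hki⟩ := hI.exists_ne i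
  have hks : k ≠ s := by
    rintro rfl
    exact hxI k hk hs
  exact commute_of_isSpherical cs h0 h1 hsph (Set.mem_insert s I) (Set.mem_insert_of_mem s hi)
    (Set.mem_insert_of_mem s hk) hks hki

theorem eq_of_semiconjBy {x : W} (hx : SemiconjBy x v w) : w = v := by
  obtain ⟨n, hn⟩ : ∃ n, cs.length x = n := ⟨_, rfl⟩
  induction n using Nat.strong_induction_on generalizing x with
  | _ n ih =>
    obtain rfl | hx1 := eq_or_ne x 1
    · simpa using hx.eq.symm
    · obtain ⟨x', hlt, hx'⟩ := exists_length_lt_semiconjBy cs h0 h1 hI hw hwdesc hwcomm hv hvcomm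
        hx hx1
      exact ih _ (hn ▸ hlt) hx' rfl

end MaximalDihedral

end Coxeter

theorem eq_of_conj_of_parabolic_z2_general {B W : Type*} [Group W]
    {M : CoxeterMatrix B} (cs : CoxeterSystem M W)
    (h0 : ∀ i j : B, orderOf (cs.simple i * cs.simple j) ≠ 0 →
      Even (orderOf (cs.simple i * cs.simple j)) → orderOf (cs.simple i * cs.simple j) = 2)
    (h1 : ∀ i j : B, i ≠ j → Odd (orderOf (cs.simple i * cs.simple j)) →
      cs.IsMaxSpherical {i, j})
    (x : W) (ω ν : List B) (hω : cs.IsReduced ω)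
    [IsMulCommutative (cs.parabolic {b | b ∈ ω})] [IsMulCommutative (cs.parabolic {b | b ∈ ν})]
    (hl : 2 ≤ ω.length) (hconj : cs.wordProd ω = x * cs.wordProd ν * x⁻¹) :
    cs.wordProd ω = cs.wordProd ν := by
  have hw : cs.wordProd ω ∈ cs.parabolic {b | b ∈ ω} :=
    Coxeter.wordProd_mem_parabolic cs fun _ hi ↦ hi
  have hv : cs.wordProd ν ∈ cs.parabolic {b | b ∈ ν} :=
    Coxeter.wordProd_mem_parabolic cs fun _ hi ↦ hi
  have hletters : ∀ i ∈ ω, ∀ j ∈ ω, Commute (cs.simple i) (cs.simple j) := fun i hi j hj ↦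
    Coxeter.commute_simple_of_mem_parabolic cs (T := {b | b ∈ ω})
      (Coxeter.simple_mem_parabolic cs hj) hi
  have hnontrivial : {b | b ∈ ω}.Nontrivial :=
    have hnodup := Coxeter.nodup_of_isReduced_of_commute cs hω hletters
    ⟨ω[0], List.getElem_mem _, ω[1], List.getElem_mem _, by simp [hnodup.getElem_inj_iff]⟩
  exact Coxeter.eq_of_semiconjBy cs h0 h1 hnontrivial hw
    (fun _ hi ↦ Coxeter.isLeftDescent_wordProd_of_commute cs hω hletters hi)
    (fun _ hi ↦ Coxeter.commute_simple_of_mem_parabolic cs hw hi) hv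
    (fun _ hj ↦ Coxeter.commute_simple_of_mem_parabolic cs hv hj)
    (eq_mul_inv_iff_mul_eq.1 hconj).symm

/-- Let `(W,S)` satisfy conditions (0) and (1). Let `w = s_1 ⋯ s_l` and `v = t_1 ⋯ t_m`
be reduced representations with `W_{{s_1,…,s_l}} ≅ (ℤ/2ℤ)^l`, `W_{{t_1,…,t_m}} ≅ (ℤ/2ℤ)^m`
and `l ≥ 2`. If `w = x v x⁻¹` for some `x ∈ W`, then `w = v`. -/
theorem eq_of_conj_of_parabolic_z2 {B : Type*} [Fintype B] {W : Type*} [Group W]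
    {M : CoxeterMatrix B} (cs : CoxeterSystem M W)
    (h0 : ∀ i j : B, orderOf (cs.simple i * cs.simple j) ≠ 0 →
      Even (orderOf (cs.simple i * cs.simple j)) → orderOf (cs.simple i * cs.simple j) = 2)
    (h1 : ∀ i j : B, i ≠ j → Odd (orderOf (cs.simple i * cs.simple j)) →
      cs.IsMaxSpherical {i, j})
    (w v x : W) (ω ν : List B)
    (hw : w = cs.wordProd ω) (hv : v = cs.wordProd ν)
    (hwred : cs.length w = ω.length) (hvred : cs.length v = ν.length)
    (hWω : Nonempty ((cs.parabolic {b | b ∈ ω}) ≃* Multiplicative (Fin ω.length → ZMod 2)))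
    (hWν : Nonempty ((cs.parabolic {b | b ∈ ν}) ≃* Multiplicative (Fin ν.length → ZMod 2)))
    (hl : 2 ≤ ω.length)
    (hconj : w = x * v * x⁻¹) :
    w = v := by
  subst hw hv
  have isMulCommutative {H : Subgroup W} {n : ℕ}
      (e : Nonempty (H ≃* Multiplicative (Fin n → ZMod 2))) : IsMulCommutative H :=
    e.elim fun e ↦ ⟨⟨fun a b ↦ e.injective (by simp [mul_comm])⟩⟩
  have := isMulCommutative hWω
  have := isMulCommutative hWν
  exact eq_of_conj_of_parabolic_z2_general cs h0 h1 x ω ν hwred hl hconj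
end

section
/- Let (W,S) be a Coxeter system satisfying: (0) for all s,t ∈ S with m(s,t) even, m(s,t) = 2; (1) for all s ≠ t ∈ S with m(s,t) odd, {s,t} is a maximal spherical subset of S; (2) there is no three-element subset {s,t,u} ⊆ S such that m(s,t) and m(t,u) are both odd; (3) for all s ≠ t ∈ S with m(s,t) odd, the number of maximal spherical subsets of S intersecting {s,t} is at most two. Let x ∈ W and let T, U ⊆ S be subsets such that W_T ≅ (ℤ/2ℤ)^{|T|}, W_U ≅ (ℤ/2ℤ)^{|U|}, |T| ≥ 2 and |U| ≥ 2. Then W_T ∩ x W_U x^{-1} ⊆ W_{T ∩ U}. -/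
section Group

open scoped Function

variable {ι G A : Type*} [Group G] {f : ι → G} {T : Set ι}

theorem exists_nodup_prod_eq_of_mem_closure (hcomm : T.Pairwise (Commute on f))
    (hinv : ∀ i ∈ T, f i * f i = 1) {y : G} (hy : y ∈ Subgroup.closure (f '' T)) :
    ∃ l : List ι, l.Nodup ∧ (∀ i ∈ l, i ∈ T) ∧ (l.map f).prod = y := by
  classical
  have mul_left : ∀ i ∈ T, ∀ y, (∃ l : List ι, l.Nodup ∧ (∀ j ∈ l, j ∈ T) ∧ (l.map f).prod = y) →
      ∃ l : List ι, l.Nodup ∧ (∀ j ∈ l, j ∈ T) ∧ (l.map f).prod = f i * y := by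
    rintro i hi _ ⟨l, hnodup, hl, rfl⟩
    by_cases hil : i ∈ l
    · have hpairwise : (l.map f).Pairwise Commute :=
        List.pairwise_map.2 <| hnodup.imp_of_mem fun ha hb hab ↦ hcomm (hl _ ha) (hl _ hb) hab
      have hprod : (l.map f).prod = f i * ((l.erase i).map f).prod :=
        ((List.perm_cons_erase hil).map f).prod_eq' hpairwise
      refine ⟨l.erase i, hnodup.erase i, fun j hj ↦ hl j (List.mem_of_mem_erase hj), ?_⟩
      rw [hprod, ← mul_assoc, hinv i hi, one_mul]
    · exact ⟨i :: l, hnodup.cons hil, List.forall_mem_cons.2 ⟨hi, hl⟩, List.prod_cons⟩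
  induction hy using Subgroup.closure_induction_left with
  | one => exact ⟨[], List.nodup_nil, by simp, rfl⟩
  | mul_left _ hx y _ ih =>
    obtain ⟨i, hi, rfl⟩ := hx
    exact mul_left i hi y ih
  | inv_mul_cancel _ hx y _ ih =>
    obtain ⟨i, hi, rfl⟩ := hx
    rw [inv_eq_of_mul_eq_one_left (hinv i hi)]
    exact mul_left i hi y ih

/-- In a product of distinct generators `χ i` only sees the factor `f i`, so it detects whether that
factor occurs. -/
theorem mem_closure_image_map_ne_one [Monoid A] (hcomm : T.Pairwise (Commute on f))
    (hinv : ∀ i ∈ T, f i * f i = 1) (χ : ι → G →* A) (hself : ∀ i ∈ T, χ i (f i) ≠ 1)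
    (hother : ∀ i ∈ T, ∀ j ∈ T, j ≠ i → χ i (f j) = 1) {y : G}
    (hy : y ∈ Subgroup.closure (f '' T)) :
    y ∈ Subgroup.closure (f '' {i ∈ T | χ i y ≠ 1}) := by
  classical
  obtain ⟨l, hnodup, hl, rfl⟩ := exists_nodup_prod_eq_of_mem_closure hcomm hinv hy
  refine Subgroup.list_prod_mem _ <| List.forall_mem_map.2 fun i hi ↦
    Subgroup.subset_closure ⟨i, ⟨hl i hi, ?_⟩, rfl⟩
  have heval : χ i (l.map f).prod = χ i (f i) := by
    rw [map_list_prod, List.map_map,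
      List.prod_map_eq_pow_single i (χ i ∘ f) fun j hji hj ↦ hother i (hl i hi) j (hl j hj) hji,
      List.count_eq_one_of_mem hnodup hi, pow_one, Function.comp_apply]
  exact heval ▸ hself i (hl i hi)

/-- In additive terms, `|ι|` vectors that span `𝔽_p ^ ι` are linearly independent. -/
theorem injective_of_closure_range_eq_top_of_mulEquiv [Finite ι] {p : ℕ} [Fact p.Prime]
    (hf : Subgroup.closure (Set.range f) = ⊤) (e : G ≃* Multiplicative (ι → ZMod p)) :
    Function.Injective f := by
  cases nonempty_fintype ι
  let v : ι → ι → ZMod p := fun i ↦ (e (f i)).toAdd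
  let V : Submodule (ZMod p) (ι → ZMod p) := Submodule.span (ZMod p) (Set.range v)
  have hclosure : Subgroup.closure (Set.range f) ≤
      V.toAddSubgroup.toSubgroup.comap e.toMonoidHom := by
    rw [Subgroup.closure_le]
    rintro _ ⟨i, rfl⟩
    exact Submodule.subset_span ⟨i, rfl⟩
  have hspan : ⊤ ≤ V := fun w _ ↦ by
    have hw : e.symm (Multiplicative.ofAdd w) ∈
      V.toAddSubgroup.toSubgroup.comap e.toMonoidHom := hclosure (hf ▸ Subgroup.mem_top _)
    simpa using hw
  have hv : LinearIndependent (ZMod p) v :=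
    linearIndependent_of_top_le_span_of_card_eq_finrank hspan
      (Module.finrank_fintype_fun_eq_card _).symm
  exact fun i j hij ↦ hv.injective (congrArg (fun g ↦ (e g).toAdd) hij)

end Group

section CoxeterSystem

variable {B W : Type*} [Group W] {M : CoxeterMatrix B} (cs : CoxeterSystem M W)

section SignCharacter

open scoped Function

open Classical in
/-- The character `W → {±1}` with value `-1` on the simple reflections indexed by `C` and `1` on the
others, for `C` a union of classes of the equivalence relation generated by "`M i j` is odd". -/
noncomputable def signCharacter (C : Set B) (hC : ∀ i j, Odd (M i j) → (i ∈ C ↔ j ∈ C)) :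
    W →* ℤˣ :=
  cs.lift ⟨fun i ↦ if i ∈ C then -1 else 1, fun i j ↦ by
    rcases Nat.even_or_odd (M i j) with ⟨n, hn⟩ | hodd
    · rw [hn, ← two_mul, pow_mul, Int.units_sq, one_pow]
    · simp only [hC i j hodd, Int.units_mul_self, one_pow]⟩

variable {C U : Set B} (hC : ∀ i j, Odd (M i j) → (i ∈ C ↔ j ∈ C))

open Classical in
theorem signCharacter_simple (i : B) :
    signCharacter cs C hC (cs.simple i) = if i ∈ C then -1 else 1 :=
  cs.lift_apply_simple _ i

theorem conj_parabolic_le_ker_signCharacter (hCU : Disjoint C U) (x : W) :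
    conjSubgroup x (cs.parabolic U) ≤ (signCharacter cs C hC).ker := by
  rw [conjSubgroup, Subgroup.map_le_iff_le_comap, CoxeterSystem.parabolic, Subgroup.closure_le]
  rintro _ ⟨j, hj, rfl⟩
  simp [MonoidHom.mem_ker, signCharacter_simple, hCU.notMem_of_mem_right hj]

theorem parabolic_inf_conj_le_of_pairwise_commute {r : B → B → Prop} (hr : Equivalence r)
    (hodd : ∀ i j, Odd (M i j) → r i j) {T : Set B}
    (hcomm : T.Pairwise (Commute on cs.simple)) (hT : T.Pairwise fun i j ↦ ¬ r i j)
    (U : Set B) (x : W) :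
    cs.parabolic T ⊓ conjSubgroup x (cs.parabolic U) ≤
      cs.parabolic {i ∈ T | ∃ j ∈ U, r i j} := by
  rintro y ⟨hyT, hyU⟩
  have hclass (i : B) : ∀ j k, Odd (M j k) → (j ∈ {j | r i j} ↔ k ∈ {j | r i j}) :=
    fun j k hjk ↦ ⟨fun h ↦ hr.trans h (hodd j k hjk), fun h ↦ hr.trans h (hr.symm (hodd j k hjk))⟩
  have hy := mem_closure_image_map_ne_one hcomm (fun i _ ↦ cs.simple_mul_simple_self i)
    (fun i ↦ signCharacter cs {j | r i j} (hclass i))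
    (fun i _ ↦ by simp [signCharacter_simple, hr.refl i])
    (fun i hi j hj hji ↦ by simp [signCharacter_simple, hT hi hj hji.symm]) hyT
  refine Subgroup.closure_mono (Set.image_mono ?_) hy
  rintro i ⟨hi, hχ⟩
  refine ⟨hi, ?_⟩
  by_contra! hU
  exact hχ <| conj_parabolic_le_ker_signCharacter cs (hclass i)
    (Set.disjoint_right.2 hU) x hyU

end SignCharacter

section OddRel

/-- Odd equivalence of indices: `s_i s_j` has odd order in `W`. Infinite order is encoded as `0`, so
it does not count as odd. -/
def OddRel (i j : B) : Prop := Odd (orderOf (cs.simple i * cs.simple j))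

theorem oddRel_of_odd {i j : B} (h : Odd (M i j)) : OddRel cs i j :=
  h.of_dvd_nat (orderOf_dvd_of_pow_eq_one (cs.simple_mul_simple_pow i j))

theorem OddRel.refl (i : B) : OddRel cs i i := by simp [OddRel]

variable {cs} in
theorem OddRel.symm {i j : B} (h : OddRel cs i j) : OddRel cs j i := by
  rwa [OddRel, ← orderOf_inv, mul_inv_rev, cs.inv_simple, cs.inv_simple]

theorem OddRel.equivalence_of_not_exists_triple
    (htriple : ¬ ∃ i j k, i ≠ j ∧ j ≠ k ∧ i ≠ k ∧ OddRel cs i j ∧ OddRel cs j k) :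
    Equivalence (OddRel cs) where
  refl := OddRel.refl cs
  symm := OddRel.symm
  trans {i j k} hij hjk := by
    rcases eq_or_ne i j with rfl | hij_ne
    · exact hjk
    rcases eq_or_ne j k with rfl | hjk_ne
    · exact hij
    rcases eq_or_ne i k with rfl | hik_ne
    · exact OddRel.refl cs i
    exact (htriple ⟨i, j, k, hij_ne, hjk_ne, hik_ne, hij, hjk⟩).elim

end OddRel

/-- The parabolic subgroup `W_T` is elementary abelian of rank `|T|`: `W_T ≅ (ℤ/2ℤ)^{|T|}`, with the
power encoded as the full function space. -/
def IsElementaryParabolic (T : Set B) : Prop :=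
  Nonempty (cs.parabolic T ≃* Multiplicative (T → ZMod 2))

namespace IsElementaryParabolic

variable {cs} {T : Set B}

theorem commute (hT : IsElementaryParabolic cs T) {i j : B} (hi : i ∈ T) (hj : j ∈ T) :
    Commute (cs.simple i) (cs.simple j) := by
  obtain ⟨e⟩ := hT
  have hcomm (a b : cs.parabolic T) : a * b = b * a :=
    e.injective (by rw [map_mul, map_mul, mul_comm])
  exact congrArg Subtype.val (hcomm ⟨_, Subgroup.subset_closure ⟨i, hi, rfl⟩⟩
    ⟨_, Subgroup.subset_closure ⟨j, hj, rfl⟩⟩)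

variable [Finite T]

theorem isSpherical (hT : IsElementaryParabolic cs T) : cs.IsSpherical T := by
  obtain ⟨e⟩ := hT
  have : Finite (Multiplicative (T → ZMod 2)) := inferInstanceAs (Finite (T → ZMod 2))
  exact Finite.of_equiv _ e.symm.toEquiv

theorem injOn_simple (hT : IsElementaryParabolic cs T) : Set.InjOn cs.simple T := by
  obtain ⟨e⟩ := hT
  let f : T → cs.parabolic T := fun i ↦ ⟨cs.simple i, Subgroup.subset_closure ⟨i, i.2, rfl⟩⟩
  have hf : Subgroup.closure (Set.range f) = ⊤ := by
    have hrange : Set.range f = Subtype.val ⁻¹' (cs.simple '' T) := by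
      ext ⟨w, hw⟩
      simp [f, Subtype.ext_iff]
    rw [hrange]
    exact Subgroup.closure_closure_coe_preimage
  intro i hi j hj hij
  exact congrArg Subtype.val <| injective_of_closure_range_eq_top_of_mulEquiv hf e
    (a₁ := ⟨i, hi⟩) (a₂ := ⟨j, hj⟩) (Subtype.ext hij)

theorem pairwise_not_oddRel (hT : IsElementaryParabolic cs T) :
    T.Pairwise fun i j ↦ ¬ OddRel cs i j := by
  intro i hi j hj hne hij
  have hsq : (cs.simple i * cs.simple j) ^ 2 = 1 := by
    rw [(hT.commute hi hj).mul_pow, cs.simple_sq, cs.simple_sq, one_mul]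
  have hone : cs.simple i * cs.simple j = 1 :=
    orderOf_eq_one_iff.1 <| hij.coprime_two_right.eq_one_of_dvd (orderOf_dvd_of_pow_eq_one hsq)
  refine hne (hT.injOn_simple hi hj ?_)
  rw [mul_eq_one_iff_eq_inv.1 hone, cs.inv_simple]

theorem not_subset_pair (hT : IsElementaryParabolic cs T) (hnontriv : T.Nontrivial) {i j : B}
    (hi : i ∈ T) (hne : i ≠ j) (hij : OddRel cs i j) : ¬ T ⊆ {i, j} := by
  intro hsub
  obtain ⟨k, hk, hki⟩ := hnontriv.exists_ne i
  obtain rfl : k = j := (hsub hk).resolve_left hki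
  exact hT.pairwise_not_oddRel hi hk hne hij

end IsElementaryParabolic

section IsMaxSpherical

variable {cs} [Finite B] {T U : Set B}

theorem exists_isMaxSpherical_superset (hT : cs.IsSpherical T) :
    ∃ T', T ⊆ T' ∧ cs.IsMaxSpherical T' := by
  obtain ⟨T', hle, hmax⟩ := (Set.toFinite {V | cs.IsSpherical V}).exists_le_maximal hT
  exact ⟨T', hle, hmax.1, fun V hV h ↦ (hmax.2 hV h).antisymm h⟩

theorem subset_pair_or_subset_pair_of_ncard_isMaxSpherical_le_two {i j : B}
    (hmax : cs.IsMaxSpherical {i, j})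
    (hcount : {V | cs.IsMaxSpherical V ∧ (V ∩ {i, j}).Nonempty}.ncard ≤ 2)
    (hT : cs.IsSpherical T) (hU : cs.IsSpherical U) (hi : i ∈ T) (hj : j ∈ U) :
    T ⊆ {i, j} ∨ U ⊆ {i, j} := by
  by_contra! ⟨hTij, hUij⟩
  obtain ⟨T', hTT', hT'⟩ := exists_isMaxSpherical_superset hT
  obtain ⟨U', hUU', hU'⟩ := exists_isMaxSpherical_superset hU
  have hT'ne : T' ≠ {i, j} := by rintro rfl; exact hTij hTT'
  have hU'ne : U' ≠ {i, j} := by rintro rfl; exact hUij hUU'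
  have hne : T' ≠ U' := by
    rintro rfl
    exact hT'ne (hmax.2 T' hT'.1 (Set.pair_subset (hTT' hi) (hUU' hj)))
  refine hcount.not_gt <| (Set.two_lt_ncard_iff (Set.toFinite _)).2
    ⟨T', U', {i, j}, ⟨hT', i, hTT' hi, ?_⟩, ⟨hU', j, hUU' hj, ?_⟩, ⟨hmax, i, ?_⟩,
      hne, hT'ne, hU'ne⟩ <;> simp

end IsMaxSpherical

theorem inf_conj_le_parabolic_inter_general [Finite B]
    (h1 : ∀ i j, i ≠ j → OddRel cs i j → cs.IsMaxSpherical {i, j})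
    (h2 : ¬ ∃ i j k, i ≠ j ∧ j ≠ k ∧ i ≠ k ∧ OddRel cs i j ∧ OddRel cs j k)
    (h3 : ∀ i j, i ≠ j → OddRel cs i j →
      {V | cs.IsMaxSpherical V ∧ (V ∩ {i, j}).Nonempty}.ncard ≤ 2)
    (x : W) {T U : Set B} (hT : IsElementaryParabolic cs T) (hU : IsElementaryParabolic cs U)
    (hTcard : 2 ≤ T.ncard) (hUcard : 2 ≤ U.ncard) :
    cs.parabolic T ⊓ conjSubgroup x (cs.parabolic U) ≤ cs.parabolic (T ∩ U) := by
  have eq_of_oddRel : ∀ i ∈ T, ∀ j ∈ U, OddRel cs i j → i = j := by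
    intro i hi j hj hij
    by_contra hne
    rcases subset_pair_or_subset_pair_of_ncard_isMaxSpherical_le_two (h1 i j hne hij)
      (h3 i j hne hij) hT.isSpherical hU.isSpherical hi hj with hsub | hsub
    · exact hT.not_subset_pair (Set.one_lt_ncard_iff_nontrivial.1 hTcard) hi hne hij hsub
    · exact hU.not_subset_pair (Set.one_lt_ncard_iff_nontrivial.1 hUcard) hj (Ne.symm hne) hij.symm
        (Set.pair_comm i j ▸ hsub)
  have hsubset : {i ∈ T | ∃ j ∈ U, OddRel cs i j} ⊆ T ∩ U := by
    rintro i ⟨hi, j, hj, hij⟩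
    exact ⟨hi, eq_of_oddRel i hi j hj hij ▸ hj⟩
  calc cs.parabolic T ⊓ conjSubgroup x (cs.parabolic U)
      ≤ cs.parabolic {i ∈ T | ∃ j ∈ U, OddRel cs i j} :=
        parabolic_inf_conj_le_of_pairwise_commute cs
          (OddRel.equivalence_of_not_exists_triple cs h2) (fun _ _ ↦ oddRel_of_odd cs)
          (fun _ hi _ hj _ ↦ hT.commute hi hj) hT.pairwise_not_oddRel U x
    _ ≤ cs.parabolic (T ∩ U) := Subgroup.closure_mono (Set.image_mono hsubset)

end CoxeterSystem

/-- Let `(W,S)` satisfy conditions (0)–(3), let `x ∈ W` and let `T, U ⊆ S` with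
`W_T ≅ (ℤ/2ℤ)^{|T|}`, `W_U ≅ (ℤ/2ℤ)^{|U|}`, `|T| ≥ 2` and `|U| ≥ 2`. Then
`W_T ∩ x W_U x⁻¹ ⊆ W_{T ∩ U}`. -/
theorem inf_conj_le_parabolic_inter {B : Type*} [Fintype B] {W : Type*} [Group W]
    {M : CoxeterMatrix B} (cs : CoxeterSystem M W)
    (h0 : ∀ i j : B, orderOf (cs.simple i * cs.simple j) ≠ 0 →
      Even (orderOf (cs.simple i * cs.simple j)) → orderOf (cs.simple i * cs.simple j) = 2)
    (h1 : ∀ i j : B, i ≠ j → Odd (orderOf (cs.simple i * cs.simple j)) →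
      cs.IsMaxSpherical {i, j})
    (h2 : ¬ ∃ i j k : B, i ≠ j ∧ j ≠ k ∧ i ≠ k ∧
      Odd (orderOf (cs.simple i * cs.simple j)) ∧ Odd (orderOf (cs.simple j * cs.simple k)))
    (h3 : ∀ i j : B, i ≠ j → Odd (orderOf (cs.simple i * cs.simple j)) →
      {T : Set B | cs.IsMaxSpherical T ∧ (T ∩ {i, j}).Nonempty}.ncard ≤ 2)
    (x : W) (T U : Set B)
    (hT : Nonempty ((cs.parabolic T) ≃* Multiplicative (T → ZMod 2)))
    (hU : Nonempty ((cs.parabolic U) ≃* Multiplicative (U → ZMod 2)))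
    (hTcard : 2 ≤ T.ncard) (hUcard : 2 ≤ U.ncard) :
    cs.parabolic T ⊓ conjSubgroup x (cs.parabolic U) ≤ cs.parabolic (T ∩ U) := by
  exact inf_conj_le_parabolic_inter_general cs h1 h2 h3 x hT hU hTcard hUcard
end
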